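/- arXiv:math/0602099 — 12 statements merged into one kernel-verified Lean document; each statement's English description precedes it below -/
import Mathlib

section
/- Let T > 0 and let (x₁, x₂) : ℝ → ℝ² be a T-periodic C¹ solution of the Hamiltonian system ẋ₁ = −2x₂, ẋ₂ = 3(1 − x₁²). Let a, κ ∈ ℂ and let g : ℝ → ℂ be a T-periodic C¹ solution of g'(t) = a·g(t) + (1 − x₁(t)). Then ∫₀^T Re(conj(κ)·g(t))·x₁'(t) dt = Re[ conj(κ)·( a·∫₀^T g(t)(1 − x₁(t)) dt + 2·∫₀^T (1 − x₁(t)) dt ) ]. -/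
/-!
Integration by parts reduces the claim to `∫ (1 - x₁)² = 2 ∫ (1 - x₁)` over a period, which holds
because `(1 - x₁)² - 2 (1 - x₁) = x₁² - 1 = -x₂' / 3`. Both steps are combined in the single
periodic primitive `F = g (1 - x₁) + x₂ / 3`, whose derivative is
`a g (1 - x₁) + 2 (1 - x₁) - g x₁'`; integrating it over a period gives the complex identity, and
the claim is the real part of its product with `conj κ`.
-/

open intervalIntegral

/-- For a `T`-periodic `C¹` solution `(x₁, x₂)` of the Hamiltonian system
`ẋ₁ = −2x₂`, `ẋ₂ = 3(1 − x₁²)` and a `T`-periodic `C¹` solution `g` of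
`g' = a·g + (1 − x₁)`, one has
`∫₀^T Re(κ̄·g)·x₁' dt = Re[κ̄·(a·∫₀^T g(1 − x₁) dt + 2·∫₀^T (1 − x₁) dt)]`. -/
theorem stmt_1 (T : ℝ) (hT : 0 < T) (x₁ x₂ : ℝ → ℝ)
    (hper₁ : ∀ t, x₁ (t + T) = x₁ t) (hper₂ : ∀ t, x₂ (t + T) = x₂ t)
    (hx₁ : ∀ t, HasDerivAt x₁ (-2 * x₂ t) t)
    (hx₂ : ∀ t, HasDerivAt x₂ (3 * (1 - (x₁ t) ^ 2)) t)
    (a κ : ℂ) (g : ℝ → ℂ) (hgper : ∀ t, g (t + T) = g t)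
    (hg : ∀ t, HasDerivAt g (a * g t + (1 - (x₁ t : ℂ))) t) :
    ∫ t in (0:ℝ)..T, ((starRingEnd ℂ) κ * g t).re * (-2 * x₂ t) =
      ((starRingEnd ℂ) κ *
        (a * (∫ t in (0:ℝ)..T, g t * (1 - (x₁ t : ℂ)))
          + 2 * ((∫ t in (0:ℝ)..T, (1 - x₁ t) : ℝ) : ℂ))).re := by
  have hc₁ : Continuous x₁ := continuous_iff_continuousAt.2 fun t => (hx₁ t).continuousAt
  have hc₂ : Continuous x₂ := continuous_iff_continuousAt.2 fun t => (hx₂ t).continuousAt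
  have hcg : Continuous g := continuous_iff_continuousAt.2 fun t => (hg t).continuousAt
  have hF : ∀ t, HasDerivAt (fun t => g t * (1 - (x₁ t : ℂ)) + (x₂ t : ℂ) / 3)
      (a * (g t * (1 - (x₁ t : ℂ))) + 2 * ((1 - x₁ t : ℝ) : ℂ)
        - g t * ((-2 * x₂ t : ℝ) : ℂ)) t := by
    intro t
    refine (((hg t).mul ((hx₁ t).ofReal_comp.const_sub 1)).add
      ((hx₂ t).ofReal_comp.div_const 3)).congr_deriv ?_
    push_cast
    ring
  have hzero := integral_eq_sub_of_hasDerivAt (a := 0) (b := T) (fun t _ => hF t)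
    (Continuous.intervalIntegrable (by fun_prop) _ _)
  have e₁ : x₁ T = x₁ 0 := by simpa using hper₁ 0
  have e₂ : x₂ T = x₂ 0 := by simpa using hper₂ 0
  have e₃ : g T = g 0 := by simpa using hgper 0
  rw [e₁, e₂, e₃, sub_self,
    integral_sub (Continuous.intervalIntegrable (by fun_prop) _ _)
      (Continuous.intervalIntegrable (by fun_prop) _ _),
    integral_add (Continuous.intervalIntegrable (by fun_prop) _ _)
      (Continuous.intervalIntegrable (by fun_prop) _ _),
    integral_const_mul, integral_const_mul, intervalIntegral.integral_ofReal, sub_eq_zero] at hzero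
  rw [hzero, ← integral_const_mul]
  have hre := Complex.reCLM.intervalIntegral_comp_comm
    (f := fun t => (starRingEnd ℂ) κ * (g t * ((-2 * x₂ t : ℝ) : ℂ)))
    (Continuous.intervalIntegrable (by fun_prop) 0 T :
      IntervalIntegrable _ MeasureTheory.volume 0 T)
  simp only [Complex.reCLM_apply] at hre
  rw [← hre]
  refine integral_congr fun t _ => ?_
  simp only [← mul_assoc ((starRingEnd ℂ) κ), Complex.re_mul_ofReal]
end

section
/- For every h ∈ (0, 4), both improper integrals ∫_{r₁(h)}^{r₂(h)} dx/√(P(x) − h) and ∫_{r₃(h)}^{∞} dx/√(P(x) − h) converge and are equal: ∫_{r₁(h)}^{r₂(h)} dx/√(x³ − 3x + 2 − h) = ∫_{r₃(h)}^{∞} dx/√(x³ − 3x + 2 − h). -/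
/-!
Write `a < b < c` for the roots, so the cubic is `(x - a)(x - b)(x - c)`. Translation by the
2-torsion point `(a, 0)` of the elliptic curve induces on the `x`-line the Möbius involution
`φ x = a + (b - a)(c - a) / (x - a)`, which exchanges `a ↔ ∞` and `b ↔ c`. It maps `(a, b)` onto
`(c, ∞)` and preserves `dx / √((x - a)(x - b)(x - c))` up to sign, so the change of variables
formula transfers both integrability and the value of the integral (`mobius_jacobian`).
Integrability on `(a, b)` follows by comparison with `1 / √((x - a)(b - x))`, which is the
derivative of `arcsin ((2 x - a - b) / (b - a))`.
-/

open MeasureTheory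

/-- The Möbius involution exchanging `a ↔ ∞` and `b ↔ c`. -/
noncomputable def mobius (a b c x : ℝ) : ℝ := a + (b - a) * (c - a) / (x - a)

lemma mobius_hasDerivAt (a b c x : ℝ) (hx : a < x) :
    HasDerivAt (mobius a b c) (-((b - a) * (c - a)) / (x - a) ^ 2) x := by
  have h0 : x - a ≠ 0 := by linarith
  have h1 : HasDerivAt (fun y : ℝ => y - a) 1 x := (hasDerivAt_id x).sub_const a
  have h2 := ((hasDerivAt_const x ((b - a) * (c - a))).div h1 h0).const_add a
  refine HasDerivAt.congr_deriv (f := mobius a b c) h2 ?_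
  ring

lemma mobius_injOn (a b c : ℝ) (hab : a < b) (hbc : b < c) :
    Set.InjOn (mobius a b c) (Set.Ioo a b) := by
  intro x hx y hy hxy
  have hk : (b - a) * (c - a) ≠ 0 :=
    (mul_pos (by linarith) (by linarith)).ne'
  have h1 : x - a ≠ 0 := by linarith [hx.1]
  have h2 : y - a ≠ 0 := by linarith [hy.1]
  have h3 : (b - a) * (c - a) / (x - a) = (b - a) * (c - a) / (y - a) := by
    simpa [mobius] using hxy
  rw [div_eq_div_iff h1 h2] at h3
  linarith [mul_left_cancel₀ hk h3]

lemma mobius_image (a b c : ℝ) (hab : a < b) (hbc : b < c) :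
    mobius a b c '' Set.Ioo a b = Set.Ioi c := by
  have hba : 0 < b - a := by linarith
  have hca : 0 < c - a := by linarith
  ext y
  constructor
  · rintro ⟨x, hx, rfl⟩
    have hxa : 0 < x - a := by linarith [hx.1]
    have : c - a < (b - a) * (c - a) / (x - a) := by
      rw [lt_div_iff₀ hxa]
      nlinarith [hx.2]
    simp only [Set.mem_Ioi, mobius]
    linarith
  · intro hy
    have hy' : c < y := hy
    have hya : 0 < y - a := by linarith
    -- the preimage is `mobius a b c y`, since the map is an involution
    refine ⟨mobius a b c y, ⟨?_, ?_⟩, ?_⟩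
    · have : 0 < (b - a) * (c - a) / (y - a) := by positivity
      simp only [mobius]
      linarith
    · have : (b - a) * (c - a) / (y - a) < b - a := by
        rw [div_lt_iff₀ hya]
        nlinarith
      simp only [mobius]
      linarith
    · simp only [mobius, add_sub_cancel_left]
      field_simp
      ring

/-- The differential `dx / √((x - a)(x - b)(x - c))` is invariant, up to sign, under `mobius`. -/
lemma mobius_jacobian (a b c x : ℝ) (hab : a < b) (hbc : b < c) (hx : x ∈ Set.Ioo a b) :
    |-((b - a) * (c - a)) / (x - a) ^ 2| *
      (Real.sqrt ((mobius a b c x - a) * (mobius a b c x - b) * (mobius a b c x - c)))⁻¹ =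
    (Real.sqrt ((x - a) * (x - b) * (x - c)))⁻¹ := by
  have hxa : 0 < x - a := by linarith [hx.1]
  have hba : 0 < b - a := by linarith
  have hca : 0 < c - a := by linarith
  have hJ : 0 < (b - a) * (c - a) / (x - a) ^ 2 := by positivity
  have key : (mobius a b c x - a) * (mobius a b c x - b) * (mobius a b c x - c) =
      ((b - a) * (c - a) / (x - a) ^ 2) ^ 2 * ((x - a) * (x - b) * (x - c)) := by
    simp only [mobius]
    field_simp
    ring
  rw [key, Real.sqrt_mul (sq_nonneg _), Real.sqrt_sq hJ.le, neg_div, abs_neg, abs_of_pos hJ,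
    mul_inv, ← mul_assoc, mul_inv_cancel₀ hJ.ne', one_mul]

lemma integrableOn_inv_sqrt_quadratic (a b : ℝ) (hab : a < b) :
    IntegrableOn (fun x => (Real.sqrt ((x - a) * (b - x)))⁻¹) (Set.Ioo a b) := by
  have hba : 0 < b - a := by linarith
  have := intervalIntegral.integrableOn_deriv_of_nonneg (a := a) (b := b)
    (g := fun x => Real.arcsin ((2 * x - a - b) / (b - a)))
    (g' := fun x => (Real.sqrt ((x - a) * (b - x)))⁻¹) ?_ ?_ ?_
  · exact this.mono_set Set.Ioo_subset_Ioc_self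
  · exact (Real.continuous_arcsin.comp (by fun_prop)).continuousOn
  · intro x hx
    have hxa : 0 < x - a := by linarith [hx.1]
    have hbx : 0 < b - x := by linarith [hx.2]
    have h1 : (2 * x - a - b) / (b - a) ≠ -1 := by
      rw [ne_eq, div_eq_iff hba.ne']
      intro h
      linarith
    have h2 : (2 * x - a - b) / (b - a) ≠ 1 := by
      rw [ne_eq, div_eq_iff hba.ne']
      intro h
      linarith
    have hl : HasDerivAt (fun x : ℝ => (2 * x - a - b) / (b - a)) (2 / (b - a)) x := by
      have := (((((hasDerivAt_id x).const_mul 2).sub_const a).sub_const b).div_const (b - a))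
      simpa using this
    refine ((Real.hasDerivAt_arcsin h1 h2).comp x hl).congr_deriv ?_
    have key : 1 - ((2 * x - a - b) / (b - a)) ^ 2 =
        (2 / (b - a)) ^ 2 * ((x - a) * (b - x)) := by
      field_simp
      ring
    have hc : 0 < 2 / (b - a) := by positivity
    have hs : 0 < Real.sqrt ((x - a) * (b - x)) := Real.sqrt_pos.2 (by positivity)
    rw [key, Real.sqrt_mul (sq_nonneg _), Real.sqrt_sq hc.le]
    field_simp
  · intro x _
    positivity

lemma integrableOn_inv_sqrt_cubic (a b c : ℝ) (hab : a < b) (hbc : b < c) :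
    IntegrableOn (fun x => (Real.sqrt ((x - a) * (x - b) * (x - c)))⁻¹) (Set.Ioo a b) := by
  refine Integrable.mono' ((integrableOn_inv_sqrt_quadratic a b hab).const_mul
    (Real.sqrt (c - b))⁻¹) (Measurable.aestronglyMeasurable (by fun_prop)) ?_
  refine (ae_restrict_iff' measurableSet_Ioo).2 (Filter.Eventually.of_forall fun x hx => ?_)
  have hxa : 0 < x - a := by linarith [hx.1]
  have hbx : 0 < b - x := by linarith [hx.2]
  have hcb : 0 < c - b := by linarith
  rw [Real.norm_of_nonneg (by positivity), ← mul_inv, ← Real.sqrt_mul hcb.le]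
  refine inv_anti₀ (Real.sqrt_pos.2 (by positivity)) (Real.sqrt_le_sqrt ?_)
  nlinarith [mul_pos (mul_pos hxa hbx) hbx]

/-- Vieta's formulas for the depressed cubic, as a factorization. -/
lemma cubic_factor (h a b c : ℝ) (hab : a < b) (hbc : b < c)
    (ha : a ^ 3 - 3 * a + 2 - h = 0) (hb : b ^ 3 - 3 * b + 2 - h = 0)
    (hc : c ^ 3 - 3 * c + 2 - h = 0) (x : ℝ) :
    x ^ 3 - 3 * x + 2 - h = (x - a) * (x - b) * (x - c) := by
  have e1 : a ^ 2 + a * b + b ^ 2 - 3 = 0 := by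
    apply mul_left_cancel₀ (sub_ne_zero.2 hab.ne)
    linear_combination ha - hb
  have e2 : b ^ 2 + b * c + c ^ 2 - 3 = 0 := by
    apply mul_left_cancel₀ (sub_ne_zero.2 hbc.ne)
    linear_combination hb - hc
  have e3 : a + b + c = 0 := by
    apply mul_left_cancel₀ (sub_ne_zero.2 (hab.trans hbc).ne)
    linear_combination e1 - e2
  obtain rfl : c = -a - b := by linarith
  linear_combination ha + (x - a) * e1

/-- For `h ∈ (0, 4)` and the three real roots `r₁ < r₂ < r₃` of
`x³ − 3x + 2 − h`, both improper integrals `∫_{r₁}^{r₂} dx/√(x³ − 3x + 2 − h)` and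
`∫_{r₃}^{∞} dx/√(x³ − 3x + 2 − h)` converge and are equal. -/
theorem stmt_4 (h : ℝ) (hh : h ∈ Set.Ioo (0:ℝ) 4) (r₁ r₂ r₃ : ℝ)
    (h12 : r₁ < r₂) (h23 : r₂ < r₃)
    (hroot₁ : r₁ ^ 3 - 3 * r₁ + 2 - h = 0)
    (hroot₂ : r₂ ^ 3 - 3 * r₂ + 2 - h = 0)
    (hroot₃ : r₃ ^ 3 - 3 * r₃ + 2 - h = 0) :
    IntegrableOn (fun x => (Real.sqrt (x ^ 3 - 3 * x + 2 - h))⁻¹) (Set.Ioo r₁ r₂) ∧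
    IntegrableOn (fun x => (Real.sqrt (x ^ 3 - 3 * x + 2 - h))⁻¹) (Set.Ioi r₃) ∧
    ∫ x in Set.Ioo r₁ r₂, (Real.sqrt (x ^ 3 - 3 * x + 2 - h))⁻¹ =
      ∫ x in Set.Ioi r₃, (Real.sqrt (x ^ 3 - 3 * x + 2 - h))⁻¹ := by
  simp only [cubic_factor h r₁ r₂ r₃ h12 h23 hroot₁ hroot₂ hroot₃]
  have hI := integrableOn_inv_sqrt_cubic r₁ r₂ r₃ h12 h23
  have hd : ∀ x ∈ Set.Ioo r₁ r₂, HasDerivWithinAt (mobius r₁ r₂ r₃)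
      (-((r₂ - r₁) * (r₃ - r₁)) / (x - r₁) ^ 2) (Set.Ioo r₁ r₂) x :=
    fun x hx => (mobius_hasDerivAt r₁ r₂ r₃ x hx.1).hasDerivWithinAt
  have hinj := mobius_injOn r₁ r₂ r₃ h12 h23
  refine ⟨hI, ?_, ?_⟩
  · rw [← mobius_image r₁ r₂ r₃ h12 h23,
      integrableOn_image_iff_integrableOn_abs_deriv_smul measurableSet_Ioo hd hinj]
    exact hI.congr_fun (fun x hx => (mobius_jacobian r₁ r₂ r₃ x h12 h23 hx).symm)
      measurableSet_Ioo
  · rw [← mobius_image r₁ r₂ r₃ h12 h23,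
      integral_image_eq_integral_abs_deriv_smul measurableSet_Ioo hd hinj]
    exact setIntegral_congr_fun measurableSet_Ioo
      (fun x hx => (mobius_jacobian r₁ r₂ r₃ x h12 h23 hx).symm)
end

section
/- For h ∈ (0, 4) define I₀(h) = ∫_{r₁(h)}^{r₂(h)} dx/√(P(x) − h) and I₁(h) = ∫_{r₁(h)}^{r₂(h)} x·dx/√(P(x) − h). Then I₀ and I₁ are differentiable on (0, 4) and satisfy the Picard–Fuchs system: 6h(h − 4)·I₀'(h) = −(h − 2)·I₀(h) − 2·I₁(h) and 6h(h − 4)·I₁'(h) = 2·I₀(h) + (h − 2)·I₁(h). -/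
open intervalIntegral

/-!
Writing `h = 2 + 2 cos 3t` with `t ∈ (0, π/3)`, the roots of `x³ - 3x + 2 - h` are the explicit
functions `rootA t < rootB t < rootC t`. The substitution `x = a + (b - a) sin² θ`, where `a, b, c`
are the three roots, removes the endpoint singularities:
`∫_a^b g(x) dx / √((x-a)(x-b)(x-c)) = ∫_0^{π/2} 2 g(x(θ)) / √(c - x(θ)) dθ` (`integral_subst`).
The right-hand side is an integral over a fixed interval whose integrand is smooth in `(t, θ)`, so
it can be differentiated under the integral sign (`hasDerivAt_integral_of_continuousOn`).

Since `6h(h-4) d/dh = 4 sin(3t) d/dt`, the Picard–Fuchs equations say that two explicit integrals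
over `θ` vanish. They do because the integrands are exact: they are the `θ`-derivatives of
`K · sin θ cos θ / √(c - x(θ))` with `K = -4(b - a)` for the first equation and `K = -4c(b - a)`
for the second (`alg_first`, `alg_second`), and this primitive vanishes at `0` and at `π/2`.
-/

namespace PicardFuchs

open Real Set MeasureTheory Filter Topology

/-! ### The roots in trigonometric form -/

/-- The smallest root `2 cos (t + 2π/3)` of `x³ - 3x = 2 cos 3t`, for `t ∈ (0, π/3)`. -/
noncomputable def rootA (t : ℝ) : ℝ := -cos t - √3 * sin t

/-- The middle root `2 cos (t - 2π/3)` of `x³ - 3x = 2 cos 3t`, for `t ∈ (0, π/3)`. -/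
noncomputable def rootB (t : ℝ) : ℝ := -cos t + √3 * sin t

/-- The largest root `2 cos t` of `x³ - 3x = 2 cos 3t`, for `t ∈ (0, π/3)`. -/
noncomputable def rootC (t : ℝ) : ℝ := 2 * cos t

/-- The derivative of `rootA`. -/
noncomputable def rootA' (t : ℝ) : ℝ := sin t - √3 * cos t

/-- The derivative of `rootB`. -/
noncomputable def rootB' (t : ℝ) : ℝ := sin t + √3 * cos t

/-- The derivative of `rootC`. -/
noncomputable def rootC' (t : ℝ) : ℝ := -2 * sin t

lemma hasDerivAt_rootA (t : ℝ) : HasDerivAt rootA (rootA' t) t := by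
  have := ((hasDerivAt_cos t).neg).sub ((hasDerivAt_sin t).const_mul (√3))
  refine this.congr_deriv ?_
  unfold rootA'
  ring

lemma hasDerivAt_rootB (t : ℝ) : HasDerivAt rootB (rootB' t) t := by
  have := ((hasDerivAt_cos t).neg).add ((hasDerivAt_sin t).const_mul (√3))
  refine this.congr_deriv ?_
  unfold rootB'
  ring

lemma hasDerivAt_rootC (t : ℝ) : HasDerivAt rootC (rootC' t) t := by
  have := (hasDerivAt_cos t).const_mul (2 : ℝ)
  refine this.congr_deriv ?_
  unfold rootC'
  ring

/-- Vieta's relations, and the derivatives of the roots: since `4 sin 3t · d/dt = 6h(h-4) d/dh` and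
`h(h-4) = (a²-1)(b²-1)(c²-1)`, the relation `3(r²-1) dr/dh = 1` becomes the last three formulas. -/
lemma root_relations (t : ℝ) :
    rootC t = -rootA t - rootB t ∧ rootA t ^ 2 + rootA t * rootB t + rootB t ^ 2 = 3 ∧
    2 * cos (3 * t) = rootA t * rootB t * rootC t ∧
    4 * sin (3 * t) * rootA' t = 2 * (rootB t ^ 2 - 1) * (rootC t ^ 2 - 1) ∧
    4 * sin (3 * t) * rootB' t = 2 * (rootA t ^ 2 - 1) * (rootC t ^ 2 - 1) ∧
    4 * sin (3 * t) * rootC' t = 2 * (rootA t ^ 2 - 1) * (rootB t ^ 2 - 1) := by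
  have h3 : √3 ^ 2 = (3 : ℝ) := sq_sqrt (by norm_num)
  have h1 := sin_sq_add_cos_sq t
  rw [sin_three_mul, cos_three_mul]
  unfold rootA rootB rootC rootA' rootB' rootC'
  generalize √3 = q at *
  generalize cos t = C at *
  generalize sin t = S at *
  refine ⟨?_, ?_, ?_, ?_, ?_, ?_⟩ <;> grind

lemma root_lt {t : ℝ} (ht : t ∈ Ioo 0 (π / 3)) : rootA t < rootB t ∧ rootB t < rootC t := by
  have hs : 0 < sin t := sin_pos_of_pos_of_lt_pi ht.1 (by linarith [ht.2, pi_pos])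
  have h2 : 0 < sin (π / 3 - t) :=
    sin_pos_of_pos_of_lt_pi (by linarith [ht.2]) (by linarith [ht.1, pi_pos])
  rw [sin_sub, sin_pi_div_three, cos_pi_div_three] at h2
  have h3 : √3 ^ 2 = (3 : ℝ) := sq_sqrt (by norm_num)
  have h3' : 0 < √(3 : ℝ) := by positivity
  unfold rootA rootB rootC
  constructor
  · have := mul_pos h3' hs
    linarith
  · have := mul_pos h3' h2
    nlinarith

/-! ### Substitution and differentiation under the integral sign -/

/-- The substitution `x = a + (b - a) sin² θ`. -/
lemma integral_subst {a b c : ℝ} (hab : a < b) (g : ℝ → ℝ) :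
    ∫ x in a..b, g x * (√((x - a) * (x - b) * (x - c)))⁻¹ =
      ∫ θ in (0 : ℝ)..(π / 2),
        g (a + (b - a) * sin θ ^ 2) * (2 * (√(c - (a + (b - a) * sin θ ^ 2)))⁻¹) := by
  have hpi := pi_pos
  set f : ℝ → ℝ := fun θ => a + (b - a) * sin θ ^ 2 with hf
  have hba : 0 < b - a := sub_pos.2 hab
  have hsin : ∀ θ ∈ Ioo 0 (π / 2), 0 < sin θ ∧ 0 < cos θ := fun θ hθ =>
    ⟨sin_pos_of_pos_of_lt_pi hθ.1 (by linarith [hθ.2]),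
      cos_pos_of_mem_Ioo ⟨by linarith [hθ.1], hθ.2⟩⟩
  have hmono : StrictMonoOn f (Icc 0 (π / 2)) := by
    intro x hx y hy hxy
    have h1 : sin x < sin y :=
      sin_lt_sin_of_lt_of_le_pi_div_two (by linarith [hx.1]) hy.2 hxy
    have h0 : 0 ≤ sin x := sin_nonneg_of_nonneg_of_le_pi hx.1 (by linarith [hx.2])
    have : sin x ^ 2 < sin y ^ 2 := by nlinarith
    simp only [hf]
    nlinarith
  have himg : f '' Ioo 0 (π / 2) = Ioo a b := by
    apply Subset.antisymm
    · rintro _ ⟨θ, hθ, rfl⟩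
      obtain ⟨h1, h2⟩ := hsin θ hθ
      have h3 := sin_sq_add_cos_sq θ
      have h4 : 0 < (b - a) * sin θ ^ 2 := by positivity
      have h5 : 0 < (b - a) * cos θ ^ 2 := by positivity
      have h6 : cos θ ^ 2 = 1 - sin θ ^ 2 := by linarith
      rw [h6] at h5
      simp only [hf]
      constructor <;> linarith
    · have hc : ContinuousOn f (Icc 0 (π / 2)) := by
        simp only [hf]; fun_prop
      have := intermediate_value_Ioo (by positivity : (0 : ℝ) ≤ π / 2) hc
      simpa [hf] using this
  have hderiv : ∀ θ ∈ Ioo 0 (π / 2),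
      HasDerivWithinAt f ((b - a) * (2 * sin θ * cos θ)) (Ioo 0 (π / 2)) θ := by
    intro θ _
    have := (((hasDerivAt_sin θ).pow 2).const_mul (b - a)).const_add a
    refine (this.congr_deriv ?_).hasDerivWithinAt
    simp
  have key := integral_image_eq_integral_abs_deriv_smul measurableSet_Ioo hderiv
    (hmono.injOn.mono Ioo_subset_Icc_self) (fun x => g x * (√((x - a) * (x - b) * (x - c)))⁻¹)
  rw [himg] at key
  rw [integral_of_le hab.le, integral_of_le (by positivity), integral_Ioc_eq_integral_Ioo,
    integral_Ioc_eq_integral_Ioo, key]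
  refine setIntegral_congr_fun measurableSet_Ioo fun θ hθ => ?_
  obtain ⟨h1, h2⟩ := hsin θ hθ
  have h3 := sin_sq_add_cos_sq θ
  have hprod : (f θ - a) * (f θ - b) * (f θ - c) =
      ((b - a) * (sin θ * cos θ)) ^ 2 * (c - f θ) := by
    have : cos θ ^ 2 = 1 - sin θ ^ 2 := by linarith
    have e1 : f θ - a = (b - a) * sin θ ^ 2 := by simp [hf]
    have e2 : f θ - b = -((b - a) * cos θ ^ 2) := by simp only [hf, this]; ring
    rw [e1, e2]; ring
  have hpos : 0 < (b - a) * (sin θ * cos θ) := by positivity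
  have habs : |(b - a) * (2 * sin θ * cos θ)| = 2 * ((b - a) * (sin θ * cos θ)) := by
    rw [abs_of_pos (by positivity)]; ring
  simp only [smul_eq_mul]
  rw [hprod, sqrt_mul (by positivity), sqrt_sq hpos.le, habs, mul_inv]
  change _ = g (f θ) * (2 * (√(c - f θ))⁻¹)
  field_simp

/-- Differentiation under the integral sign for a jointly continuous derivative. -/
lemma hasDerivAt_integral_of_continuousOn {F F' : ℝ → ℝ → ℝ} {U : Set ℝ} (hU : IsOpen U)
    {t₀ p q : ℝ} (ht₀ : t₀ ∈ U) (hpq : p ≤ q)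
    (hF : ∀ t ∈ U, Continuous (F t))
    (hF' : ContinuousOn (fun z : ℝ × ℝ => F' z.1 z.2) (U ×ˢ univ))
    (hd : ∀ t ∈ U, ∀ θ, HasDerivAt (fun t => F t θ) (F' t θ) t) :
    HasDerivAt (fun t => ∫ θ in p..q, F t θ) (∫ θ in p..q, F' t₀ θ) t₀ := by
  obtain ⟨ε, hε, hball⟩ := Metric.nhds_basis_closedBall.mem_iff.1 (hU.mem_nhds ht₀)
  have hcomp : IsCompact (Metric.closedBall t₀ ε ×ˢ Icc p q) :=
    (isCompact_closedBall t₀ ε).prod isCompact_Icc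
  obtain ⟨M, hM⟩ := hcomp.exists_bound_of_continuousOn
    (hF'.mono (prod_mono hball (subset_univ _)))
  have hF'c : Continuous (F' t₀) := by
    rw [← continuousOn_univ]
    exact hF'.comp (f := fun θ : ℝ => (t₀, θ)) (by fun_prop) fun θ _ => ⟨ht₀, mem_univ _⟩
  refine (hasDerivAt_integral_of_dominated_loc_of_deriv_le (bound := fun _ => M)
    (Metric.closedBall_mem_nhds t₀ hε) ?_ ((hF t₀ ht₀).intervalIntegrable _ _)
    hF'c.aestronglyMeasurable ?_ intervalIntegrable_const ?_).2
  · filter_upwards [hU.mem_nhds ht₀] with t ht using (hF t ht).aestronglyMeasurable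
  · refine Eventually.of_forall fun θ hθ t ht => hM (t, θ) ⟨ht, ?_⟩
    rw [uIoc_of_le hpq] at hθ
    exact Ioc_subset_Icc_self hθ
  · exact Eventually.of_forall fun θ _ t ht => hd t (hball ht) θ

/-! ### The regularized integrals -/

/-- The point `a + (b - a) sin² θ` of the interval between the two smaller roots. -/
noncomputable def X (t θ : ℝ) : ℝ := rootA t + (rootB t - rootA t) * sin θ ^ 2

/-- The `t`-derivative of `X`. -/
noncomputable def X' (t θ : ℝ) : ℝ := rootA' t + (rootB' t - rootA' t) * sin θ ^ 2

/-- The integrand of `I₀` after the substitution. -/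
noncomputable def F₀ (t θ : ℝ) : ℝ := 2 * (√(rootC t - X t θ))⁻¹

/-- The integrand of `I₁` after the substitution. -/
noncomputable def F₁ (t θ : ℝ) : ℝ := X t θ * F₀ t θ

/-- The `t`-derivative of `F₀`. -/
noncomputable def F₀' (t θ : ℝ) : ℝ :=
  -(rootC' t - X' t θ) * (√(rootC t - X t θ))⁻¹ ^ 3

/-- The `t`-derivative of `F₁`. -/
noncomputable def F₁' (t θ : ℝ) : ℝ := X' t θ * F₀ t θ + X t θ * F₀' t θ

lemma D_pos {t : ℝ} (ht : t ∈ Ioo 0 (π / 3)) (θ : ℝ) : 0 < rootC t - X t θ := by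
  obtain ⟨h1, h2⟩ := root_lt ht
  have := sin_sq_le_one θ
  unfold X
  nlinarith

lemma hasDerivAt_inv_sqrt {f : ℝ → ℝ} {f' x : ℝ} (hf : HasDerivAt f f' x) (hx : 0 < f x) :
    HasDerivAt (fun y => (√(f y))⁻¹) (-(f' / 2) * (√(f x))⁻¹ ^ 3) x := by
  have hs : 0 < √(f x) := sqrt_pos.2 hx
  refine ((hf.sqrt hx.ne').inv hs.ne').congr_deriv ?_
  field_simp

lemma hasDerivAt_X (t θ : ℝ) : HasDerivAt (fun t => X t θ) (X' t θ) t :=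
  (hasDerivAt_rootA t).add (((hasDerivAt_rootB t).sub (hasDerivAt_rootA t)).mul_const _)

lemma hasDerivAt_F₀ {t : ℝ} (ht : t ∈ Ioo 0 (π / 3)) (θ : ℝ) :
    HasDerivAt (fun t => F₀ t θ) (F₀' t θ) t := by
  have := (hasDerivAt_inv_sqrt ((hasDerivAt_rootC t).sub (hasDerivAt_X t θ))
    (D_pos ht θ)).const_mul (2 : ℝ)
  refine this.congr_deriv ?_
  simp only [F₀', Pi.sub_apply]
  ring

lemma hasDerivAt_F₁ {t : ℝ} (ht : t ∈ Ioo 0 (π / 3)) (θ : ℝ) :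
    HasDerivAt (fun t => F₁ t θ) (F₁' t θ) t :=
  (hasDerivAt_X t θ).mul (hasDerivAt_F₀ ht θ)

lemma continuous_X : Continuous fun z : ℝ × ℝ => X z.1 z.2 := by
  unfold X rootA rootB; fun_prop

lemma continuous_X' : Continuous fun z : ℝ × ℝ => X' z.1 z.2 := by
  unfold X' rootA' rootB'; fun_prop

lemma continuousOn_inv_sqrt :
    ContinuousOn (fun z : ℝ × ℝ => (√(rootC z.1 - X z.1 z.2))⁻¹) (Ioo 0 (π / 3) ×ˢ univ) := by
  refine ContinuousOn.inv₀ (Continuous.continuousOn ?_) fun z hz =>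
    (sqrt_pos.2 (D_pos hz.1 z.2)).ne'
  have := continuous_X
  unfold rootC; fun_prop

lemma continuousOn_F₀ :
    ContinuousOn (fun z : ℝ × ℝ => F₀ z.1 z.2) (Ioo 0 (π / 3) ×ˢ univ) :=
  continuousOn_const.mul continuousOn_inv_sqrt

lemma continuousOn_F₁ :
    ContinuousOn (fun z : ℝ × ℝ => F₁ z.1 z.2) (Ioo 0 (π / 3) ×ˢ univ) :=
  continuous_X.continuousOn.mul continuousOn_F₀

lemma continuousOn_F₀' :
    ContinuousOn (fun z : ℝ × ℝ => F₀' z.1 z.2) (Ioo 0 (π / 3) ×ˢ univ) := by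
  refine ContinuousOn.mul (Continuous.continuousOn ?_) (continuousOn_inv_sqrt.pow 3)
  have := continuous_X'
  unfold rootC'; fun_prop

lemma continuousOn_F₁' :
    ContinuousOn (fun z : ℝ × ℝ => F₁' z.1 z.2) (Ioo 0 (π / 3) ×ˢ univ) :=
  (continuous_X'.continuousOn.mul continuousOn_F₀).add
    (continuous_X.continuousOn.mul continuousOn_F₀')

lemma continuous_slice {F : ℝ → ℝ → ℝ}
    (hF : ContinuousOn (fun z : ℝ × ℝ => F z.1 z.2) (Ioo 0 (π / 3) ×ˢ univ)) {t : ℝ}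
    (ht : t ∈ Ioo 0 (π / 3)) : Continuous (F t) := by
  rw [← continuousOn_univ]
  exact hF.comp (f := fun θ : ℝ => (t, θ)) (by fun_prop) fun θ _ => ⟨ht, mem_univ _⟩

/-! ### Exactness of the Picard–Fuchs combinations -/

/-- The bracket multiplying `K` is `√(c - X)³` times the `θ`-derivative of
`sin θ cos θ / √(c - X)`, written in `u = sin² θ`; here `κ = 4 sin 3t`. -/
lemma alg_first {a b c a' b' c' κ u x x' : ℝ} (hc : c = -a - b) (h3 : a ^ 2 + a * b + b ^ 2 = 3)
    (ha' : κ * a' = 2 * (b ^ 2 - 1) * (c ^ 2 - 1)) (hb' : κ * b' = 2 * (a ^ 2 - 1) * (c ^ 2 - 1))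
    (hc' : κ * c' = 2 * (a ^ 2 - 1) * (b ^ 2 - 1)) (hx : x = a + (b - a) * u)
    (hx' : x' = a' + (b' - a') * u) :
    -(κ * (c' - x')) + 2 * (a * b * c) * (c - x) + 4 * x * (c - x) =
      -4 * (b - a) * ((1 - 2 * u) * (c - x) + (b - a) * (u * (1 - u))) := by
  have hk : κ * (c' - x') = κ * c' - (κ * a' + (κ * b' - κ * a') * u) := by rw [hx']; ring
  rw [hk, ha', hb', hc', hx, hc]
  grind

lemma alg_second {a b c a' b' c' κ u x x' : ℝ} (hc : c = -a - b) (h3 : a ^ 2 + a * b + b ^ 2 = 3)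
    (ha' : κ * a' = 2 * (b ^ 2 - 1) * (c ^ 2 - 1)) (hb' : κ * b' = 2 * (a ^ 2 - 1) * (c ^ 2 - 1))
    (hc' : κ * c' = 2 * (a ^ 2 - 1) * (b ^ 2 - 1)) (hx : x = a + (b - a) * u)
    (hx' : x' = a' + (b' - a') * u) :
    2 * (κ * x') * (c - x) - x * (κ * (c' - x')) - 4 * (c - x) - 2 * (a * b * c) * x * (c - x) =
      -4 * c * (b - a) * ((1 - 2 * u) * (c - x) + (b - a) * (u * (1 - u))) := by
  have hk' : κ * x' = κ * a' + (κ * b' - κ * a') * u := by rw [hx']; ring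
  have hk : κ * (c' - x') = κ * c' - κ * x' := by ring
  rw [hk, hk', ha', hb', hc', hx, hc]
  grind

/-- The `θ`-derivative of the primitive `sin θ cos θ / √(c - X)`. -/
noncomputable def G' (t θ : ℝ) : ℝ :=
  ((1 - 2 * sin θ ^ 2) * (rootC t - X t θ) +
    (rootB t - rootA t) * (sin θ ^ 2 * (1 - sin θ ^ 2))) * (√(rootC t - X t θ))⁻¹ ^ 3

lemma inv_sqrt_eq {D : ℝ} (hD : 0 < D) : (√D)⁻¹ = D * (√D)⁻¹ ^ 3 := by
  have hs : 0 < √D := sqrt_pos.2 hD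
  have h := sq_sqrt hD.le
  field_simp
  exact h

lemma hasDerivAt_G {t : ℝ} (ht : t ∈ Ioo 0 (π / 3)) (θ : ℝ) :
    HasDerivAt (fun θ => sin θ * cos θ * (√(rootC t - X t θ))⁻¹) (G' t θ) θ := by
  have hX : HasDerivAt (fun θ => rootC t - X t θ)
      (-((rootB t - rootA t) * (2 * sin θ * cos θ))) θ := by
    have := ((((hasDerivAt_sin θ).pow 2).const_mul (rootB t - rootA t)).const_add
      (rootA t)).const_sub (rootC t)
    refine this.congr_deriv ?_
    simp
  refine (((hasDerivAt_sin θ).mul (hasDerivAt_cos θ)).mul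
    (hasDerivAt_inv_sqrt hX (D_pos ht θ))).congr_deriv ?_
  have h1 : cos θ ^ 2 = 1 - sin θ ^ 2 := by linarith [sin_sq_add_cos_sq θ]
  have h2 := inv_sqrt_eq (D_pos ht θ)
  simp only [G', Pi.mul_apply]
  generalize (√(rootC t - X t θ))⁻¹ = w at *
  linear_combination (1 - 2 * sin θ ^ 2) * h2 +
    (w + (rootB t - rootA t) * sin θ ^ 2 * w ^ 3) * h1

lemma continuous_G' {t : ℝ} (ht : t ∈ Ioo 0 (π / 3)) : Continuous (G' t) := by
  have h1 : Continuous fun θ => (√(rootC t - X t θ))⁻¹ :=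
    continuous_slice (F := fun t θ => (√(rootC t - X t θ))⁻¹) continuousOn_inv_sqrt ht
  have h2 : Continuous fun θ => X t θ := by unfold X; fun_prop
  unfold G'; fun_prop

lemma integral_G' {t : ℝ} (ht : t ∈ Ioo 0 (π / 3)) :
    ∫ θ in (0 : ℝ)..(π / 2), G' t θ = 0 := by
  rw [integral_eq_sub_of_hasDerivAt (fun θ _ => hasDerivAt_G ht θ)
    ((continuous_G' ht).intervalIntegrable _ _)]
  simp

lemma first_pointwise {t : ℝ} (ht : t ∈ Ioo 0 (π / 3)) (θ : ℝ) :
    4 * sin (3 * t) * F₀' t θ =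
      -(2 * cos (3 * t)) * F₀ t θ - 2 * F₁ t θ + -4 * (rootB t - rootA t) * G' t θ := by
  obtain ⟨hc, h3, hH, ha', hb', hc'⟩ := root_relations t
  have h := alg_first hc h3 ha' hb' hc' (rfl : X t θ = _) (rfl : X' t θ = _)
  have h2 := inv_sqrt_eq (D_pos ht θ)
  rw [hH]
  simp only [F₁, F₀, F₀', G']
  generalize (√(rootC t - X t θ))⁻¹ = w at *
  linear_combination w ^ 3 * h +
    (2 * (rootA t * rootB t * rootC t) + 4 * X t θ) * h2

lemma second_pointwise {t : ℝ} (ht : t ∈ Ioo 0 (π / 3)) (θ : ℝ) :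
    4 * sin (3 * t) * F₁' t θ =
      2 * F₀ t θ + 2 * cos (3 * t) * F₁ t θ + -4 * rootC t * (rootB t - rootA t) * G' t θ := by
  obtain ⟨hc, h3, hH, ha', hb', hc'⟩ := root_relations t
  have h := alg_second hc h3 ha' hb' hc' (rfl : X t θ = _) (rfl : X' t θ = _)
  have h2 := inv_sqrt_eq (D_pos ht θ)
  rw [hH]
  simp only [F₁, F₁', F₀, F₀', G']
  generalize (√(rootC t - X t θ))⁻¹ = w at *
  linear_combination w ^ 3 * h +
    (2 * (4 * sin (3 * t) * X' t θ) - 4 - 2 * (rootA t * rootB t * rootC t) * X t θ) * h2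

/-- The first integral as a function of the angle `t`. -/
noncomputable def J₀ (t : ℝ) : ℝ := ∫ θ in (0 : ℝ)..(π / 2), F₀ t θ

/-- The second integral as a function of the angle `t`. -/
noncomputable def J₁ (t : ℝ) : ℝ := ∫ θ in (0 : ℝ)..(π / 2), F₁ t θ

/-- The Picard–Fuchs system in the variable `t`. -/
lemma system_J {t : ℝ} (ht : t ∈ Ioo 0 (π / 3)) : ∃ j₀ j₁ : ℝ,
    HasDerivAt J₀ j₀ t ∧ HasDerivAt J₁ j₁ t ∧
    4 * sin (3 * t) * j₀ = -(2 * cos (3 * t)) * J₀ t - 2 * J₁ t ∧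
    4 * sin (3 * t) * j₁ = 2 * J₀ t + 2 * cos (3 * t) * J₁ t := by
  have hpi : (0 : ℝ) ≤ π / 2 := by positivity
  have i₀ : IntervalIntegrable (F₀ t) volume 0 (π / 2) :=
    (continuous_slice continuousOn_F₀ ht).intervalIntegrable _ _
  have i₁ : IntervalIntegrable (F₁ t) volume 0 (π / 2) :=
    (continuous_slice continuousOn_F₁ ht).intervalIntegrable _ _
  have iG : IntervalIntegrable (G' t) volume 0 (π / 2) :=
    (continuous_G' ht).intervalIntegrable _ _
  refine ⟨_, _, hasDerivAt_integral_of_continuousOn isOpen_Ioo ht hpi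
    (fun t ht => continuous_slice continuousOn_F₀ ht) continuousOn_F₀'
    (fun t ht θ => hasDerivAt_F₀ ht θ), hasDerivAt_integral_of_continuousOn isOpen_Ioo ht hpi
    (fun t ht => continuous_slice continuousOn_F₁ ht) continuousOn_F₁'
    (fun t ht θ => hasDerivAt_F₁ ht θ), ?_, ?_⟩
  · rw [← intervalIntegral.integral_const_mul,
      integral_congr (fun θ _ => first_pointwise ht θ),
      integral_add ((i₀.const_mul _).sub (i₁.const_mul _)) (iG.const_mul _),
      integral_sub (i₀.const_mul _) (i₁.const_mul _)]
    simp only [intervalIntegral.integral_const_mul, integral_G' ht, J₀, J₁]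
    ring
  · rw [← intervalIntegral.integral_const_mul,
      integral_congr (fun θ _ => second_pointwise ht θ),
      integral_add ((i₀.const_mul _).add (i₁.const_mul _)) (iG.const_mul _),
      integral_add (i₀.const_mul _) (i₁.const_mul _)]
    simp only [intervalIntegral.integral_const_mul, integral_G' ht, J₀, J₁]
    ring

/-! ### The change of parameter -/

/-- The angle `t ∈ (0, π/3)` with `h = 2 + 2 cos 3t`. -/
noncomputable def angle (h : ℝ) : ℝ := arccos ((h - 2) / 2) / 3

lemma angle_spec {h : ℝ} (hh : h ∈ Ioo (0 : ℝ) 4) :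
    angle h ∈ Ioo 0 (π / 3) ∧ 2 * cos (3 * angle h) = h - 2 := by
  obtain ⟨h0, h4⟩ := hh
  have e : 3 * angle h = arccos ((h - 2) / 2) := by unfold angle; ring
  have hlt : arccos ((h - 2) / 2) < π := by
    rw [← arccos_neg_one]
    exact arccos_lt_arccos le_rfl (by linarith) (by linarith)
  have hpos : 0 < arccos ((h - 2) / 2) := arccos_pos.2 (by linarith)
  refine ⟨⟨by unfold angle; linarith, by unfold angle; linarith⟩, ?_⟩
  rw [e, cos_arccos (by linarith) (by linarith)]
  ring

lemma hasDerivAt_angle {h : ℝ} (hh : h ∈ Ioo (0 : ℝ) 4) :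
    HasDerivAt angle (-(1 / (6 * sin (3 * angle h)))) h := by
  have e : 3 * angle h = arccos ((h - 2) / 2) := by unfold angle; ring
  obtain ⟨h0, h4⟩ := hh
  have h1 : HasDerivAt (fun h : ℝ => (h - 2) / 2) (1 / 2) h :=
    ((hasDerivAt_id h).sub_const 2).div_const 2
  have h2 := (hasDerivAt_arccos (x := (h - 2) / 2) (by intro h; linarith) (by intro h; linarith))
  refine ((h2.comp h h1).div_const 3).congr_deriv ?_
  rw [e, sin_arccos]
  field_simp
  norm_num

/-- Passing from `d/dt` to `6h(h-4) d/dh = 4 sin 3t d/dt`. -/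
lemma chain_rule {J I : ℝ → ℝ} {j h : ℝ} (hh : h ∈ Ioo (0 : ℝ) 4)
    (hJ : HasDerivAt J j (angle h)) (hI : ∀ h ∈ Ioo (0 : ℝ) 4, I h = J (angle h)) :
    DifferentiableAt ℝ I h ∧ 6 * h * (h - 4) * deriv I h = 4 * sin (3 * angle h) * j := by
  obtain ⟨hmem, hcos⟩ := angle_spec hh
  have hev : I =ᶠ[𝓝 h] J ∘ angle := by
    filter_upwards [isOpen_Ioo.mem_nhds hh] with x hx using hI x hx
  have hd := (hJ.comp h (hasDerivAt_angle hh)).congr_of_eventuallyEq hev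
  refine ⟨hd.differentiableAt, ?_⟩
  rw [hd.deriv]
  have hs : 0 < sin (3 * angle h) :=
    sin_pos_of_pos_of_lt_pi (by linarith [hmem.1]) (by linarith [hmem.2])
  have h1 := sin_sq_add_cos_sq (3 * angle h)
  have h2 : h = 2 + 2 * cos (3 * angle h) := by linarith
  have h3 : 6 * h * (h - 4) = -24 * sin (3 * angle h) ^ 2 := by
    generalize cos (3 * angle h) = C at *
    generalize sin (3 * angle h) = S at *
    rw [h2]
    linear_combination 24 * h1
  rw [h3]
  field_simp
  ring

/-- The cubic factors over the explicit roots. -/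
lemma cubic_factor {h : ℝ} (hh : h ∈ Ioo (0 : ℝ) 4) (x : ℝ) :
    x ^ 3 - 3 * x + 2 - h =
      (x - rootA (angle h)) * (x - rootB (angle h)) * (x - rootC (angle h)) := by
  obtain ⟨-, hcos⟩ := angle_spec hh
  obtain ⟨hc, h3, hH, -⟩ := root_relations (angle h)
  rw [hcos] at hH
  rw [hc] at hH ⊢
  linear_combination -hH + x * h3

lemma roots_eq {h r₁ r₂ r₃ : ℝ} (hh : h ∈ Ioo (0 : ℝ) 4) (h12 : r₁ < r₂) (h23 : r₂ < r₃)
    (hr : ∀ x : ℝ, x ^ 3 - 3 * x + 2 - h = 0 ↔ (x = r₁ ∨ x = r₂ ∨ x = r₃)) :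
    r₁ = rootA (angle h) ∧ r₂ = rootB (angle h) := by
  obtain ⟨hab, hbc⟩ := root_lt (angle_spec hh).1
  simp only [cubic_factor hh, mul_eq_zero, sub_eq_zero, or_assoc] at hr
  have hA := (hr (rootA (angle h))).1 (Or.inl rfl)
  have hB := (hr (rootB (angle h))).1 (Or.inr (Or.inl rfl))
  have hC := (hr (rootC (angle h))).1 (Or.inr (Or.inr rfl))
  rcases hA with hA | hA | hA <;> rcases hB with hB | hB | hB <;> rcases hC with hC | hC | hC <;>
    constructor <;> linarith

end PicardFuchs

open PicardFuchs in
/-- With `I₀(h) = ∫_{r₁(h)}^{r₂(h)} dx/√(x³−3x+2−h)` and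
`I₁(h) = ∫_{r₁(h)}^{r₂(h)} x dx/√(x³−3x+2−h)`, the functions `I₀, I₁` are differentiable
on `(0,4)` and satisfy the Picard–Fuchs system
`6h(h−4)I₀' = −(h−2)I₀ − 2I₁`, `6h(h−4)I₁' = 2I₀ + (h−2)I₁`. -/
theorem stmt_5 (r₁ r₂ r₃ : ℝ → ℝ)
    (hlt : ∀ h ∈ Set.Ioo (0:ℝ) 4, r₁ h < r₂ h ∧ r₂ h < r₃ h)
    (hroots : ∀ h ∈ Set.Ioo (0:ℝ) 4, ∀ x : ℝ,
      x ^ 3 - 3 * x + 2 - h = 0 ↔ (x = r₁ h ∨ x = r₂ h ∨ x = r₃ h))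
    (I₀ I₁ : ℝ → ℝ)
    (hI₀ : ∀ h, I₀ h = ∫ x in (r₁ h)..(r₂ h), (Real.sqrt (x ^ 3 - 3 * x + 2 - h))⁻¹)
    (hI₁ : ∀ h, I₁ h = ∫ x in (r₁ h)..(r₂ h), x * (Real.sqrt (x ^ 3 - 3 * x + 2 - h))⁻¹) :
    ∀ h ∈ Set.Ioo (0:ℝ) 4,
      DifferentiableAt ℝ I₀ h ∧ DifferentiableAt ℝ I₁ h ∧
      6 * h * (h - 4) * deriv I₀ h = -(h - 2) * I₀ h - 2 * I₁ h ∧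
      6 * h * (h - 4) * deriv I₁ h = 2 * I₀ h + (h - 2) * I₁ h := by
  have hints : ∀ h ∈ Set.Ioo (0 : ℝ) 4, I₀ h = J₀ (angle h) ∧ I₁ h = J₁ (angle h) := by
    intro h hh
    obtain ⟨e1, e2⟩ := roots_eq hh (hlt h hh).1 (hlt h hh).2 (hroots h hh)
    have hab := (root_lt (angle_spec hh).1).1
    rw [hI₀, hI₁, e1, e2]
    simp only [cubic_factor hh]
    constructor
    · have := integral_subst (c := rootC (angle h)) hab (fun _ => 1)
      simp only [one_mul] at this
      exact this
    · exact integral_subst (c := rootC (angle h)) hab (fun x => x)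
  intro h hh
  obtain ⟨hmem, hcos⟩ := angle_spec hh
  obtain ⟨j₀, j₁, d₀, d₁, e₀, e₁⟩ := system_J hmem
  obtain ⟨D₀, E₀⟩ := chain_rule hh d₀ fun h hh => (hints h hh).1
  obtain ⟨D₁, E₁⟩ := chain_rule hh d₁ fun h hh => (hints h hh).2
  refine ⟨D₀, D₁, ?_, ?_⟩
  · rw [E₀, e₀, hcos, (hints h hh).1, (hints h hh).2]
  · rw [E₁, e₁, hcos, (hints h hh).1, (hints h hh).2]
end

section
/- With K₀(h) = ∫_{r₂(h)}^{r₃(h)} dx/√(h − P(x)) and K₁(h) = ∫_{r₂(h)}^{r₃(h)} x·dx/√(h − P(x)) for h ∈ (0,4), one has lim_{h→0⁺} K₀(h) = π/√3 and lim_{h→0⁺} K₁(h) = π/√3; in particular the two limits are equal. -/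
open Filter Topology intervalIntegral

/-!
Vieta's formulas give `h - P(x) = (x - r₁)(x - r₂)(r₃ - x)`. The arcsine weight
`((x - r₂)(r₃ - x))^(-1/2)` has total mass `π` on `[r₂, r₃]` whatever the endpoints
(`arcsine_weight`), so `K₀` and `K₁` are `π` times an average of `(x - r₁)^(-1/2)`,
respectively `x (x - r₁)^(-1/2)`, over `[r₂, r₃]` (`weighted_bounds`). As `h → 0⁺` the roots
satisfy `r₁ → -2` and `r₂, r₃ → 1`: with `s = r₂ + r₃ = -r₁` one has `h = (s + 1)²(2 - s)` and
`(r₃ - r₂)² = 12 - 3s²`, whence `2 - h ≤ s ≤ 2` and `r₃ - r₂ ≤ √(12 h)` (`root_facts`).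
Both averages are therefore squeezed to `1/√3`.
-/

/-- The arcsine weight on `[a, b]` is integrable with total mass `π`; an antiderivative is
`arcsin ((2x - a - b) / (b - a))`. -/
lemma arcsine_weight {a b : ℝ} (hab : a < b) :
    IntervalIntegrable (fun x => (Real.sqrt ((x - a) * (b - x)))⁻¹) MeasureTheory.volume a b ∧
    ∫ x in a..b, (Real.sqrt ((x - a) * (b - x)))⁻¹ = Real.pi := by
  have hd : 0 < b - a := sub_pos.2 hab
  have hcont : ContinuousOn (fun x => Real.arcsin ((2 * x - a - b) / (b - a))) (Set.Icc a b) :=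
    (Real.continuous_arcsin.comp (by fun_prop)).continuousOn
  have hderiv : ∀ x ∈ Set.Ioo a b,
      HasDerivAt (fun x => Real.arcsin ((2 * x - a - b) / (b - a)))
        ((Real.sqrt ((x - a) * (b - x)))⁻¹) x := by
    intro x hx
    have h1 : 0 < x - a := sub_pos.2 hx.1
    have h2 : 0 < b - x := sub_pos.2 hx.2
    have hin : HasDerivAt (fun x : ℝ => (2 * x - a - b) / (b - a)) (2 / (b - a)) x := by
      have := ((((hasDerivAt_id x).const_mul 2).sub_const a).sub_const b).div_const (b - a)
      simpa using this
    have hne1 : (2 * x - a - b) / (b - a) ≠ -1 := by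
      rw [Ne, div_eq_iff hd.ne']; intro h; linarith
    have hne2 : (2 * x - a - b) / (b - a) ≠ 1 := by
      rw [Ne, div_eq_iff hd.ne']; intro h; linarith
    have := (Real.hasDerivAt_arcsin hne1 hne2).comp x hin
    refine this.congr_deriv ?_
    have e : 1 - ((2 * x - a - b) / (b - a)) ^ 2 = (2 / (b - a)) ^ 2 * ((x - a) * (b - x)) := by
      field_simp; ring
    rw [e, Real.sqrt_mul (sq_nonneg _), Real.sqrt_sq (by positivity)]
    have : 0 < Real.sqrt ((x - a) * (b - x)) := Real.sqrt_pos.2 (by positivity)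
    field_simp
  have hint : IntervalIntegrable (fun x => (Real.sqrt ((x - a) * (b - x)))⁻¹)
      MeasureTheory.volume a b := by
    apply intervalIntegrable_deriv_of_nonneg (g := fun x => Real.arcsin ((2 * x - a - b) / (b - a)))
    · rwa [Set.uIcc_of_le hab.le]
    · simpa [min_eq_left hab.le, max_eq_right hab.le] using hderiv
    · intro x _; positivity
  refine ⟨hint, ?_⟩
  rw [integral_eq_sub_of_hasDerivAt_of_le hab.le hcont hderiv hint]
  have e1 : (2 * b - a - b) / (b - a) = 1 := by rw [div_eq_iff hd.ne']; ring
  have e2 : (2 * a - a - b) / (b - a) = -1 := by rw [div_eq_iff hd.ne']; ring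
  rw [e1, e2, Real.arcsin_one, Real.arcsin_neg_one]; ring

lemma weighted_bounds {a b m M : ℝ} (hab : a < b) {g : ℝ → ℝ} (hg : ContinuousOn g (Set.Icc a b))
    (hm : ∀ x ∈ Set.Icc a b, m ≤ g x) (hM : ∀ x ∈ Set.Icc a b, g x ≤ M) :
    m * Real.pi ≤ ∫ x in a..b, g x * (Real.sqrt ((x - a) * (b - x)))⁻¹ ∧
    ∫ x in a..b, g x * (Real.sqrt ((x - a) * (b - x)))⁻¹ ≤ M * Real.pi := by
  obtain ⟨hint, hval⟩ := arcsine_weight hab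
  have hgi := hint.continuousOn_mul (g := g) (by rwa [Set.uIcc_of_le hab.le])
  constructor
  · rw [← hval, ← integral_const_mul]
    exact integral_mono_on hab.le (hint.const_mul m) hgi fun x hx =>
      mul_le_mul_of_nonneg_right (hm x hx) (by positivity)
  · rw [← hval, ← integral_const_mul]
    exact integral_mono_on hab.le hgi (hint.const_mul M) fun x hx =>
      mul_le_mul_of_nonneg_right (hM x hx) (by positivity)

/-- Vieta's factorization of `h - P`, and quantitative closeness of the roots to `-2, 1, 1`. -/
lemma root_facts {h a b c : ℝ} (hab : a < b) (hbc : b < c)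
    (ha : a ^ 3 - 3 * a + 2 - h = 0) (hb : b ^ 3 - 3 * b + 2 - h = 0)
    (hc : c ^ 3 - 3 * c + 2 - h = 0) :
    (∀ x, h - (x ^ 3 - 3 * x + 2) = (x - a) * ((x - b) * (c - x))) ∧
    -2 ≤ a ∧ a ≤ -2 + h ∧ c - b ≤ Real.sqrt (12 * h) ∧ a = -(b + c) := by
  have e1 : a ^ 2 + a * b + b ^ 2 = 3 := by
    apply mul_left_cancel₀ (sub_pos.2 hab).ne'; linear_combination hb - ha
  have e2 : b ^ 2 + b * c + c ^ 2 = 3 := by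
    apply mul_left_cancel₀ (sub_pos.2 hbc).ne'; linear_combination hc - hb
  have e3 : a = -(b + c) := by
    apply mul_left_cancel₀ (sub_pos.2 (hab.trans hbc)).ne'; linear_combination e2 - e1
  have hneg : a < 0 := by linarith
  have hsq : (c - b) ^ 2 = 12 - 3 * a ^ 2 := by
    subst e3; linear_combination 4 * e2
  have h2 : -2 ≤ a := by nlinarith [sq_nonneg (c - b)]
  have hP : h = (a - 1) ^ 2 * (a + 2) := by linear_combination -ha
  have h3 : a + 2 ≤ h := by
    rw [hP]; nlinarith [mul_nonneg (show 0 ≤ (a - 1) ^ 2 - 1 by nlinarith) (show 0 ≤ a + 2 by linarith)]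
  refine ⟨fun x => ?_, h2, by linarith, ?_, e3⟩
  · subst e3; linear_combination (b - x) * e2 - hb
  · apply Real.le_sqrt_of_sq_le; rw [hsq]; nlinarith

theorem stmt_6 (r₁ r₂ r₃ : ℝ → ℝ)
    (hlt : ∀ h ∈ Set.Ioo (0:ℝ) 4, r₁ h < r₂ h ∧ r₂ h < r₃ h)
    (hroots : ∀ h ∈ Set.Ioo (0:ℝ) 4, ∀ x : ℝ,
      x ^ 3 - 3 * x + 2 - h = 0 ↔ (x = r₁ h ∨ x = r₂ h ∨ x = r₃ h))
    (K₀ K₁ : ℝ → ℝ)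
    (hK₀ : ∀ h, K₀ h = ∫ x in (r₂ h)..(r₃ h), (Real.sqrt (h - (x ^ 3 - 3 * x + 2)))⁻¹)
    (hK₁ : ∀ h, K₁ h = ∫ x in (r₂ h)..(r₃ h), x * (Real.sqrt (h - (x ^ 3 - 3 * x + 2)))⁻¹) :
    Tendsto K₀ (𝓝[>] 0) (𝓝 (Real.pi / Real.sqrt 3)) ∧
    Tendsto K₁ (𝓝[>] 0) (𝓝 (Real.pi / Real.sqrt 3)) := by
  have hev : ∀ᶠ h in 𝓝[>] (0:ℝ), h ∈ Set.Ioo (0:ℝ) 4 := Ioo_mem_nhdsGT (by norm_num)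
  have facts := fun h (hh : h ∈ Set.Ioo (0:ℝ) 4) =>
    root_facts (hlt h hh).1 (hlt h hh).2 ((hroots h hh _).2 (Or.inl rfl))
      ((hroots h hh _).2 (Or.inr (Or.inl rfl))) ((hroots h hh _).2 (Or.inr (Or.inr rfl)))
  have t0 : Tendsto (fun h : ℝ => h) (𝓝[>] 0) (𝓝 0) := tendsto_id.mono_left nhdsWithin_le_nhds
  have t1 : Tendsto r₁ (𝓝[>] 0) (𝓝 (-2)) := by
    refine tendsto_of_tendsto_of_tendsto_of_le_of_le' (g := fun _ => -2) (h := fun h => -2 + h)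
      tendsto_const_nhds (by simpa using t0.const_add (-2)) ?_ ?_
    · filter_upwards [hev] with h hh using (facts h hh).2.1
    · filter_upwards [hev] with h hh using (facts h hh).2.2.1
  have td : Tendsto (fun h => r₃ h - r₂ h) (𝓝[>] 0) (𝓝 0) := by
    refine tendsto_of_tendsto_of_tendsto_of_le_of_le' (g := fun _ => 0)
      (h := fun h => Real.sqrt (12 * h)) tendsto_const_nhds
      (by simpa using (t0.const_mul 12).sqrt) ?_ ?_
    · filter_upwards [hev] with h hh using by linarith [(hlt h hh).2]
    · filter_upwards [hev] with h hh using (facts h hh).2.2.2.1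
  have t2 : Tendsto r₂ (𝓝[>] 0) (𝓝 1) := by
    have : Tendsto (fun h => (-r₁ h - (r₃ h - r₂ h)) / 2) (𝓝[>] 0) (𝓝 ((- -2 - 0) / 2)) :=
      (t1.neg.sub td).div_const 2
    norm_num at this
    refine this.congr' ?_
    filter_upwards [hev] with h hh
    linarith [(facts h hh).2.2.2.2]
  have t3 : Tendsto r₃ (𝓝[>] 0) (𝓝 1) := by
    simpa using t2.add td
  have hs3 : Real.sqrt 3 ≠ 0 := by positivity
  have u3 : Tendsto (fun h => (Real.sqrt (r₃ h - r₁ h))⁻¹) (𝓝[>] 0) (𝓝 (Real.sqrt 3)⁻¹) := by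
    have := (t3.sub t1).sqrt
    norm_num at this
    exact this.inv₀ hs3
  have u2 : Tendsto (fun h => (Real.sqrt (r₂ h - r₁ h))⁻¹) (𝓝[>] 0) (𝓝 (Real.sqrt 3)⁻¹) := by
    have := (t2.sub t1).sqrt
    norm_num at this
    exact this.inv₀ hs3
  have hcont : ∀ h ∈ Set.Ioo (0:ℝ) 4, ContinuousOn (fun x => (Real.sqrt (x - r₁ h))⁻¹)
      (Set.Icc (r₂ h) (r₃ h)) := by
    intro h hh
    refine ContinuousOn.inv₀ (by fun_prop) fun x hx => ?_
    have := (hlt h hh).1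
    exact (Real.sqrt_pos.2 (by linarith [hx.1])).ne'
  have hlow : ∀ h ∈ Set.Ioo (0:ℝ) 4, ∀ x ∈ Set.Icc (r₂ h) (r₃ h),
      (Real.sqrt (r₃ h - r₁ h))⁻¹ ≤ (Real.sqrt (x - r₁ h))⁻¹ := by
    intro h hh x hx
    have := (hlt h hh).1
    exact inv_anti₀ (Real.sqrt_pos.2 (by linarith [hx.1])) (Real.sqrt_le_sqrt (by linarith [hx.2]))
  have hupp : ∀ h ∈ Set.Ioo (0:ℝ) 4, ∀ x ∈ Set.Icc (r₂ h) (r₃ h),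
      (Real.sqrt (x - r₁ h))⁻¹ ≤ (Real.sqrt (r₂ h - r₁ h))⁻¹ := by
    intro h hh x hx
    have := (hlt h hh).1
    exact inv_anti₀ (Real.sqrt_pos.2 (by linarith)) (Real.sqrt_le_sqrt (by linarith [hx.1]))
  have hfac : ∀ h ∈ Set.Ioo (0:ℝ) 4, ∀ x ∈ Set.uIcc (r₂ h) (r₃ h),
      (Real.sqrt (h - (x ^ 3 - 3 * x + 2)))⁻¹ =
        (Real.sqrt (x - r₁ h))⁻¹ * (Real.sqrt ((x - r₂ h) * (r₃ h - x)))⁻¹ := by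
    intro h hh x hx
    rw [Set.uIcc_of_le (hlt h hh).2.le] at hx
    rw [(facts h hh).1 x, Real.sqrt_mul (by linarith [(hlt h hh).1, hx.1]), mul_inv]
  constructor
  · have key : ∀ h ∈ Set.Ioo (0:ℝ) 4, (Real.sqrt (r₃ h - r₁ h))⁻¹ * Real.pi ≤ K₀ h ∧
        K₀ h ≤ (Real.sqrt (r₂ h - r₁ h))⁻¹ * Real.pi := by
      intro h hh
      rw [hK₀, integral_congr (hfac h hh)]
      exact weighted_bounds (hlt h hh).2 (hcont h hh) (hlow h hh) (hupp h hh)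
    rw [div_eq_inv_mul]
    refine tendsto_of_tendsto_of_tendsto_of_le_of_le' (u3.mul_const _) (u2.mul_const _) ?_ ?_
    · filter_upwards [hev] with h hh using (key h hh).1
    · filter_upwards [hev] with h hh using (key h hh).2
  · have key : ∀ h ∈ Set.Ioo (0:ℝ) 4, 0 < r₂ h →
        r₂ h * (Real.sqrt (r₃ h - r₁ h))⁻¹ * Real.pi ≤ K₁ h ∧
        K₁ h ≤ r₃ h * (Real.sqrt (r₂ h - r₁ h))⁻¹ * Real.pi := by
      intro h hh hpos
      have e : K₁ h = ∫ x in (r₂ h)..(r₃ h), (x * (Real.sqrt (x - r₁ h))⁻¹) *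
          (Real.sqrt ((x - r₂ h) * (r₃ h - x)))⁻¹ := by
        rw [hK₁]
        refine integral_congr fun x hx => ?_
        simp only [hfac h hh x hx, mul_assoc]
      rw [e]
      refine weighted_bounds (hlt h hh).2 (continuousOn_id.mul (hcont h hh)) ?_ ?_
      · intro x hx
        exact mul_le_mul hx.1 (hlow h hh x hx) (by positivity) (hpos.le.trans hx.1)
      · intro x hx
        exact mul_le_mul hx.2 (hupp h hh x hx) (by positivity) (by linarith [(hlt h hh).2])
    have hpos : ∀ᶠ h in 𝓝[>] (0:ℝ), 0 < r₂ h := t2.eventually (lt_mem_nhds one_pos)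
    rw [div_eq_inv_mul, ← one_mul (Real.sqrt 3)⁻¹]
    refine tendsto_of_tendsto_of_tendsto_of_le_of_le' ((t2.mul u3).mul_const _)
      ((t3.mul u2).mul_const _) ?_ ?_
    · filter_upwards [hev, hpos] with h hh hp using (key h hh hp).1
    · filter_upwards [hev, hpos] with h hh hp using (key h hh hp).2
end

section
/- Let T_γ(h) = ∫_{r₁(h)}^{r₂(h)} dx/√(P(x) − h) for h ∈ (0, 4). Then lim_{h→0⁺} [ T_γ(h) + (1/(2√3))·log h ] = (√3/2)·log 12. Equivalently, T_γ(h) = −(1/(2√3))·log h + (√3/2)·log 12 + o(1) as h → 0⁺. -/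
/-!
Write `a < b < c` for the three roots and put `L = b - a`, `d = c - b`.  The substitution
`x = b - L t` turns the integral into `T = J (d / L) / √L`, where
`J ε = ∫₀¹ dt / (√(1 - t) √t √(t + ε))` is (up to normalisation) a complete elliptic integral.

The asymptotics `J ε + log ε → log 16` (`tendsto_ellJ_add_log`) come from splitting
`1 / √(1 - t) = 1 + (1 / √(1 - t) - 1)`: the first part has the elementary primitive
`2 log (√t + √(t + ε))`, and the second part converges by dominated convergence, with dominating
function `1 / (√(1 - t) (1 + √(1 - t)))`, whose integral is `2 log 2`.

The relations between roots and coefficients give `L² + L d + d² = 9` and the discriminant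
identity `(d (9 - d²))² = 27 h (4 - h)`, whence `d² ≤ 3 h` for small `h`
(`root_estimates`).  Thus `d → 0`, `L → 3` with `3 - L = O(√h)`, and `log (d / L)` is
`(log h) / 2` plus a convergent term, which yields the limit.
-/

open Filter Topology intervalIntegral
open MeasureTheory Set

/-- The normalised period integral, equal to `2 K(k) / √(1 + ε)` with `k² = 1 / (1 + ε)` for the
complete elliptic integral `K`. -/
noncomputable def ellJ (ε : ℝ) : ℝ :=
  ∫ t in (0:ℝ)..1, (√(1 - t) * √t * √(t + ε))⁻¹

/-- The integrand left after removing the logarithmically divergent part of `ellJ`,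
without the factor `√t / √(t + ε)`. -/
noncomputable def ellBound (t : ℝ) : ℝ := (√(1 - t) * (1 + √(1 - t)))⁻¹

theorem ellBound_integral :
    IntervalIntegrable ellBound volume 0 1 ∧ ∫ t in (0:ℝ)..1, ellBound t = 2 * Real.log 2 := by
  have hc : ContinuousOn (fun t : ℝ => -2 * Real.log (1 + √(1 - t))) (uIcc 0 1) := by
    apply Continuous.continuousOn
    refine continuous_const.mul (Continuous.log (by fun_prop) ?_)
    intro t
    positivity
  have hd : ∀ t ∈ Ioo (0:ℝ) 1,
      HasDerivAt (fun t : ℝ => -2 * Real.log (1 + √(1 - t))) (ellBound t) t := by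
    intro t ht
    have h1 : 0 < 1 - t := by linarith [ht.2]
    have h2 : 0 < √(1 - t) := Real.sqrt_pos.2 h1
    have := ((((hasDerivAt_id t).const_sub 1).sqrt h1.ne').const_add 1).log
      (by simp only [id]; positivity)
    refine (this.const_mul (-2)).congr_deriv ?_
    simp only [ellBound, id]
    field_simp
  have hi : IntervalIntegrable ellBound volume 0 1 := by
    apply intervalIntegral.intervalIntegrable_deriv_of_nonneg hc
    · simpa using hd
    · intro t _
      simp only [ellBound]
      positivity
  refine ⟨hi, ?_⟩
  rw [intervalIntegral.integral_eq_sub_of_hasDerivAt_of_le zero_le_one (by simpa using hc) hd hi]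
  norm_num

theorem log_part_integral {ε : ℝ} (hε : 0 < ε) :
    IntervalIntegrable (fun t : ℝ => (√t * √(t + ε))⁻¹) volume 0 1 ∧
      ∫ t in (0:ℝ)..1, (√t * √(t + ε))⁻¹ = 2 * Real.log (1 + √(1 + ε)) - Real.log ε := by
  have hc : ContinuousOn (fun t : ℝ => 2 * Real.log (√t + √(t + ε))) (Icc 0 1) := by
    refine continuousOn_const.mul (ContinuousOn.log (by fun_prop) ?_)
    intro t ht
    have : 0 < √(t + ε) := Real.sqrt_pos.2 (by linarith [ht.1])
    positivity
  have hd : ∀ t ∈ Ioo (0:ℝ) 1,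
      HasDerivAt (fun t : ℝ => 2 * Real.log (√t + √(t + ε))) ((√t * √(t + ε))⁻¹) t := by
    intro t ht
    have h1 : 0 < t := ht.1
    have h1' : 0 < t + ε := by linarith
    have h2 : 0 < √t := Real.sqrt_pos.2 h1
    have h3 : 0 < √(t + ε) := Real.sqrt_pos.2 h1'
    have := (((hasDerivAt_id t).sqrt h1.ne').add
      (((hasDerivAt_id t).add_const ε).sqrt h1'.ne')).log
      (by simp only [id, Pi.add_apply]; positivity)
    refine (this.const_mul 2).congr_deriv ?_
    simp only [id, Pi.add_apply]
    field_simp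
    ring
  have hi : IntervalIntegrable (fun t : ℝ => (√t * √(t + ε))⁻¹) volume 0 1 := by
    apply intervalIntegral.intervalIntegrable_deriv_of_nonneg (by simpa using hc)
    · simpa using hd
    · intro t _
      positivity
  refine ⟨hi, ?_⟩
  rw [intervalIntegral.integral_eq_sub_of_hasDerivAt_of_le zero_le_one hc hd hi]
  simp [Real.log_sqrt hε.le]
  ring

/-- The factor `√t / √(t + ε)` is at most `1`, which gives the domination. -/
theorem remainder_norm_le {ε t : ℝ} (hε : 0 < ε) :
    ‖√t / √(t + ε) * ellBound t‖ ≤ ellBound t := by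
  have hb : 0 ≤ ellBound t := by
    simp only [ellBound]
    positivity
  rw [Real.norm_of_nonneg (by positivity)]
  refine mul_le_of_le_one_left hb (div_le_one_of_le₀ ?_ (by positivity))
  exact Real.sqrt_le_sqrt (by linarith)

theorem remainder_measurable (ε : ℝ) :
    Measurable (fun t : ℝ => √t / √(t + ε) * ellBound t) := by
  unfold ellBound
  fun_prop

theorem ellJ_eq {ε : ℝ} (hε : 0 < ε) :
    ellJ ε = 2 * Real.log (1 + √(1 + ε)) - Real.log ε
      + ∫ t in (0:ℝ)..1, √t / √(t + ε) * ellBound t := by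
  have hi : IntervalIntegrable (fun t : ℝ => √t / √(t + ε) * ellBound t) volume 0 1 := by
    refine ellBound_integral.1.mono_fun (remainder_measurable ε).aestronglyMeasurable ?_
    exact Eventually.of_forall fun t => (remainder_norm_le hε).trans (le_abs_self _)
  rw [← (log_part_integral hε).2, ← intervalIntegral.integral_add (log_part_integral hε).1 hi]
  unfold ellJ
  refine intervalIntegral.integral_congr_Ioo_of_le zero_le_one ?_
  intro t ht
  have h1 : 0 < √(1 - t) := Real.sqrt_pos.2 (by linarith [ht.2])
  have h2 : 0 < √t := Real.sqrt_pos.2 ht.1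
  have h3 : 0 < √(t + ε) := Real.sqrt_pos.2 (by linarith [ht.1])
  have h4 : √(1 - t) ^ 2 = 1 - t := Real.sq_sqrt (by linarith [ht.2])
  have h5 : √t ^ 2 = t := Real.sq_sqrt ht.1.le
  simp only [ellBound]
  field_simp
  linarith

theorem tendsto_ellJ_add_log :
    Tendsto (fun ε => ellJ ε + Real.log ε) (𝓝[>] 0) (𝓝 (Real.log 16)) := by
  have hr : Tendsto (fun ε : ℝ => ∫ t in (0:ℝ)..1, √t / √(t + ε) * ellBound t) (𝓝[>] 0)
      (𝓝 (∫ t in (0:ℝ)..1, ellBound t)) := by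
    refine intervalIntegral.tendsto_integral_filter_of_dominated_convergence ellBound
      (Eventually.of_forall fun ε => (remainder_measurable ε).aestronglyMeasurable) ?_
      ellBound_integral.1 ?_
    · filter_upwards [self_mem_nhdsWithin] with ε hε
      exact Eventually.of_forall fun t _ => remainder_norm_le hε
    · refine Eventually.of_forall fun t ht => ?_
      rw [uIoc_of_le zero_le_one] at ht
      have h2 : 0 < √t := Real.sqrt_pos.2 ht.1
      have h : ContinuousAt (fun ε : ℝ => √t / √(t + ε) * ellBound t) 0 := by
        refine ContinuousAt.mul (ContinuousAt.div (by fun_prop) (by fun_prop) ?_) (by fun_prop)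
        simpa using h2.ne'
      have h' := h.tendsto.mono_left (nhdsWithin_le_nhds (s := Ioi 0))
      simpa [div_self h2.ne'] using h'
  have hl : Tendsto (fun ε : ℝ => 2 * Real.log (1 + √(1 + ε))) (𝓝[>] 0)
      (𝓝 (2 * Real.log 2)) := by
    have h : Continuous (fun ε : ℝ => 2 * Real.log (1 + √(1 + ε))) :=
      continuous_const.mul (Continuous.log (by fun_prop) fun ε => by positivity)
    have h' := (h.tendsto 0).mono_left (nhdsWithin_le_nhds (s := Ioi 0))
    norm_num at h'
    exact h'
  have hs := hl.add hr
  rw [ellBound_integral.2] at hs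
  have h16 : Real.log 16 = 2 * Real.log 2 + 2 * Real.log 2 := by
    rw [show (16:ℝ) = 2 ^ 4 by norm_num, Real.log_pow]
    push_cast
    ring
  rw [h16]
  refine hs.congr' ?_
  filter_upwards [self_mem_nhdsWithin] with ε hε
  rw [ellJ_eq hε]
  ring

/-- Vieta's relations for three distinct roots of `x³ - 3x + 2 - h`. -/
theorem vieta {a b c h : ℝ} (hab : a < b) (hbc : b < c)
    (ha : a ^ 3 - 3 * a + 2 - h = 0) (hb : b ^ 3 - 3 * b + 2 - h = 0)
    (hc : c ^ 3 - 3 * c + 2 - h = 0) :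
    a + b + c = 0 ∧ b ^ 2 + b * c + c ^ 2 = 3 ∧ a * b * c = h - 2 := by
  have h1 : a ^ 2 + a * b + b ^ 2 = 3 := by
    apply mul_left_cancel₀ (sub_ne_zero.2 hab.ne)
    linear_combination ha - hb
  have h2 : b ^ 2 + b * c + c ^ 2 = 3 := by
    apply mul_left_cancel₀ (sub_ne_zero.2 hbc.ne)
    linear_combination hb - hc
  have h3 : a + b + c = 0 := by
    apply mul_left_cancel₀ (sub_ne_zero.2 (hab.trans hbc).ne)
    linear_combination h1 - h2
  refine ⟨h3, h2, ?_⟩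
  have : a = -b - c := by linarith
  subst this
  linear_combination hb - b * h2

theorem period_eq_ellJ {a b c h : ℝ} (hab : a < b) (hbc : b < c)
    (ha : a ^ 3 - 3 * a + 2 - h = 0) (hb : b ^ 3 - 3 * b + 2 - h = 0)
    (hc : c ^ 3 - 3 * c + 2 - h = 0) :
    ∫ x in a..b, (√(x ^ 3 - 3 * x + 2 - h))⁻¹ = (√(b - a))⁻¹ * ellJ ((c - b) / (b - a)) := by
  obtain ⟨v1, v2, v3⟩ := vieta hab hbc ha hb hc
  have hL : 0 < b - a := sub_pos.2 hab
  have key := intervalIntegral.integral_comp_sub_mul (a := 0) (b := 1)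
    (fun x : ℝ => (√(x ^ 3 - 3 * x + 2 - h))⁻¹) hL.ne' b
  simp only [mul_one, mul_zero, sub_zero, sub_sub_cancel, smul_eq_mul] at key
  have hcong : ∫ t in (0:ℝ)..1,
        (√((b - (b - a) * t) ^ 3 - 3 * (b - (b - a) * t) + 2 - h))⁻¹
      = ∫ t in (0:ℝ)..1, ((b - a) * √(b - a))⁻¹ *
        (√(1 - t) * √t * √(t + (c - b) / (b - a)))⁻¹ := by
    refine intervalIntegral.integral_congr_Ioo_of_le zero_le_one ?_
    intro t ht
    have e : (b - (b - a) * t) ^ 3 - 3 * (b - (b - a) * t) + 2 - h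
        = (b - a) ^ 2 * ((b - a) * ((1 - t) * (t * (t + (c - b) / (b - a))))) := by
      have e1 : (b - a) * (t + (c - b) / (b - a)) = (b - a) * t + (c - b) := by
        field_simp
      -- `P x - h = (x - a) (x - b) (x - c)` at `x = b - (b - a) t`
      have e2 : ∀ x : ℝ, x ^ 3 - 3 * x + 2 - h = (x - a) * (x - b) * (x - c) := by
        intro x
        have : a = -b - c := by linarith
        subst this
        linear_combination v3 - x * (-v2)
      rw [e2]
      linear_combination -((b - a) ^ 2 * (1 - t) * t) * e1
    simp only
    rw [e, Real.sqrt_mul (sq_nonneg _), Real.sqrt_sq hL.le, Real.sqrt_mul hL.le,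
      Real.sqrt_mul (by linarith [ht.2]), Real.sqrt_mul ht.1.le, ← mul_inv]
    ring_nf
  rw [hcong, intervalIntegral.integral_const_mul] at key
  unfold ellJ
  rw [eq_comm, inv_mul_eq_iff_eq_mul₀ hL.ne'] at key
  rw [key, ← mul_assoc]
  congr 1
  field_simp

/-- Consequences of Vieta's relations for the gaps `L = b - a` and `d = c - b`; the third clause
is the discriminant of the cubic. For `h < 2` the roots `b, c` are positive, which rules out the
other regime `L → 0` of the discriminant identity. -/
theorem root_estimates {a b c h : ℝ} (h0 : 0 < h) (h2 : h < 2) (hab : a < b) (hbc : b < c)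
    (ha : a ^ 3 - 3 * a + 2 - h = 0) (hb : b ^ 3 - 3 * b + 2 - h = 0)
    (hc : c ^ 3 - 3 * c + 2 - h = 0) :
    1 ≤ b - a ∧ b - a ≤ 3 ∧ ((c - b) * (9 - (c - b) ^ 2)) ^ 2 = 27 * h * (4 - h) ∧
      (c - b) ^ 2 ≤ 3 ∧ (c - b) ^ 2 ≤ 3 * h ∧ 3 - (b - a) ≤ 2 * (c - b) := by
  obtain ⟨v1, v2, v3⟩ := vieta hab hbc ha hb hc
  obtain rfl : a = -b - c := by linarith
  have hc0 : 0 < c := by linarith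
  have hb0 : 0 < b := by
    by_contra hcon
    have : 0 ≤ (b + c) * (c * (-b)) := by
      apply mul_nonneg
      · linarith
      · apply mul_nonneg hc0.le; linarith
    nlinarith
  have hbcp : 0 < b * c := mul_pos hb0 hc0
  have hdisc : ((c - b) * (9 - (c - b) ^ 2)) ^ 2 = 27 * h * (4 - h) := by
    have hh : h = 2 - (b + c) * b * c := by linarith
    have h9 : 9 - (c - b) ^ 2 = (2 * b + c) * (b + 2 * c) := by linear_combination -3 * v2
    rw [h9, hh]
    have : (27 : ℝ) * (2 - (b + c) * b * c) * (4 - (2 - (b + c) * b * c))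
      = 4 * 3 ^ 3 - 27 * ((b + c) * b * c) ^ 2 := by ring
    rw [this, ← v2]
    ring
  have hd3 : (c - b) ^ 2 ≤ 3 := by nlinarith
  have hd : (c - b) ^ 2 ≤ 3 * h := by
    have : 36 * (c - b) ^ 2 ≤ ((c - b) * (9 - (c - b) ^ 2)) ^ 2 := by
      rw [mul_pow, mul_comm (36:ℝ)]
      apply mul_le_mul_of_nonneg_left _ (sq_nonneg _)
      nlinarith
    nlinarith
  have hL1 : 1 ≤ b - (-b - c) := by nlinarith
  have hL3 : b - (-b - c) ≤ 3 := by nlinarith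
  refine ⟨hL1, hL3, hdisc, hd3, hd, ?_⟩
  nlinarith

/-- Applied with `3 - L = O(√h)`, this shows that replacing `1 / √L` by `1 / √3` in front of
`log h` costs `o(1)`. -/
theorem inv_sqrt_sub_le {L : ℝ} (h1 : 1 ≤ L) (h3 : L ≤ 3) : |(√3)⁻¹ - (√L)⁻¹| ≤ 3 - L := by
  have a1 : 1 ≤ √L := Real.one_le_sqrt.2 h1
  have a2 : 1 ≤ √3 := Real.one_le_sqrt.2 (by norm_num)
  have a3 : √L ≤ √3 := Real.sqrt_le_sqrt h3
  have s1 : √L ^ 2 = L := Real.sq_sqrt (by linarith)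
  have s3 : √3 ^ 2 = (3:ℝ) := Real.sq_sqrt (by norm_num)
  have e : (√3)⁻¹ - (√L)⁻¹ = -((√3 - √L) / (√3 * √L)) := by
    field_simp
    ring
  rw [e, abs_neg, abs_of_nonneg (div_nonneg (by linarith) (by positivity))]
  calc (√3 - √L) / (√3 * √L) ≤ √3 - √L :=
        div_le_self (by linarith) (by nlinarith)
    _ ≤ (√3 - √L) * (√3 + √L) := le_mul_of_one_le_right (by linarith) (by linarith)
    _ = 3 - L := by linear_combination s3 - s1

/-- With `T_γ(h) = ∫_{r₁(h)}^{r₂(h)} dx/√(x³−3x+2−h)` for `h ∈ (0,4)`,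
one has `lim_{h→0⁺} [T_γ(h) + (1/(2√3))·log h] = (√3/2)·log 12`. -/
theorem stmt_7 (r₁ r₂ r₃ : ℝ → ℝ)
    (hlt : ∀ h ∈ Set.Ioo (0:ℝ) 4, r₁ h < r₂ h ∧ r₂ h < r₃ h)
    (hroots : ∀ h ∈ Set.Ioo (0:ℝ) 4, ∀ x : ℝ,
      x ^ 3 - 3 * x + 2 - h = 0 ↔ (x = r₁ h ∨ x = r₂ h ∨ x = r₃ h))
    (T : ℝ → ℝ)
    (hT : ∀ h, T h = ∫ x in (r₁ h)..(r₂ h), (Real.sqrt (x ^ 3 - 3 * x + 2 - h))⁻¹) :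
    Tendsto (fun h => T h + (1 / (2 * Real.sqrt 3)) * Real.log h) (𝓝[>] 0)
      (𝓝 (Real.sqrt 3 / 2 * Real.log 12)) := by
  set L : ℝ → ℝ := fun h => r₂ h - r₁ h with hLdef
  set d : ℝ → ℝ := fun h => r₃ h - r₂ h with hddef
  have hsmall : ∀ᶠ h : ℝ in 𝓝[>] 0, h ∈ Ioo (0:ℝ) 2 := Ioo_mem_nhdsGT (by norm_num)
  have hest : ∀ h ∈ Ioo (0:ℝ) 2, 0 < d h ∧ T h = (√(L h))⁻¹ * ellJ (d h / L h) ∧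
      1 ≤ L h ∧ L h ≤ 3 ∧ (d h * (9 - d h ^ 2)) ^ 2 = 27 * h * (4 - h) ∧
      d h ^ 2 ≤ 3 ∧ d h ^ 2 ≤ 3 * h ∧ 3 - L h ≤ 2 * d h := by
    intro h hh
    have hh4 : h ∈ Ioo (0:ℝ) 4 := ⟨hh.1, by linarith [hh.2]⟩
    obtain ⟨l1, l2⟩ := hlt h hh4
    have ha := (hroots h hh4 (r₁ h)).2 (by simp)
    have hb := (hroots h hh4 (r₂ h)).2 (by simp)
    have hc := (hroots h hh4 (r₃ h)).2 (by simp)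
    exact ⟨sub_pos.2 l2, (hT h).trans (period_eq_ellJ l1 l2 ha hb hc),
      root_estimates hh.1 hh.2 l1 l2 ha hb hc⟩
  have hdle : ∀ h ∈ Ioo (0:ℝ) 2, d h ≤ √3 * √h := by
    intro h hh
    rw [← Real.sqrt_mul (by norm_num)]
    exact Real.le_sqrt_of_sq_le (hest h hh).2.2.2.2.2.2.1
  have hsqrt : Tendsto (fun h : ℝ => √3 * √h) (𝓝[>] 0) (𝓝 0) := by
    have : Continuous (fun h : ℝ => √3 * √h) := by fun_prop
    simpa using (this.tendsto 0).mono_left (nhdsWithin_le_nhds (s := Ioi 0))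
  have hd0 : Tendsto d (𝓝[>] 0) (𝓝 0) := by
    refine squeeze_zero' ?_ ?_ hsqrt
    · filter_upwards [hsmall] with h hh using (hest h hh).1.le
    · filter_upwards [hsmall] with h hh using hdle h hh
  have hL3 : Tendsto L (𝓝[>] 0) (𝓝 3) := by
    have : Tendsto (fun h => 3 - L h) (𝓝[>] 0) (𝓝 0) := by
      refine squeeze_zero' ?_ ?_ (by simpa using hd0.const_mul 2)
      · filter_upwards [hsmall] with h hh
        linarith [(hest h hh).2.2.2.1]
      · filter_upwards [hsmall] with h hh using (hest h hh).2.2.2.2.2.2.2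
    simpa using this.const_sub 3
  have hε : Tendsto (fun h => d h / L h) (𝓝[>] 0) (𝓝[>] 0) := by
    refine tendsto_nhdsWithin_iff.2 ⟨?_, ?_⟩
    · have := hd0.div hL3 (by norm_num)
      rw [zero_div] at this
      exact this
    filter_upwards [hsmall] with h hh
    exact div_pos (hest h hh).1 (by linarith [(hest h hh).2.2.1])
  have hJ := tendsto_ellJ_add_log.comp hε
  have hinv : Tendsto (fun h => (√(L h))⁻¹) (𝓝[>] 0) (𝓝 (√3)⁻¹) :=
    (hL3.sqrt).inv₀ (by positivity)
  have hlog1 : Tendsto (fun h : ℝ => Real.log (27 * (4 - h)) / 2) (𝓝[>] 0)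
      (𝓝 (Real.log (27 * (4 - 0)) / 2)) := by
    have h : ContinuousAt (fun h : ℝ => Real.log (27 * (4 - h)) / 2) 0 := by
      refine (ContinuousAt.log (by fun_prop) (by norm_num)).div_const 2
    exact h.tendsto.mono_left nhdsWithin_le_nhds
  have hlog2 : Tendsto (fun h => Real.log (9 - d h ^ 2)) (𝓝[>] 0)
      (𝓝 (Real.log (9 - 0 ^ 2))) :=
    ((hd0.pow 2).const_sub 9).log (by norm_num)
  have hlog3 : Tendsto (fun h => Real.log (L h)) (𝓝[>] 0) (𝓝 (Real.log 3)) :=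
    hL3.log (by norm_num)
  have hlogh : Tendsto (fun h : ℝ => ((√3)⁻¹ - (√(L h))⁻¹) * Real.log h) (𝓝[>] 0) (𝓝 0) := by
    have hz : Tendsto (fun h : ℝ => 2 * √3 * |Real.log h * √h|) (𝓝[>] 0) (𝓝 0) := by
      have := tendsto_log_mul_rpow_nhdsGT_zero (r := 1 / 2) (by norm_num)
      simp only [← Real.sqrt_eq_rpow] at this
      simpa using this.abs.const_mul (2 * √3)
    refine squeeze_zero_norm' ?_ hz
    filter_upwards [hsmall] with h hh
    obtain ⟨-, -, e1, e2, -, -, -, e3⟩ := hest h hh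
    rw [norm_mul, Real.norm_eq_abs, Real.norm_eq_abs, abs_mul, abs_of_nonneg (Real.sqrt_nonneg h)]
    calc _ ≤ (2 * (√3 * √h)) * |Real.log h| := by
          refine mul_le_mul_of_nonneg_right ?_ (abs_nonneg _)
          linarith [inv_sqrt_sub_le e1 e2, hdle h hh]
      _ = _ := by ring
  have hfinal := (hinv.mul (hJ.sub ((hlog1.sub hlog2).sub hlog3))).add (hlogh.div_const 2)
  have hval : (√3)⁻¹ * (Real.log 16 - (Real.log (27 * (4 - 0)) / 2 - Real.log (9 - 0 ^ 2)
      - Real.log 3)) + 0 / 2 = √3 / 2 * Real.log 12 := by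
    have e16 : Real.log 16 = 4 * Real.log 2 := by
      rw [show (16:ℝ) = 2 ^ 4 by norm_num, Real.log_pow]; norm_num
    have e108 : Real.log (27 * (4 - 0)) = 3 * Real.log 3 + 2 * Real.log 2 := by
      rw [show (27:ℝ) * (4 - 0) = 3 ^ 3 * 2 ^ 2 by norm_num,
        Real.log_mul (by norm_num) (by norm_num), Real.log_pow, Real.log_pow]; norm_num
    have e9 : Real.log (9 - 0 ^ 2) = 2 * Real.log 3 := by
      rw [show (9:ℝ) - 0 ^ 2 = 3 ^ 2 by norm_num, Real.log_pow]; norm_num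
    have e12 : Real.log 12 = Real.log 3 + 2 * Real.log 2 := by
      rw [show (12:ℝ) = 3 * 2 ^ 2 by norm_num,
        Real.log_mul (by norm_num) (by norm_num), Real.log_pow]; norm_num
    have s3 : √3 ^ 2 = (3:ℝ) := Real.sq_sqrt (by norm_num)
    rw [e16, e108, e9, e12]
    field_simp
    rw [s3]
    ring
  rw [hval] at hfinal
  refine hfinal.congr' ?_
  filter_upwards [hsmall] with h hh
  obtain ⟨d0, eT, L1, -, disc, d3, -, -⟩ := hest h hh
  have hLpos : 0 < L h := by linarith
  -- logarithm of the discriminant identity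
  have hlogd : Real.log (d h) + Real.log (9 - d h ^ 2)
      = (Real.log (27 * (4 - h)) + Real.log h) / 2 := by
    have h4 : 0 < 4 - h := by linarith [hh.2]
    have := congrArg Real.log disc
    rw [Real.log_pow, Real.log_mul d0.ne' (by linarith), mul_right_comm,
      Real.log_mul (by positivity) hh.1.ne'] at this
    push_cast at this
    linarith
  rw [eT]
  simp only [Function.comp]
  rw [Real.log_div d0.ne' hLpos.ne']
  have hd' : Real.log (d h) = (Real.log (27 * (4 - h)) + Real.log h) / 2
      - Real.log (9 - d h ^ 2) := by linarith
  rw [hd']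
  have : (1 / (2 * √3) : ℝ) = (√3)⁻¹ / 2 := by
    field_simp
  rw [this]
  ring
end

section
/- The improper integral ∫₁^∞ [ 1/√(3u² − 3) − 1/(√3·u) ] du converges and equals (log 2)/√3. -/
open MeasureTheory

/-!
An antiderivative of the integrand on `(1, ∞)` is `(arcosh u - log u) / √3`. It is continuous and
vanishes at `1`, and tends to `log 2 / √3` at infinity because
`arcosh u - log u = log (1 + √(1 - u⁻²))`. Since the integrand is nonnegative, the existence of this
limit gives integrability as well as the value (`integrableOn_Ioi_deriv_of_nonneg`,
`integral_Ioi_of_hasDerivAt_of_nonneg`).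
-/

lemma arcosh_sub_log {u : ℝ} (hu : 1 ≤ u) :
    Real.arcosh u - Real.log u = Real.log (1 + Real.sqrt (1 - (u⁻¹) ^ 2)) := by
  have hu0 : 0 < u := by linarith
  have h : u + Real.sqrt (u ^ 2 - 1) = u * (1 + Real.sqrt (1 - (u⁻¹) ^ 2)) := by
    have h1 : u ^ 2 - 1 = u ^ 2 * (1 - (u⁻¹) ^ 2) := by field_simp
    rw [h1, Real.sqrt_mul (sq_nonneg u), Real.sqrt_sq hu0.le]
    ring
  rw [Real.arcosh, h, Real.log_mul hu0.ne' (by positivity)]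
  ring

lemma tendsto_arcosh_sub_log :
    Filter.Tendsto (fun u => Real.arcosh u - Real.log u) Filter.atTop (nhds (Real.log 2)) := by
  have h : Filter.Tendsto (fun u : ℝ => Real.log (1 + Real.sqrt (1 - (u⁻¹) ^ 2)))
      Filter.atTop (nhds (Real.log (1 + Real.sqrt (1 - 0 ^ 2)))) := by
    refine Filter.Tendsto.log ?_ (by positivity)
    exact (((tendsto_inv_atTop_zero (𝕜 := ℝ)).pow 2).const_sub 1).sqrt.const_add 1
  have h2 : (1 : ℝ) + Real.sqrt (1 - 0 ^ 2) = 2 := by norm_num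
  rw [h2] at h
  refine h.congr' ?_
  filter_upwards [Filter.eventually_ge_atTop 1] with u hu
  exact (arcosh_sub_log hu).symm

lemma sqrt_three_mul_sq_sub (u : ℝ) :
    Real.sqrt (3 * u ^ 2 - 3) = Real.sqrt 3 * Real.sqrt (u ^ 2 - 1) := by
  rw [← Real.sqrt_mul (by norm_num)]
  ring_nf

/-- The improper integral `∫₁^∞ [1/√(3u² − 3) − 1/(√3·u)] du` converges
and equals `(log 2)/√3`. -/
theorem stmt_11 :
    IntegrableOn (fun u => (Real.sqrt (3 * u ^ 2 - 3))⁻¹ - (Real.sqrt 3 * u)⁻¹)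
      (Set.Ioi (1:ℝ)) ∧
    ∫ u in Set.Ioi (1:ℝ), ((Real.sqrt (3 * u ^ 2 - 3))⁻¹ - (Real.sqrt 3 * u)⁻¹) =
      Real.log 2 / Real.sqrt 3 := by
  have hcont : ContinuousWithinAt (fun u => (Real.arcosh u - Real.log u) / Real.sqrt 3)
      (Set.Ici 1) 1 :=
    ((Real.continuousOn_arcosh 1 Set.self_mem_Ici).sub
      (Real.continuousAt_log one_ne_zero).continuousWithinAt).div_const _
  have hderiv : ∀ u ∈ Set.Ioi (1:ℝ),
      HasDerivAt (fun u => (Real.arcosh u - Real.log u) / Real.sqrt 3)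
        ((Real.sqrt (3 * u ^ 2 - 3))⁻¹ - (Real.sqrt 3 * u)⁻¹) u := by
    intro u hu
    have hu0 : u ≠ 0 := (zero_lt_one.trans hu).ne'
    refine (((Real.hasDerivAt_arcosh hu).sub (Real.hasDerivAt_log hu0)).div_const
      (Real.sqrt 3)).congr_deriv ?_
    rw [sqrt_three_mul_sq_sub, mul_inv, mul_inv]
    ring
  have hnonneg : ∀ u ∈ Set.Ioi (1:ℝ),
      0 ≤ (Real.sqrt (3 * u ^ 2 - 3))⁻¹ - (Real.sqrt 3 * u)⁻¹ := by
    intro u hu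
    have hu1 : 1 < u := hu
    have hpos : 0 < Real.sqrt (u ^ 2 - 1) := Real.sqrt_pos.mpr (by nlinarith)
    have hle : Real.sqrt (u ^ 2 - 1) ≤ u :=
      Real.sqrt_le_iff.mpr ⟨by linarith, by linarith⟩
    rw [sqrt_three_mul_sq_sub, sub_nonneg]
    gcongr
  have hlim := tendsto_arcosh_sub_log.div_const (Real.sqrt 3)
  refine ⟨integrableOn_Ioi_deriv_of_nonneg hcont hderiv hnonneg hlim, ?_⟩
  rw [integral_Ioi_of_hasDerivAt_of_nonneg hcont hderiv hnonneg hlim]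
  simp
end

section
/- Define x₁(t) = 1 − 3/cosh²(√3·t) and x₂(t) = −3√3·tanh(√3·t)/cosh²(√3·t) for t ∈ ℝ. Then (x₁, x₂) is a solution of the Hamiltonian system ẋ₁ = −2x₂, ẋ₂ = 3(1 − x₁²); it satisfies H(x₁(t), x₂(t)) = 0 for all t, where H(x₁,x₂) = x₁³ − 3x₁ − x₂² + 2; it tends to the saddle point (1, 0) as t → ±∞; and 1 − x₁(t) = 3/cosh²(√3·t). -/
open Filter Topology

/-!
Put `c = cosh (√3 t)` and `s = sinh (√3 t)`, so that `tanh (√3 t) = s / c` and `c² - s² = 1`. The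
two differential equations and the relation `H = 0` then become rational identities in `s`, `c`
modulo `c² - s² = 1` and `(√3)² = 3`. Since `cosh → ∞` at both ends, `x₁ → 1`; the limit of `x₂`
follows from the level-set equation, which reads `x₂² = x₁³ - 3 x₁ + 2` and has right-hand side
tending to `0`.
-/

lemma tendsto_cosh_atTop_atTop : Tendsto Real.cosh atTop atTop := by
  refine tendsto_atTop_mono (fun u => ?_) (Real.tendsto_exp_atTop.atTop_div_const two_pos)
  rw [Real.cosh_eq]
  linarith [Real.exp_pos (-u)]

lemma tendsto_cosh_atBot_atTop : Tendsto Real.cosh atBot atTop :=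
  (tendsto_cosh_atTop_atTop.comp tendsto_neg_atBot_atTop).congr Real.cosh_neg

/-- The curve `x₁(t) = 1 − 3/cosh²(√3 t)`,
`x₂(t) = −3√3·tanh(√3 t)/cosh²(√3 t)` solves `ẋ₁ = −2x₂`, `ẋ₂ = 3(1 − x₁²)`, lies on the
level set `{H = 0}` of `H = x₁³ − 3x₁ − x₂² + 2`, tends to the saddle `(1,0)` as
`t → ±∞`, and satisfies `1 − x₁(t) = 3/cosh²(√3 t)`. -/
theorem stmt_12 (x₁ x₂ : ℝ → ℝ)
    (hx₁def : x₁ = fun t => 1 - 3 / (Real.cosh (Real.sqrt 3 * t)) ^ 2)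
    (hx₂def : x₂ = fun t =>
      -3 * Real.sqrt 3 * Real.tanh (Real.sqrt 3 * t) / (Real.cosh (Real.sqrt 3 * t)) ^ 2) :
    (∀ t, HasDerivAt x₁ (-2 * x₂ t) t) ∧
    (∀ t, HasDerivAt x₂ (3 * (1 - (x₁ t) ^ 2)) t) ∧
    (∀ t, (x₁ t) ^ 3 - 3 * (x₁ t) - (x₂ t) ^ 2 + 2 = 0) ∧
    Tendsto x₁ atTop (𝓝 1) ∧ Tendsto x₂ atTop (𝓝 0) ∧
    Tendsto x₁ atBot (𝓝 1) ∧ Tendsto x₂ atBot (𝓝 0) ∧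
    (∀ t, 1 - x₁ t = 3 / (Real.cosh (Real.sqrt 3 * t)) ^ 2) := by
  have h3 : (0 : ℝ) < Real.sqrt 3 := Real.sqrt_pos.2 (by norm_num)
  have hsq : Real.sqrt 3 ^ 2 = 3 := Real.sq_sqrt (by norm_num)
  have hlin (t : ℝ) : HasDerivAt (fun t => Real.sqrt 3 * t) (Real.sqrt 3) t := by
    simpa using (hasDerivAt_id t).const_mul (Real.sqrt 3)
  have hc (t : ℝ) := (hlin t).cosh
  have hs (t : ℝ) := (hlin t).sinh
  have hc0 (t : ℝ) : Real.cosh (Real.sqrt 3 * t) ≠ 0 := (Real.cosh_pos _).ne'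
  have hcs (t : ℝ) : Real.sinh (Real.sqrt 3 * t) ^ 2 = Real.cosh (Real.sqrt 3 * t) ^ 2 - 1 :=
    Real.sinh_sq _
  have hx₂' : x₂ = fun t => -3 * Real.sqrt 3 * Real.sinh (Real.sqrt 3 * t) /
      Real.cosh (Real.sqrt 3 * t) ^ 3 := by
    rw [hx₂def]
    funext t
    have := hc0 t
    rw [Real.tanh_eq_sinh_div_cosh]
    field_simp
  have hH (t : ℝ) : x₁ t ^ 3 - 3 * x₁ t - x₂ t ^ 2 + 2 = 0 := by
    have h0 := hc0 t
    have h1 := hcs t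
    simp only [hx₁def, hx₂']
    generalize Real.cosh (Real.sqrt 3 * t) = c at *
    generalize Real.sinh (Real.sqrt 3 * t) = s at *
    have h2 : (-3 * Real.sqrt 3 * s / c ^ 3) ^ 2 = 27 * (c ^ 2 - 1) / c ^ 6 := by
      rw [div_pow, mul_pow, mul_pow, hsq, h1]
      ring
    rw [h2]
    field_simp
    ring
  have hlim₁ {l : Filter ℝ} (hl : Tendsto (fun t => Real.cosh (Real.sqrt 3 * t)) l atTop) :
      Tendsto x₁ l (𝓝 1) := by
    have h : Tendsto (fun t => 3 / Real.cosh (Real.sqrt 3 * t) ^ 2) l (𝓝 0) :=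
      ((tendsto_pow_atTop two_ne_zero).comp hl).const_div_atTop 3
    simpa [hx₁def] using h.const_sub 1
  have hlim₂ {l : Filter ℝ} (hl : Tendsto x₁ l (𝓝 1)) : Tendsto x₂ l (𝓝 0) := by
    have h : Tendsto (fun t => x₁ t ^ 3 - 3 * x₁ t + 2) l (𝓝 (1 ^ 3 - 3 * 1 + 2)) :=
      ((hl.pow 3).sub (hl.const_mul 3)).add_const 2
    refine (tendsto_zero_iff_abs_tendsto_zero _).2 ?_
    have h' := h.sqrt
    norm_num at h'
    refine h'.congr fun t => ?_
    rw [Function.comp_apply, ← Real.sqrt_sq_eq_abs]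
    congr 1
    linarith [hH t]
  have hT := hlim₁ (tendsto_cosh_atTop_atTop.comp (tendsto_id.const_mul_atTop h3))
  have hB := hlim₁ (tendsto_cosh_atBot_atTop.comp (tendsto_id.const_mul_atBot h3))
  refine ⟨fun t => ?_, fun t => ?_, hH, hT, hlim₂ hT, hB, hlim₂ hB, fun t => ?_⟩
  · have h0 := hc0 t
    have h := (((hasDerivAt_const t (3 : ℝ)).fun_div ((hc t).fun_pow 2)
      (pow_ne_zero 2 h0))).const_sub 1
    rw [hx₂', hx₁def]
    refine h.congr_deriv ?_
    field_simp
    ring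
  · have h0 := hc0 t
    have h1 := hcs t
    have h := ((hs t).const_mul (-3 * Real.sqrt 3)).fun_div ((hc t).fun_pow 3)
      (pow_ne_zero 3 h0)
    rw [hx₂', hx₁def]
    refine h.congr_deriv ?_
    beta_reduce
    generalize Real.cosh (Real.sqrt 3 * t) = c at *
    generalize Real.sinh (Real.sqrt 3 * t) = s at *
    -- Numerator of the quotient rule, reduced using `(√3)² = 3` and `s² = c² - 1`.
    have h2 : -3 * Real.sqrt 3 * (c * Real.sqrt 3) * c ^ 3 -
        -3 * Real.sqrt 3 * s * (3 * c ^ 2 * (s * Real.sqrt 3)) =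
        9 * c ^ 2 * (2 * c ^ 2 - 3) := by
      linear_combination (-3 * c ^ 4 + 9 * c ^ 2 * s ^ 2) * hsq + 27 * c ^ 2 * h1
    norm_num at h2 ⊢
    rw [h2]
    field_simp
    ring
  · simp only [hx₁def]
    ring
end

section
/- Let W and W' be 3×3 complex matrices of the form [[λ, θ⁻, φ], [0, λ⁻¹, θ⁺], [0, 0, λ]] with parameters (λ, θ⁺, θ⁻, φ) and (λ', θ'⁺, θ'⁻, φ') respectively, where λ, λ' ∈ ℂ*, λ² ≠ 1, λ'² ≠ 1, and (λλ')² ≠ 1. Then the commutator V = W·W'·W⁻¹·W'⁻¹ again has this triangular form with diagonal parameter 1, and ψ(W·W') = ψ(W) + ψ(W') + [ λ²λ'² / ((λ² − 1)(λ'² − 1)(λ²λ'² − 1)) ] · ψ̃(V), where ψ(U) = θ⁺(U)θ⁻(U)/(λ(U)² − 1) + φ(U)/λ(U) for matrices U of this form with λ(U)² ≠ 1, and ψ̃(V) = θ⁺(V)·θ⁻(V) (the product of the two off-diagonal entries adjacent to the diagonal of V). -/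
/-!
Writing `P = W W'` and `Q = W' W`, the commutator satisfies `P = V Q`, and comparing the entries
next to the diagonal gives `V 0 1 = l' (l² - 1) θm' - l (l'² - 1) θm` and
`V 1 2 = (l'² - 1) θp / (l l'²) - (l² - 1) θp' / (l² l')`. With the explicit inverse
(`triangular_inv`) these are direct computations, and the claim is an identity of rational functions
in `l, l'`, bilinear in the `θ`'s; the `φ` terms contribute additively on both sides.
-/

theorem triangular_inv (l p m f : ℂ) (hl : l ≠ 0) :
    (!![l, m, f; 0, l⁻¹, p; 0, 0, l] : Matrix (Fin 3) (Fin 3) ℂ)⁻¹ =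
      !![l⁻¹, -m, m * p / l - f / l ^ 2; 0, l, -p; 0, 0, l⁻¹] := by
  apply Matrix.inv_eq_right_inv
  ext i j
  fin_cases i <;> fin_cases j <;>
    simp [Matrix.mul_apply, Fin.sum_univ_three, hl] <;> field_simp <;> ring

/-- For matrices `W, W'` of the triangular form
`[[λ, θ⁻, φ], [0, λ⁻¹, θ⁺], [0, 0, λ]]` with `λ² ≠ 1`, `λ'² ≠ 1`, `(λλ')² ≠ 1`, the
commutator `V = W·W'·W⁻¹·W'⁻¹` again has this form with diagonal parameter `1`, and
`ψ(W·W') = ψ(W) + ψ(W') + [λ²λ'²/((λ² − 1)(λ'² − 1)(λ²λ'² − 1))]·ψ̃(V)`, where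
`ψ(U) = θ⁺(U)θ⁻(U)/(λ(U)² − 1) + φ(U)/λ(U)` and `ψ̃(V) = θ⁺(V)·θ⁻(V)`. -/
theorem stmt_14 (l θp θm φ l' θp' θm' φ' : ℂ) (hl : l ≠ 0) (hl' : l' ≠ 0)
    (h1 : l ^ 2 ≠ 1) (h2 : l' ^ 2 ≠ 1) (h3 : (l * l') ^ 2 ≠ 1) :
    let W : Matrix (Fin 3) (Fin 3) ℂ := !![l, θm, φ; 0, l⁻¹, θp; 0, 0, l]
    let W' : Matrix (Fin 3) (Fin 3) ℂ := !![l', θm', φ'; 0, l'⁻¹, θp'; 0, 0, l']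
    let V : Matrix (Fin 3) (Fin 3) ℂ := W * W' * W⁻¹ * W'⁻¹
    let ψ : Matrix (Fin 3) (Fin 3) ℂ → ℂ :=
      fun U => U 1 2 * U 0 1 / ((U 0 0) ^ 2 - 1) + U 0 2 / U 0 0
    (V = !![1, V 0 1, V 0 2; 0, 1, V 1 2; 0, 0, 1]) ∧
    ψ (W * W') = ψ W + ψ W' +
      (l ^ 2 * l' ^ 2 / ((l ^ 2 - 1) * (l' ^ 2 - 1) * (l ^ 2 * l' ^ 2 - 1))) *
        (V 1 2 * V 0 1) := by
  intro W W' V ψ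
  have hV : V = W * W' * !![l⁻¹, -θm, θm * θp / l - φ / l ^ 2; 0, l, -θp; 0, 0, l⁻¹] *
      !![l'⁻¹, -θm', θm' * θp' / l' - φ' / l' ^ 2; 0, l', -θp'; 0, 0, l'⁻¹] := by
    simp only [V, W, W', triangular_inv _ _ _ _ hl, triangular_inv _ _ _ _ hl']
  have hV01 : V 0 1 = l' * (l ^ 2 - 1) * θm' - l * (l' ^ 2 - 1) * θm := by
    rw [hV]
    simp [W, W', Matrix.mul_apply, Fin.sum_univ_three]
    field_simp
    ring
  have hV12 : V 1 2 = (l' ^ 2 - 1) * θp / (l * l' ^ 2) - (l ^ 2 - 1) * θp' / (l ^ 2 * l') := by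
    rw [hV]
    simp [W, W', Matrix.mul_apply, Fin.sum_univ_three]
    field_simp
    ring
  constructor
  · ext i j
    fin_cases i <;> fin_cases j <;> try rfl
    all_goals
      rw [hV]
      simp [W, W', Matrix.mul_apply, Fin.sum_univ_three]
    all_goals field_simp
  · have a1 : l ^ 2 - 1 ≠ 0 := sub_ne_zero.mpr h1
    have a2 : l' ^ 2 - 1 ≠ 0 := sub_ne_zero.mpr h2
    have a3 : l ^ 2 * l' ^ 2 - 1 ≠ 0 := by
      rw [← mul_pow]; exact sub_ne_zero.mpr h3
    rw [hV01, hV12]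
    simp [ψ, W, W', Matrix.mul_apply, Fin.sum_univ_three, mul_pow]
    field_simp
    ring
end

section
/- Let T > 0, a ∈ ℂ, and let ξ : ℝ → ℂ be continuous and T-periodic. Then ∫₀^T ∫_t^{t+T} e^{a(t−s)} ξ(t) ξ(s) ds dt = ( ∫₀^T ξ(t) e^{at} dt )·( ∫₀^T ξ(s) e^{−as} ds ) + (e^{−aT} − 1)·∫₀^T ∫₀^t e^{a(t−s)} ξ(t) ξ(s) ds dt. -/
open intervalIntegral

/-!
The kernel separates: `e^{a(t-s)} ξ(t) ξ(s) = p(t) q(s)` with `p(t) = ξ(t) e^{at}` and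
`q(s) = ξ(s) e^{-as}`. Since `ξ` is `T`-periodic, `q(s + T) = e^{-aT} q(s)`, so
`∫_t^{t+T} q = ∫_0^T q + ∫_T^{t+T} q - ∫_0^t q = ∫_0^T q + (e^{-aT} - 1) ∫_0^t q`.
Multiplying by `p(t)` and integrating over `[0, T]` gives the identity; Fubini is not needed.
-/

/-- For `T > 0`, `a ∈ ℂ` and `ξ : ℝ → ℂ` continuous and `T`-periodic,
`∫₀^T ∫_t^{t+T} e^{a(t−s)} ξ(t)ξ(s) ds dt
  = (∫₀^T ξ(t)e^{at} dt)·(∫₀^T ξ(s)e^{−as} ds)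
    + (e^{−aT} − 1)·∫₀^T ∫₀^t e^{a(t−s)} ξ(t)ξ(s) ds dt`. -/
theorem stmt_15 (T : ℝ) (hT : 0 < T) (a : ℂ) (ξ : ℝ → ℂ)
    (hξ : Continuous ξ) (hper : ∀ t, ξ (t + T) = ξ t) :
    (∫ t in (0:ℝ)..T, ∫ s in t..(t + T),
        Complex.exp (a * ((t : ℂ) - (s : ℂ))) * ξ t * ξ s) =
      (∫ t in (0:ℝ)..T, ξ t * Complex.exp (a * t)) *
        (∫ s in (0:ℝ)..T, ξ s * Complex.exp (-a * s)) +
      (Complex.exp (-a * T) - 1) *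
        ∫ t in (0:ℝ)..T, ∫ s in (0:ℝ)..t,
          Complex.exp (a * ((t : ℂ) - (s : ℂ))) * ξ t * ξ s := by
  set p : ℝ → ℂ := fun t => ξ t * Complex.exp (a * t) with hp
  set q : ℝ → ℂ := fun s => ξ s * Complex.exp (-a * s) with hq
  have hpc : Continuous p := by fun_prop
  have hqc : Continuous q := by fun_prop
  have hqi : ∀ u v : ℝ, IntervalIntegrable q MeasureTheory.volume u v :=
    fun u v => hqc.intervalIntegrable u v
  have inner : ∀ t u v : ℝ,
      (∫ s in u..v, Complex.exp (a * ((t : ℂ) - (s : ℂ))) * ξ t * ξ s) =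
        p t * ∫ s in u..v, q s := by
    intro t u v
    rw [← integral_const_mul]
    refine integral_congr fun s _ => ?_
    have h : Complex.exp (a * ((t : ℂ) - (s : ℂ))) =
        Complex.exp (a * t) * Complex.exp (-a * s) := by
      rw [← Complex.exp_add]; ring_nf
    simp only [hp, hq, h]
    ring
  have shift : ∀ t : ℝ,
      (∫ s in T..(t + T), q s) = Complex.exp (-a * T) * ∫ s in (0:ℝ)..t, q s := by
    intro t
    have h := integral_comp_add_right (a := (0:ℝ)) (b := t) q T
    rw [zero_add] at h
    rw [← h, ← integral_const_mul]
    refine integral_congr fun s _ => ?_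
    have h : Complex.exp (-a * ((s + T : ℝ) : ℂ)) =
        Complex.exp (-a * s) * Complex.exp (-a * T) := by
      rw [← Complex.exp_add]; push_cast; ring_nf
    simp only [hq, hper, h]
    ring
  have period : ∀ t : ℝ, (∫ s in t..(t + T), q s) =
      (∫ s in (0:ℝ)..T, q s) + (Complex.exp (-a * T) - 1) * ∫ s in (0:ℝ)..t, q s := by
    intro t
    have h1 := integral_add_adjacent_intervals (hqi 0 t) (hqi t (t + T))
    have h2 := integral_add_adjacent_intervals (hqi 0 T) (hqi T (t + T))
    rw [shift] at h2
    linear_combination h1 - h2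
  have hQc : Continuous fun t : ℝ => ∫ s in (0:ℝ)..t, q s := continuous_primitive hqi 0
  simp only [inner, period]
  rw [← integral_mul_const, ← integral_const_mul, ← integral_add]
  · refine integral_congr fun t _ => ?_
    ring
  · exact (hpc.mul continuous_const).intervalIntegrable _ _
  · exact (continuous_const.mul (hpc.mul hQc)).intervalIntegrable _ _
end

section
/- Let a ∈ ℂ with a ≠ 0 and |Re a| < 2√3. Then the integral ∫_{−∞}^{∞} 3·e^{at}/cosh²(√3·t) dt converges and equals πa / sin(πa/(2√3)). -/
open MeasureTheory

/-!
The logistic substitution `u = sigmoid (2√3 t)` turns the integral into a Beta integral. With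
`b = a / (2√3)`, one has `exp (a t) = (u / (1 - u)) ^ b`, `1 / cosh² (√3 t) = 4 u (1 - u)` and
`du = 2√3 u (1 - u) dt`, so the integral equals `2√3 B(1 + b, 1 - b)`, which converges because
`|Re b| < 1`. Euler's reflection formula gives
`B(1 + b, 1 - b) = b Γ(b) Γ(1 - b) = π b / sin (π b)`.
-/

/-- The exponential in the logistic coordinate: `x = log (u / (1 - u))` for `u = sigmoid x`. -/
lemma sigmoid_cpow_mul (b : ℂ) (x : ℝ) :
    (Real.sigmoid x : ℂ) ^ b * (1 - (Real.sigmoid x : ℂ)) ^ (-b) = Complex.exp (b * x) := by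
  have h0 := Real.sigmoid_pos x
  have h1 : 0 < 1 - Real.sigmoid x := by linarith [Real.sigmoid_lt_one x]
  have hlog : Real.log (Real.sigmoid x) - Real.log (1 - Real.sigmoid x) = x := by
    rw [← Real.sigmoid_neg, ← Real.sigmoid_mul_rexp_neg,
      Real.log_mul h0.ne' (Real.exp_pos _).ne', Real.log_exp]
    ring
  have hc : (1 - (Real.sigmoid x : ℂ)) = ((1 - Real.sigmoid x : ℝ) : ℂ) := by push_cast; rfl
  rw [hc, Complex.cpow_def_of_ne_zero (by exact_mod_cast h0.ne'),
    Complex.cpow_def_of_ne_zero (by exact_mod_cast h1.ne'), ← Complex.exp_add,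
    ← Complex.ofReal_log h0.le, ← Complex.ofReal_log h1.le]
  congr 1
  have hlogC : ((Real.log (Real.sigmoid x) : ℝ) : ℂ) - (Real.log (1 - Real.sigmoid x) : ℝ) = x := by
    exact_mod_cast hlog
  linear_combination b * hlogC

/-- The Beta integral `B(1 + b, 1 - b)` in the logistic coordinate. -/
lemma integrable_and_integral_sigmoid (b : ℂ) (hb : |b.re| < 1) :
    Integrable (fun x : ℝ =>
      (Real.sigmoid x * (1 - Real.sigmoid x)) • Complex.exp (b * x)) ∧
    ∫ x : ℝ, (Real.sigmoid x * (1 - Real.sigmoid x)) • Complex.exp (b * x) =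
      Complex.betaIntegral (1 + b) (1 - b) := by
  obtain ⟨hl, hr⟩ := abs_lt.mp hb
  have hd : ∀ x ∈ Set.univ, HasDerivWithinAt Real.sigmoid
      (Real.sigmoid x * (1 - Real.sigmoid x)) Set.univ x :=
    fun x _ => (Real.hasDerivAt_sigmoid x).hasDerivWithinAt
  have hinj : Set.InjOn Real.sigmoid Set.univ := Real.sigmoid_injective.injOn
  have habs : ∀ x, |Real.sigmoid x * (1 - Real.sigmoid x)| =
      Real.sigmoid x * (1 - Real.sigmoid x) := fun x =>
    abs_of_nonneg (mul_nonneg (Real.sigmoid_nonneg x) (by linarith [Real.sigmoid_le_one x]))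
  have hconv := Complex.betaIntegral_convergent (u := 1 + b) (v := 1 - b)
    (by simp; linarith) (by simp; linarith)
  rw [intervalIntegrable_iff_integrableOn_Ioo_of_le zero_le_one] at hconv
  have e1 : 1 + b - 1 = b := by ring
  have e2 : 1 - b - 1 = -b := by ring
  have hI := integrableOn_image_iff_integrableOn_abs_deriv_smul MeasurableSet.univ hd hinj
    (fun u : ℝ => (u : ℂ) ^ b * (1 - (u : ℂ)) ^ (-b))
  have hJ := integral_image_eq_integral_abs_deriv_smul MeasurableSet.univ hd hinj
    (fun u : ℝ => (u : ℂ) ^ b * (1 - (u : ℂ)) ^ (-b))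
  simp only [Set.image_univ, Real.range_sigmoid, habs, sigmoid_cpow_mul, integrableOn_univ,
    Measure.restrict_univ] at hI hJ
  refine ⟨hI.mp (by simpa only [e1, e2] using hconv), ?_⟩
  rw [← hJ, Complex.betaIntegral, intervalIntegral.integral_of_le zero_le_one,
    integral_Ioc_eq_integral_Ioo, e1, e2]

lemma betaIntegral_one_add_one_sub (b : ℂ) (hb0 : b ≠ 0) (hb : |b.re| < 1) :
    Complex.betaIntegral (1 + b) (1 - b) = b * (Real.pi / Complex.sin (Real.pi * b)) := by
  obtain ⟨hl, hr⟩ := abs_lt.mp hb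
  rw [Complex.betaIntegral_eq_Gamma_mul_div _ _ (by simp; linarith) (by simp; linarith),
    add_comm 1 b, Complex.Gamma_add_one b hb0, mul_assoc, Complex.Gamma_mul_Gamma_one_sub,
    show b + 1 + (1 - b) = 1 + 1 by ring, Complex.Gamma_add_one 1 one_ne_zero, Complex.Gamma_one]
  simp

lemma inv_cosh_sq_eq_sigmoid (s : ℝ) :
    1 / Real.cosh s ^ 2 = 4 * (Real.sigmoid (2 * s) * (1 - Real.sigmoid (2 * s))) := by
  have h : Real.exp (-(2 * s)) = Real.exp (-s) ^ 2 := by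
    rw [← Real.exp_nat_mul]; congr 1; push_cast; ring
  have hp := Real.exp_pos (-s)
  have hs : Real.exp s = (Real.exp (-s))⁻¹ := by rw [Real.exp_neg, inv_inv]
  rw [Real.cosh_eq, Real.sigmoid_def, h, hs]
  field_simp
  ring

/-- For `a ∈ ℂ` with `a ≠ 0` and `|Re a| < 2√3`, the integral
`∫_{−∞}^{∞} 3e^{at}/cosh²(√3 t) dt` converges and equals `πa/sin(πa/(2√3))`. -/
theorem stmt_16 (a : ℂ) (ha : a ≠ 0) (hre : |a.re| < 2 * Real.sqrt 3) :
    Integrable (fun t : ℝ => 3 * Complex.exp (a * t) / (Real.cosh (Real.sqrt 3 * t) : ℂ) ^ 2) ∧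
    ∫ t : ℝ, 3 * Complex.exp (a * t) / (Real.cosh (Real.sqrt 3 * t) : ℂ) ^ 2 =
      Real.pi * a / Complex.sin (Real.pi * a / (2 * Real.sqrt 3)) := by
  obtain ⟨c, hc⟩ : ∃ c : ℝ, c = 2 * Real.sqrt 3 := ⟨_, rfl⟩
  have hcpos : 0 < c := by rw [hc]; positivity
  have hcC : (c : ℂ) ≠ 0 := by exact_mod_cast hcpos.ne'
  have hc2 : (c : ℂ) * c = 12 := by
    have : c * c = 12 := by
      rw [hc]; nlinarith [Real.mul_self_sqrt (show (0 : ℝ) ≤ 3 by norm_num)]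
    exact_mod_cast this
  have hb : |(a / c).re| < 1 := by
    rw [Complex.div_ofReal_re, abs_div, abs_of_pos hcpos, div_lt_one hcpos, hc]
    exact hre
  obtain ⟨hI, hJ⟩ := integrable_and_integral_sigmoid (a / c) hb
  have hf : (fun t : ℝ => 3 * Complex.exp (a * t) / (Real.cosh (Real.sqrt 3 * t) : ℂ) ^ 2) =
      fun t : ℝ => 12 * ((Real.sigmoid (c * t) * (1 - Real.sigmoid (c * t))) •
        Complex.exp (a / c * (c * t : ℝ))) := by
    funext t
    have h := inv_cosh_sq_eq_sigmoid (Real.sqrt 3 * t)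
    rw [← mul_assoc 2, ← hc] at h
    have h' : 1 / (Real.cosh (Real.sqrt 3 * t) : ℂ) ^ 2 =
        4 * ((Real.sigmoid (c * t) * (1 - Real.sigmoid (c * t)) : ℝ) : ℂ) := by
      exact_mod_cast h
    have e : a / c * (c * t : ℝ) = a * t := by push_cast; field_simp
    rw [e, Complex.real_smul, div_eq_mul_one_div, h']
    ring
  have hsin : Real.pi * a / (2 * Real.sqrt 3) = Real.pi * (a / c) := by
    rw [hc]; push_cast; ring
  rw [hf, hsin]
  refine ⟨(hI.comp_mul_left' hcpos.ne').const_mul 12, ?_⟩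
  rw [integral_const_mul, Measure.integral_comp_mul_left (fun x : ℝ =>
      (Real.sigmoid x * (1 - Real.sigmoid x)) • Complex.exp (a / c * x)) c, hJ,
    betaIntegral_one_add_one_sub _ (div_ne_zero ha hcC) hb, abs_of_pos (inv_pos.mpr hcpos),
    Complex.real_smul, ← hc2]
  push_cast
  field_simp
end

section
/- Let w ∈ ℂ with Re w < 0. Then ∫_{−∞}^{∞} (z/sinh z)² · dz/(z − πi·w) = πi·( 1 − 2w − 2w²·Σ_{n=0}^{∞} 1/(n − w)² ), where the integrand is extended continuously by the value 1/(−πi·w)·1 at z = 0, and Σ_{n=0}^{∞} 1/(n − w)² = ψ'(−w) is the trigamma function at −w. -/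
/-!
Put `b = -π w`, so `Re b > 0` and `z - π i w = i (b - i z)`. Averaging the integrand over `±z`
turns the integral into `-i b ∫ (z / sinh z) ^ 2 / (z ^ 2 + b ^ 2) dz`, with
`z ^ 2 + b ^ 2 = (b + i z) (b - i z)`. Let `g = 1 / sinh z ^ 2 - 1 / z ^ 2`. Then
`(z / sinh z) ^ 2 / (z ^ 2 + b ^ 2) = 1 / (z ^ 2 + b ^ 2) + g - b ^ 2 g / (z ^ 2 + b ^ 2)`,
and the three pieces are integrated separately (`integral_even_part`).

* The first gives `π / b`, a special case of `integral_inv_pm`.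
* Since `1 / z - coth z` is an antiderivative of `g`, the second gives `-2` (`integral_cschReg`).
* For the third, `g` is expanded by Mittag-Leffler as
  `∑_{n ≥ 1} (1 / (z + i π n) ^ 2 + 1 / (z - i π n) ^ 2)` (`cschReg_eq_tsum`). The terms are
  `O(1 / n ^ 2)` uniformly in `z`, so summation and integration commute, and each resulting
  rational integral is elementary (`integral_pairTerm`), with value
  `-2 π / (b (b + π n) ^ 2)`.

The rational integrals are evaluated by the fundamental theorem of calculus, with logarithms
`log (b ± i z)` whose argument stays in the right half-plane, so the principal branch is smooth
along the whole real line. The name suffixes `p`, `m` record the signs in the factors `b ± i z`.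
-/

open MeasureTheory Complex
open Filter Topology

/-! ### Linear factors `b ± i z` with `Re b > 0` -/

lemma lin_ne_zero {b : ℂ} (hb : 0 < b.re) (z : ℝ) : b + I * z ≠ 0 := by
  intro h
  have := congrArg Complex.re h
  simp at this
  linarith

lemma lin_ne_zero' {b : ℂ} (hb : 0 < b.re) (z : ℝ) : b - I * z ≠ 0 := by
  simpa [sub_eq_add_neg] using lin_ne_zero hb (-z)

lemma norm_inv_lin_sq_le {b : ℂ} (hb : 0 < b.re) :
    ∃ K : ℝ, 0 ≤ K ∧ ∀ z : ℝ, ‖(b + I * z)⁻¹‖ ^ 2 ≤ K * (1 + z ^ 2)⁻¹ := by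
  refine ⟨(1 + 2 * b.im ^ 2) / b.re ^ 2 + 2, by positivity, fun z => ?_⟩
  have hn : ‖b + I * z‖ ^ 2 = b.re ^ 2 + (b.im + z) ^ 2 := by
    rw [Complex.sq_norm, Complex.normSq_apply]; simp; ring
  rw [norm_inv, inv_pow, hn, ← div_eq_mul_inv, inv_le_comm₀ (by positivity) (by positivity),
    inv_div, div_le_iff₀ (by positivity)]
  have h1 : 0 < b.re ^ 2 := by positivity
  have h2 : (1 + 2 * b.im ^ 2) / b.re ^ 2 * b.re ^ 2 = 1 + 2 * b.im ^ 2 := by field_simp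
  have h3 : 0 ≤ (1 + 2 * b.im ^ 2) / b.re ^ 2 * (b.im + z) ^ 2 := by positivity
  nlinarith [sq_nonneg (2 * b.im + z)]

lemma continuous_inv_lin {b : ℂ} (hb : 0 < b.re) : Continuous fun z : ℝ => (b + I * z)⁻¹ :=
  Continuous.inv₀ (by fun_prop) (lin_ne_zero hb)

lemma continuous_inv_lin' {b : ℂ} (hb : 0 < b.re) : Continuous fun z : ℝ => (b - I * z)⁻¹ :=
  Continuous.inv₀ (by fun_prop) (lin_ne_zero' hb)

lemma norm_inv_lin_le {b : ℂ} (hb : 0 < b.re) (z : ℝ) : ‖(b + I * z)⁻¹‖ ≤ b.re⁻¹ := by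
  rw [norm_inv]
  refine inv_anti₀ hb ?_
  have := Complex.re_le_norm (b + I * z)
  simpa using this

/-- Two continuous functions that are `O(1 / |z|)` have an integrable product, by
`2 |u v| ≤ |u| ^ 2 + |v| ^ 2`. -/
lemma integrable_mul_of_sq_le {u v : ℝ → ℂ} (hu : Continuous u) (hv : Continuous v)
    {K L : ℝ} (hK : ∀ z : ℝ, ‖u z‖ ^ 2 ≤ K * (1 + z ^ 2)⁻¹)
    (hL : ∀ z : ℝ, ‖v z‖ ^ 2 ≤ L * (1 + z ^ 2)⁻¹) : Integrable fun z => u z * v z := by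
  refine Integrable.mono' (integrable_inv_one_add_sq.const_mul (K + L))
    (hu.mul hv).aestronglyMeasurable (Eventually.of_forall fun z => ?_)
  rw [norm_mul]
  nlinarith [hK z, hL z, sq_nonneg (‖u z‖ - ‖v z‖), sq_nonneg ‖u z‖, sq_nonneg ‖v z‖]

lemma integrable_inv_pm {b c : ℂ} (hb : 0 < b.re) (hc : 0 < c.re) :
    Integrable fun z : ℝ => (b + I * z)⁻¹ * (c - I * z)⁻¹ := by
  obtain ⟨K, -, hK⟩ := norm_inv_lin_sq_le hb
  obtain ⟨L, -, hL⟩ := norm_inv_lin_sq_le hc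
  refine integrable_mul_of_sq_le (L := L) (continuous_inv_lin hb) (continuous_inv_lin' hc) hK
    (fun z => ?_)
  simpa [sub_eq_add_neg] using hL (-z)

lemma integrable_inv_mm {b c : ℂ} (hb : 0 < b.re) (hc : 0 < c.re) :
    Integrable fun z : ℝ => (b - I * z)⁻¹ * (c - I * z)⁻¹ := by
  obtain ⟨K, -, hK⟩ := norm_inv_lin_sq_le hb
  obtain ⟨L, -, hL⟩ := norm_inv_lin_sq_le hc
  refine integrable_mul_of_sq_le (K := K) (L := L) (continuous_inv_lin' hb) (continuous_inv_lin' hc)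
    (fun z => ?_) (fun z => ?_)
  · simpa [sub_eq_add_neg] using hK (-z)
  · simpa [sub_eq_add_neg] using hL (-z)

/-! ### Logarithmic antiderivatives -/

lemma tendsto_log_lin_atTop {b : ℂ} (hb : 0 < b.re) :
    Tendsto (fun z : ℝ => Complex.log (b + I * z) - Real.log z) atTop (𝓝 (Real.pi / 2 * I)) := by
  have h1 : Tendsto (fun z : ℝ => b * ((z⁻¹ : ℝ) : ℂ) + I) atTop (𝓝 I) := by
    have h := (Complex.continuous_ofReal.tendsto 0).comp tendsto_inv_atTop_zero
    simpa using (h.const_mul b).add_const I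
  have h2 := h1.clog (by simp [Complex.mem_slitPlane_iff])
  rw [Complex.log_I] at h2
  refine h2.congr' ?_
  filter_upwards [eventually_gt_atTop 0] with z hz
  have hz' : (z : ℂ) ≠ 0 := by exact_mod_cast hz.ne'
  have e : b + I * z = z * (b * ((z⁻¹ : ℝ) : ℂ) + I) := by push_cast; field_simp
  have hne : b * ((z⁻¹ : ℝ) : ℂ) + I ≠ 0 := fun h => lin_ne_zero hb z (by rw [e, h, mul_zero])
  rw [e, Complex.log_ofReal_mul hz hne]; ring

lemma tendsto_log_lin_atBot {b : ℂ} (hb : 0 < b.re) :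
    Tendsto (fun z : ℝ => Complex.log (b + I * z) - Real.log z) atBot
      (𝓝 (-(Real.pi / 2 * I))) := by
  have h1 : Tendsto (fun z : ℝ => b * ((z⁻¹ : ℝ) : ℂ) - I) atTop (𝓝 (-I)) := by
    have h := (Complex.continuous_ofReal.tendsto 0).comp tendsto_inv_atTop_zero
    simpa using (h.const_mul b).sub_const I
  have h2 := h1.clog (by simp [Complex.mem_slitPlane_iff])
  rw [Complex.log_neg_I] at h2
  have h3 : Tendsto (fun z : ℝ => Complex.log (b - I * z) - Real.log z) atTop
      (𝓝 (-(Real.pi / 2 * I))) := by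
    rw [← neg_mul]
    refine (h2.congr' ?_).trans (by rw [show (-(Real.pi / 2 : ℂ)) = -Real.pi / 2 by ring])
    filter_upwards [eventually_gt_atTop 0] with z hz
    have hz' : (z : ℂ) ≠ 0 := by exact_mod_cast hz.ne'
    have e : b - I * z = z * (b * ((z⁻¹ : ℝ) : ℂ) - I) := by push_cast; field_simp
    have hne : b * ((z⁻¹ : ℝ) : ℂ) - I ≠ 0 := fun h => lin_ne_zero' hb z (by rw [e, h, mul_zero])
    rw [e, Complex.log_ofReal_mul hz hne]; ring
  have h4 := h3.comp tendsto_neg_atBot_atTop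
  refine h4.congr fun z => ?_
  simp [Function.comp, Real.log_neg_eq_log]

lemma tendsto_log_lin'_atTop {b : ℂ} (hb : 0 < b.re) :
    Tendsto (fun z : ℝ => Complex.log (b - I * z) - Real.log z) atTop
      (𝓝 (-(Real.pi / 2 * I))) := by
  refine ((tendsto_log_lin_atBot hb).comp tendsto_neg_atTop_atBot).congr fun z => ?_
  simp [Function.comp, Real.log_neg_eq_log, sub_eq_add_neg]

lemma tendsto_log_lin'_atBot {b : ℂ} (hb : 0 < b.re) :
    Tendsto (fun z : ℝ => Complex.log (b - I * z) - Real.log z) atBot (𝓝 (Real.pi / 2 * I)) := by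
  refine ((tendsto_log_lin_atTop hb).comp tendsto_neg_atBot_atTop).congr fun z => ?_
  simp [Function.comp, Real.log_neg_eq_log, sub_eq_add_neg]

lemma hasDerivAt_lin (b : ℂ) (z : ℝ) : HasDerivAt (fun z : ℝ => b + I * z) I z := by
  simpa using ((Complex.ofRealCLM.hasDerivAt (x := z)).const_mul I).const_add b

lemma hasDerivAt_lin' (b : ℂ) (z : ℝ) : HasDerivAt (fun z : ℝ => b - I * z) (-I) z := by
  simpa using ((Complex.ofRealCLM.hasDerivAt (x := z)).const_mul I).const_sub b

lemma hasDerivAt_log_lin {b : ℂ} (hb : 0 < b.re) (z : ℝ) :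
    HasDerivAt (fun z : ℝ => Complex.log (b + I * z)) (I / (b + I * z)) z :=
  (hasDerivAt_lin b z).clog_real (by simp [Complex.mem_slitPlane_iff, hb])

lemma hasDerivAt_log_lin' {b : ℂ} (hb : 0 < b.re) (z : ℝ) :
    HasDerivAt (fun z : ℝ => Complex.log (b - I * z)) (-I / (b - I * z)) z :=
  (hasDerivAt_lin' b z).clog_real (by simp [Complex.mem_slitPlane_iff, hb])

lemma add_ne_zero_of_re {b c : ℂ} (hb : 0 < b.re) (hc : 0 < c.re) : b + c ≠ 0 := by
  intro h
  have := congrArg Complex.re h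
  simp at this
  linarith

/-! ### Integrals of rational functions -/

/-- Since the poles lie on opposite sides of the real axis, the two logarithms turn in opposite
directions and their difference picks up `2 π i`. -/
lemma integral_inv_pm {b c : ℂ} (hb : 0 < b.re) (hc : 0 < c.re) :
    ∫ z : ℝ, (b + I * z)⁻¹ * (c - I * z)⁻¹ = 2 * Real.pi / (b + c) := by
  have hbc := add_ne_zero_of_re hb hc
  have hI := Complex.I_mul_I
  rw [integral_of_hasDerivAt_of_tendsto
    (f := fun z : ℝ => (b + c)⁻¹ * (-I) *
      ((Complex.log (b + I * z) - Real.log z) - (Complex.log (c - I * z) - Real.log z)))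
    (fun z => ?_) (integrable_inv_pm hb hc)
    (((tendsto_log_lin_atBot hb).sub (tendsto_log_lin'_atBot hc)).const_mul _)
    (((tendsto_log_lin_atTop hb).sub (tendsto_log_lin'_atTop hc)).const_mul _)]
  · field_simp; linear_combination (-4) * hI
  · have h := ((hasDerivAt_log_lin hb z).sub (hasDerivAt_log_lin' hc z)).const_mul
      ((b + c)⁻¹ * (-I))
    simp only [sub_sub_sub_cancel_right]
    refine h.congr_deriv ?_
    have h1 := lin_ne_zero hb z
    have h2 := lin_ne_zero' hc z
    field_simp
    linear_combination (-(b + c)) * hI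

lemma tendsto_inv_lin' {c : ℂ} (hc : 0 < c.re) {l : Filter ℝ}
    (hl : Tendsto (fun z : ℝ => z ^ 2) l atTop) :
    Tendsto (fun z : ℝ => (c - I * z)⁻¹) l (𝓝 0) := by
  obtain ⟨K, -, hK⟩ := norm_inv_lin_sq_le hc
  have h := ((tendsto_inv_atTop_zero.comp
    (tendsto_atTop_add_const_left l 1 hl)).const_mul K).sqrt
  rw [tendsto_zero_iff_norm_tendsto_zero]
  refine squeeze_zero (fun _ => norm_nonneg _) (fun z => Real.le_sqrt_of_sq_le ?_)
    (by simpa using h)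
  simpa [sub_eq_add_neg] using hK (-z)

lemma tendsto_sq_atBot : Tendsto (fun z : ℝ => z ^ 2) atBot atTop := by
  simpa [Function.comp_def] using
    (tendsto_pow_atTop (α := ℝ) two_ne_zero).comp tendsto_neg_atBot_atTop

lemma integral_inv_sq {c : ℂ} (hc : 0 < c.re) :
    ∫ z : ℝ, (c - I * z)⁻¹ * (c - I * z)⁻¹ = 0 := by
  rw [integral_of_hasDerivAt_of_tendsto
    (f := fun z : ℝ => (-I) * (c - I * z)⁻¹)
    (fun z => ?_) (integrable_inv_mm hc hc)
    ((tendsto_inv_lin' hc tendsto_sq_atBot).const_mul _)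
    ((tendsto_inv_lin' hc (tendsto_pow_atTop two_ne_zero)).const_mul _)]
  · simp
  · have h := ((hasDerivAt_lin' c z).fun_inv (lin_ne_zero' hc z)).const_mul (-I)
    refine h.congr_deriv ?_
    have h2 := lin_ne_zero' hc z
    field_simp
    linear_combination -Complex.I_mul_I

/-- Since the poles lie on the same side of the real axis, the limits of the two logarithms
cancel. -/
lemma integral_inv_mm {b c : ℂ} (hb : 0 < b.re) (hc : 0 < c.re) :
    ∫ z : ℝ, (b - I * z)⁻¹ * (c - I * z)⁻¹ = 0 := by
  rcases eq_or_ne b c with rfl | hne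
  · exact integral_inv_sq hb
  have hbc : c - b ≠ 0 := sub_ne_zero.2 hne.symm
  rw [integral_of_hasDerivAt_of_tendsto
    (f := fun z : ℝ => (c - b)⁻¹ * I *
      ((Complex.log (b - I * z) - Real.log z) - (Complex.log (c - I * z) - Real.log z)))
    (fun z => ?_) (integrable_inv_mm hb hc)
    (((tendsto_log_lin'_atBot hb).sub (tendsto_log_lin'_atBot hc)).const_mul _)
    (((tendsto_log_lin'_atTop hb).sub (tendsto_log_lin'_atTop hc)).const_mul _)]
  · simp
  · have h := ((hasDerivAt_log_lin' hb z).sub (hasDerivAt_log_lin' hc z)).const_mul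
      ((c - b)⁻¹ * I)
    simp only [sub_sub_sub_cancel_right]
    refine h.congr_deriv ?_
    have h1 := lin_ne_zero' hb z
    have h2 := lin_ne_zero' hc z
    field_simp
    linear_combination (-(c - b)) * Complex.I_mul_I

lemma integrable_mul_inv' {u : ℝ → ℂ} (hu : Integrable u) {c : ℂ} (hc : 0 < c.re) :
    Integrable fun z : ℝ => u z * (c - I * z)⁻¹ := by
  refine hu.mul_bdd (c := c.re⁻¹) (continuous_inv_lin' hc).aestronglyMeasurable
    (Eventually.of_forall fun z => ?_)
  simpa [sub_eq_add_neg] using norm_inv_lin_le hc (-z)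

lemma integral_inv_pmm {b c : ℂ} (hb : 0 < b.re) (hc : 0 < c.re) :
    ∫ z : ℝ, (b + I * z)⁻¹ * (c - I * z)⁻¹ * (c - I * z)⁻¹ = 2 * Real.pi / (b + c) ^ 2 := by
  have hbc := add_ne_zero_of_re hb hc
  have e : (fun z : ℝ => (b + I * z)⁻¹ * (c - I * z)⁻¹ * (c - I * z)⁻¹) = fun z : ℝ =>
      (b + c)⁻¹ * ((b + I * z)⁻¹ * (c - I * z)⁻¹ + (c - I * z)⁻¹ * (c - I * z)⁻¹) := by
    funext z
    have h1 := lin_ne_zero hb z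
    have h2 := lin_ne_zero' hc z
    field_simp
    ring
  rw [e, integral_const_mul, integral_add (integrable_inv_pm hb hc) (integrable_inv_mm hc hc),
    integral_inv_pm hb hc, integral_inv_sq hc]
  field_simp
  ring

lemma integral_inv_mmm {b c : ℂ} (hb : 0 < b.re) (hc : 0 < c.re) :
    ∫ z : ℝ, (b - I * z)⁻¹ * (c - I * z)⁻¹ * (c - I * z)⁻¹ = 0 := by
  rcases eq_or_ne b c with rfl | hne
  · rw [integral_of_hasDerivAt_of_tendsto
      (f := fun z : ℝ => (-I / 2) * ((b - I * z)⁻¹) ^ 2)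
      (fun z => ?_) (integrable_mul_inv' (integrable_inv_mm hb hb) hb)
      (((tendsto_inv_lin' hb tendsto_sq_atBot).pow 2).const_mul _)
      (((tendsto_inv_lin' hb (tendsto_pow_atTop two_ne_zero)).pow 2).const_mul _)]
    · simp
    · have h := (((hasDerivAt_lin' b z).fun_inv (lin_ne_zero' hb z)).fun_pow 2).const_mul (-I / 2)
      refine h.congr_deriv ?_
      have h2 := lin_ne_zero' hb z
      rw [show 2 - 1 = 1 from rfl, pow_one]
      push_cast
      field_simp
      linear_combination -Complex.I_mul_I
  have hbc : c - b ≠ 0 := sub_ne_zero.2 hne.symm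
  have e : (fun z : ℝ => (b - I * z)⁻¹ * (c - I * z)⁻¹ * (c - I * z)⁻¹) = fun z : ℝ =>
      (c - b)⁻¹ * ((b - I * z)⁻¹ * (c - I * z)⁻¹ - (c - I * z)⁻¹ * (c - I * z)⁻¹) := by
    funext z
    have h1 := lin_ne_zero' hb z
    have h2 := lin_ne_zero' hc z
    field_simp
    ring
  rw [e, integral_const_mul, integral_sub (integrable_inv_mm hb hc) (integrable_inv_mm hc hc),
    integral_inv_mm hb hc, integral_inv_sq hc]
  simp

/-- The pair of double-pole terms `±c` in the partial fraction expansion of `1 / sinh ^ 2`,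
where `c = π n`: it equals `1 / (z + i c) ^ 2 + 1 / (z - i c) ^ 2`. -/
noncomputable def pairTerm (c : ℂ) (z : ℝ) : ℂ := -(((c - I * z)⁻¹) ^ 2 + ((c + I * z)⁻¹) ^ 2)

lemma integral_pairTerm {b c : ℂ} (hb : 0 < b.re) (hc : 0 < c.re) :
    ∫ z : ℝ, (b + I * z)⁻¹ * (b - I * z)⁻¹ * pairTerm c z =
      -(2 * Real.pi) / (b * (b + c) ^ 2) := by
  have hb0 : b ≠ 0 := by rintro rfl; simp at hb
  have hbc := add_ne_zero_of_re hb hc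
  -- By the symmetry `z ↦ -z` both double poles contribute the same amount.
  set u : ℝ → ℂ := fun z => (b + I * z)⁻¹ * (b - I * z)⁻¹ * ((c - I * z)⁻¹ * (c - I * z)⁻¹)
    with hu
  have hui : Integrable u := by
    have := integrable_mul_inv' (integrable_mul_inv' (integrable_inv_pm hb hb) hc) hc
    simpa only [hu, mul_assoc] using this
  have huI : ∫ z, u z = (2 * b)⁻¹ * (2 * Real.pi / (b + c) ^ 2) := by
    have e : u = fun z : ℝ => (2 * b)⁻¹ * ((b + I * z)⁻¹ * (c - I * z)⁻¹ * (c - I * z)⁻¹ +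
        (b - I * z)⁻¹ * (c - I * z)⁻¹ * (c - I * z)⁻¹) := by
      funext z
      have h1 := lin_ne_zero hb z
      have h2 := lin_ne_zero' hc z
      have h3 := lin_ne_zero' hb z
      simp only [hu]
      field_simp
      ring
    rw [e, integral_const_mul, integral_add (integrable_mul_inv' (integrable_inv_pm hb hc) hc)
      (integrable_mul_inv' (integrable_inv_mm hb hc) hc), integral_inv_pmm hb hc,
      integral_inv_mmm hb hc, add_zero]
  have e : (fun z : ℝ => (b + I * z)⁻¹ * (b - I * z)⁻¹ * pairTerm c z) =
      fun z => -(u z + u (-z)) := by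
    funext z
    simp only [hu, pairTerm]
    push_cast
    simp only [mul_neg, sub_neg_eq_add, ← sub_eq_add_neg]
    ring
  rw [e, integral_neg, integral_add hui hui.comp_neg, integral_neg_eq_self u volume, huI]
  field_simp
  ring
/-! ### The regular part of `1 / sinh ^ 2` -/

lemma sinh_sq_ge (x : ℝ) : x ^ 2 ≤ Real.sinh x ^ 2 := by
  rw [sq_le_sq]
  rw [Real.abs_sinh]
  exact Real.self_le_sinh_iff.2 (abs_nonneg x)

/-- `sinh x ^ 2 = 4 sinh (x / 2) ^ 2 (1 + sinh (x / 2) ^ 2)` and `|sinh y| ≥ |y|`. -/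
lemma sinh_sq_ge' (x : ℝ) : x ^ 2 * (1 + x ^ 2) ≤ 4 * Real.sinh x ^ 2 := by
  have h1 := sinh_sq_ge (x / 2)
  have h2 : Real.sinh x = 2 * Real.sinh (x / 2) * Real.cosh (x / 2) := by
    rw [← Real.sinh_two_mul]; ring_nf
  have h3 := Real.cosh_sq (x / 2)
  have h4 : Real.sinh x ^ 2 = 4 * Real.sinh (x / 2) ^ 2 * (Real.sinh (x / 2) ^ 2 + 1) := by
    rw [h2, mul_pow, mul_pow, h3]; ring
  rw [h4]
  nlinarith [sq_nonneg x]

lemma sq_div_sinh_le (x : ℝ) : (x / Real.sinh x) ^ 2 ≤ 4 * (1 + x ^ 2)⁻¹ := by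
  rcases eq_or_ne x 0 with rfl | hx
  · simp
  have hs : 0 < Real.sinh x ^ 2 := lt_of_lt_of_le (by positivity) (sinh_sq_ge x)
  rw [div_pow, ← div_eq_mul_inv, div_le_div_iff₀ hs (by positivity)]
  exact sinh_sq_ge' x

/-- `1 / sinh x ^ 2 - 1 / x ^ 2`, the part of `1 / sinh ^ 2` that is regular at the origin. -/
noncomputable def cschReg (x : ℝ) : ℝ := (Real.sinh x ^ 2)⁻¹ - (x ^ 2)⁻¹

lemma cschReg_nonpos {x : ℝ} (hx : 0 < x) : cschReg x ≤ 0 :=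
  sub_nonpos.2 (inv_anti₀ (by positivity) (sinh_sq_ge x))

/-- `1 / x - coth x` is an antiderivative. Its junk value at `x = 0` is `0`, which happens to be the
continuous extension (see `continuousWithinAt_cothReg`). -/
lemma hasDerivAt_cothReg {x : ℝ} (hx : 0 < x) :
    HasDerivAt (fun x : ℝ => x⁻¹ - Real.cosh x / Real.sinh x) (cschReg x) x := by
  have hs : Real.sinh x ≠ 0 := (Real.sinh_pos_iff.2 hx).ne'
  have h := (hasDerivAt_inv hx.ne').sub
    ((Real.hasDerivAt_cosh x).div (Real.hasDerivAt_sinh x) hs)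
  refine h.congr_deriv ?_
  have h2 := Real.cosh_sq x
  rw [cschReg]
  field_simp
  linear_combination (x ^ 2) * h2

lemma continuousWithinAt_cothReg :
    ContinuousWithinAt (fun x : ℝ => x⁻¹ - Real.cosh x / Real.sinh x) (Set.Ici 0) 0 := by
  -- For `x > 0` one has `0 ≤ coth x - 1 / x ≤ (cosh x - 1) / x`, a difference quotient of `cosh`.
  have hd : Tendsto (fun x : ℝ => (Real.cosh x - 1) * x⁻¹) (𝓝[≠] 0) (𝓝 0) := by
    have := (Real.hasDerivAt_cosh 0).tendsto_slope
    simpa [slope_fun_def, mul_comm] using this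
  have hd2 : Tendsto (fun x : ℝ => (Real.cosh x - 1) * x⁻¹) (𝓝[>] 0) (𝓝 0) :=
    hd.mono_left (nhdsWithin_mono _ fun x hx => (Set.mem_Ioi.1 hx).ne')
  rw [← continuousWithinAt_Ioi_iff_Ici]
  have h0 : (0 : ℝ)⁻¹ - Real.cosh 0 / Real.sinh 0 = 0 := by simp
  rw [ContinuousWithinAt, h0]
  refine squeeze_zero_norm' ?_ hd2
  filter_upwards [self_mem_nhdsWithin] with x hx
  have hx : 0 < x := hx
  have hs : x ≤ Real.sinh x := Real.self_le_sinh_iff.2 hx.le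
  have hs0 : 0 < Real.sinh x := hx.trans_le hs
  have hc := Real.one_le_cosh x
  rw [Real.norm_eq_abs, abs_le, ← div_eq_mul_inv, ← one_div, div_sub_div _ _ hx.ne' hs0.ne',
    ← neg_div, div_le_div_iff₀ hx (by positivity), div_le_div_iff₀ (by positivity) hx]
  have k1 : 0 ≤ (Real.cosh x - 1) * (Real.sinh x - x) :=
    mul_nonneg (by linarith) (by linarith)
  have k2 : 0 ≤ (Real.cosh x - 1) * x := mul_nonneg (by linarith) hx.le
  have k4 : Real.sinh x ≤ x * Real.cosh x := by
    have hmono : MonotoneOn (fun y : ℝ => y * Real.cosh y - Real.sinh y) (Set.Ici 0) := by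
      refine monotoneOn_of_deriv_nonneg (convex_Ici 0) (by fun_prop) (by fun_prop) ?_
      intro y hy
      have hy : 0 < y := by simpa using hy
      have h := ((hasDerivAt_id y).mul (Real.hasDerivAt_cosh y)).sub (Real.hasDerivAt_sinh y)
      have e := h.deriv
      have := Real.sinh_pos_iff.2 hy
      have e2 : deriv (fun y : ℝ => y * Real.cosh y - Real.sinh y) y = y * Real.sinh y := by
        refine e.trans ?_
        simp
      rw [e2]; positivity
    have := hmono (Set.mem_Ici.2 le_rfl) (Set.mem_Ici.2 hx.le) hx.le
    simpa using this
  constructor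
  · nlinarith
  · have : (1 * Real.sinh x - x * Real.cosh x) * x ≤ 0 :=
      mul_nonpos_of_nonpos_of_nonneg (by linarith) hx.le
    have : 0 ≤ (Real.cosh x - 1) * (x * Real.sinh x) :=
      mul_nonneg (by linarith) (by positivity)
    linarith

lemma tendsto_cothReg :
    Tendsto (fun x : ℝ => x⁻¹ - Real.cosh x / Real.sinh x) atTop (𝓝 (-1)) := by
  have h1 : Tendsto (fun x : ℝ => Real.exp (-2 * x)) atTop (𝓝 0) := by
    refine Real.tendsto_exp_atBot.comp ?_
    exact tendsto_id.const_mul_atTop_of_neg (by norm_num)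
  have h2 : Tendsto (fun x : ℝ => x⁻¹ - (1 + Real.exp (-2 * x)) / (1 - Real.exp (-2 * x))) atTop
      (𝓝 (0 - (1 + 0) / (1 - 0))) :=
    tendsto_inv_atTop_zero.sub ((h1.const_add 1).div (h1.const_sub 1) (by norm_num))
  rw [show (0 : ℝ) - (1 + 0) / (1 - 0) = -1 by norm_num] at h2
  refine h2.congr' ?_
  filter_upwards [eventually_gt_atTop 0] with x hx
  congr 1
  have hlt : Real.exp (-2 * x) < 1 := by simpa using hx
  have e : Real.exp (-2 * x) * Real.exp x = Real.exp (-x) := by rw [← Real.exp_add]; ring_nf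
  have hs := (Real.sinh_pos_iff.2 hx).ne'
  rw [div_eq_div_iff (by linarith) hs, Real.sinh_eq, Real.cosh_eq]
  rw [← e]; ring

lemma integral_cschReg : ∫ x : ℝ, cschReg x = -2 := by
  have h := integral_Ioi_of_hasDerivAt_of_nonpos continuousWithinAt_cothReg
    (fun x hx => hasDerivAt_cothReg hx) (fun x hx => cschReg_nonpos hx) tendsto_cothReg
  have h2 := integral_comp_abs (f := cschReg)
  have e : (fun x : ℝ => cschReg |x|) = cschReg := by
    funext x
    rcases abs_choice x with h | h <;> simp [h, cschReg]
  rw [e, h] at h2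
  simpa using h2

/-- A function with nonzero Bochner integral is integrable. -/
lemma integrable_cschReg : Integrable cschReg :=
  Integrable.of_integral_ne_zero (by rw [integral_cschReg]; norm_num)

/-! ### Mittag-Leffler expansion -/

/-- The Mittag-Leffler expansion of `1 / sinh ^ 2` on the positive half-line, read off from the
expansion of `∑ 1 / (τ + n) ^ 2` in powers of `exp (2 π i τ)` at `τ = i x / π`. -/
lemma cschReg_eq_tsum_of_pos {x : ℝ} (hx : 0 < x) :
    (cschReg x : ℂ) = ∑' n : ℕ, pairTerm (Real.pi * ((n : ℂ) + 1)) x := by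
  have hpi : (Real.pi : ℂ) ≠ 0 := by exact_mod_cast Real.pi_ne_zero
  let τ : UpperHalfPlane := ⟨I * (x / Real.pi : ℝ), by simp; positivity⟩
  have hτ : (τ : ℂ) = I * (x / Real.pi : ℝ) := rfl
  have hq := EisensteinSeries.qExpansion_identity le_rfl τ
  have hexp : cexp (2 * Real.pi * I * τ) = (Real.exp (-2 * x) : ℝ) := by
    rw [hτ, Complex.ofReal_exp]; congr 1; push_cast; field_simp
    linear_combination (x : ℂ) * Complex.I_sq
  have hlt : Real.exp (-2 * x) < 1 := by simpa using hx
  have hgeo := tsum_coe_mul_geometric_of_norm_lt_one (𝕜 := ℂ)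
    (r := ((Real.exp (-2 * x) : ℝ) : ℂ)) (by
      rw [Complex.norm_real, Real.norm_eq_abs, abs_of_pos (Real.exp_pos _)]; exact hlt)
  rw [hexp] at hq
  simp only [pow_one] at hq
  rw [hgeo] at hq
  have hsum : Summable fun n : ℤ => 1 / ((τ : ℂ) + n) ^ (1 + 1) := by
    refine (EisensteinSeries.linear_right_summable (τ : ℂ) 1 (k := 2) le_rfl).congr fun n => ?_
    simp [zpow_ofNat]
  have hS := hsum.hasSum
  rw [hq] at hS
  have hS2 := (hasSum_nat_add_iff' 1).2 hS.nat_add_neg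
  have hS3 := hS2.mul_left (-((Real.pi : ℂ) ^ 2)⁻¹)
  have hx' : (x : ℂ) ≠ 0 := by exact_mod_cast hx.ne'
  have hterm : (fun n : ℕ => pairTerm (Real.pi * ((n : ℂ) + 1)) x) = fun n : ℕ =>
      -((Real.pi : ℂ) ^ 2)⁻¹ * (1 / ((τ : ℂ) + ((n + 1 : ℕ) : ℤ)) ^ (1 + 1) +
        1 / ((τ : ℂ) + ((-((n + 1 : ℕ) : ℤ) : ℤ) : ℂ)) ^ (1 + 1)) := by
    funext n
    have e1 : (τ : ℂ) + ((n + 1 : ℕ) : ℤ) = (Real.pi : ℂ)⁻¹ * (Real.pi * ((n : ℂ) + 1) + I * x) := by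
      rw [hτ]; push_cast; field_simp; ring
    have e2 : (τ : ℂ) + ((-((n + 1 : ℕ) : ℤ) : ℤ) : ℂ) =
        -((Real.pi : ℂ)⁻¹ * (Real.pi * ((n : ℂ) + 1) - I * x)) := by
      rw [hτ]; push_cast; field_simp; ring
    rw [e1, e2, pairTerm]
    simp only [one_div, inv_pow, mul_pow, neg_pow_two, mul_inv, inv_inv, one_add_one_eq_two]
    field_simp
    ring
  rw [hterm, hS3.tsum_eq]
  have hE : (1 : ℂ) - (Real.exp (-2 * x) : ℝ) ≠ 0 := by
    rw [← Complex.ofReal_one, ← Complex.ofReal_sub]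
    exact_mod_cast (sub_pos.2 hlt).ne'
  have hsinh : ((Real.sinh x ^ 2)⁻¹ : ℝ) =
      4 * Real.exp (-2 * x) / (1 - Real.exp (-2 * x)) ^ 2 := by
    have e : Real.exp (-2 * x) = Real.exp (-x) ^ 2 := by
      rw [← Real.exp_nat_mul]; ring_nf
    have e' : Real.exp x * Real.exp (-x) = 1 := by rw [← Real.exp_add]; simp
    have hs : Real.sinh x ≠ 0 := (Real.sinh_pos_iff.2 hx).ne'
    have e3 : 2 * Real.sinh x * Real.exp (-x) = 1 - Real.exp (-2 * x) := by
      rw [Real.sinh_eq, e]; linear_combination e'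
    have : (1 - Real.exp (-2 * x)) ^ 2 ≠ 0 := pow_ne_zero _ (sub_pos.2 hlt).ne'
    rw [eq_div_iff this, ← e3, e]
    field_simp
    ring
  rw [cschReg, hsinh]
  have hI := Complex.I_sq
  simp only [Finset.sum_range_one, hτ]
  push_cast at hE ⊢
  simp only [neg_zero, add_zero, Nat.factorial, mul_pow, hI]
  norm_num
  field_simp
  ring

lemma cschReg_eq_tsum {x : ℝ} (hx : x ≠ 0) :
    (cschReg x : ℂ) = ∑' n : ℕ, pairTerm (Real.pi * ((n : ℂ) + 1)) x := by
  rcases hx.lt_or_gt with h | h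
  · have := cschReg_eq_tsum_of_pos (neg_pos.2 h)
    have e : cschReg (-x) = cschReg x := by simp [cschReg]
    rw [e] at this
    rw [this]
    refine tsum_congr fun n => ?_
    simp only [pairTerm]
    push_cast
    simp only [mul_neg, sub_neg_eq_add, ← sub_eq_add_neg]
    ring
  · exact cschReg_eq_tsum_of_pos h

lemma re_pi_mul_pos (n : ℕ) : 0 < ((Real.pi : ℂ) * ((n : ℂ) + 1)).re := by
  have hre : ((Real.pi : ℂ) * ((n : ℂ) + 1)).re = Real.pi * (n + 1) := by simp
  rw [hre]; positivity

lemma norm_pairTerm_le (n : ℕ) (z : ℝ) :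
    ‖pairTerm (Real.pi * ((n : ℂ) + 1)) z‖ ≤ 2 * (((n : ℝ) + 1) ^ 2)⁻¹ := by
  have hre : ((Real.pi : ℂ) * ((n : ℂ) + 1)).re = Real.pi * (n + 1) := by simp
  have hpos := re_pi_mul_pos n
  have hle : ((Real.pi : ℂ) * ((n : ℂ) + 1)).re⁻¹ ≤ ((n : ℝ) + 1)⁻¹ := by
    rw [hre]
    refine inv_anti₀ (by positivity) ?_
    nlinarith [Real.pi_gt_three, (n.cast_nonneg : (0 : ℝ) ≤ n)]
  have h1 := (norm_inv_lin_le hpos z).trans hle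
  have h2 := (norm_inv_lin_le hpos (-z)).trans hle
  push_cast at h2
  rw [mul_neg, ← sub_eq_add_neg] at h2
  rw [pairTerm, norm_neg, ← inv_pow, two_mul]
  refine (norm_add_le _ _).trans ?_
  rw [norm_pow, norm_pow]
  gcongr

lemma summable_inv_succ_sq : Summable fun n : ℕ => (((n : ℝ) + 1) ^ 2)⁻¹ := by
  have := (summable_nat_add_iff 1).2 (Real.summable_nat_pow_inv.2 one_lt_two)
  simpa using this

lemma continuous_pairTerm {c : ℂ} (hc : 0 < c.re) : Continuous (pairTerm c) :=
  (((continuous_inv_lin' hc).pow 2).add ((continuous_inv_lin hc).pow 2)).neg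

/-- Termwise integration of the Mittag-Leffler expansion against `1 / (z ^ 2 + b ^ 2)`. -/
lemma hasSum_integral_cschReg {b : ℂ} (hb : 0 < b.re) :
    HasSum (fun n : ℕ => -(2 * Real.pi) / (b * (b + Real.pi * ((n : ℂ) + 1)) ^ 2))
      (∫ z : ℝ, (b + I * z)⁻¹ * (b - I * z)⁻¹ * (cschReg z : ℂ)) := by
  have hH := integrable_inv_pm hb hb
  have hint : ∀ n : ℕ, Integrable fun z : ℝ =>
      (b + I * z)⁻¹ * (b - I * z)⁻¹ * pairTerm (Real.pi * ((n : ℂ) + 1)) z := fun n =>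
    hH.mul_bdd (continuous_pairTerm (re_pi_mul_pos n)).aestronglyMeasurable
      (Eventually.of_forall (norm_pairTerm_le n))
  have hs : Summable fun n : ℕ => ∫ z : ℝ,
      ‖(b + I * z)⁻¹ * (b - I * z)⁻¹ * pairTerm (Real.pi * ((n : ℂ) + 1)) z‖ := by
    refine Summable.of_nonneg_of_le (fun n => integral_nonneg fun _ => norm_nonneg _)
      (fun n => ?_) (summable_inv_succ_sq.mul_left
        (2 * ∫ z : ℝ, ‖(b + I * z)⁻¹ * (b - I * z)⁻¹‖))
    calc _ ≤ ∫ z : ℝ, ‖(b + I * z)⁻¹ * (b - I * z)⁻¹‖ * (2 * (((n : ℝ) + 1) ^ 2)⁻¹) := by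
          refine integral_mono (hint n).norm (hH.norm.mul_const _) fun z => ?_
          simp only
          rw [norm_mul]
          exact mul_le_mul_of_nonneg_left (norm_pairTerm_le n z) (norm_nonneg _)
      _ = _ := by rw [integral_mul_const]; ring
  have h := hasSum_integral_of_summable_integral_norm hint hs
  have e1 : (fun n : ℕ => ∫ z : ℝ,
      (b + I * z)⁻¹ * (b - I * z)⁻¹ * pairTerm (Real.pi * ((n : ℂ) + 1)) z) =
      fun n : ℕ => -(2 * Real.pi) / (b * (b + Real.pi * ((n : ℂ) + 1)) ^ 2) :=
    funext fun n => integral_pairTerm hb (re_pi_mul_pos n)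
  have e2 : ∫ z : ℝ, ∑' n : ℕ,
      (b + I * z)⁻¹ * (b - I * z)⁻¹ * pairTerm (Real.pi * ((n : ℂ) + 1)) z =
      ∫ z : ℝ, (b + I * z)⁻¹ * (b - I * z)⁻¹ * (cschReg z : ℂ) := by
    refine integral_congr_ae ?_
    filter_upwards [Measure.ae_ne volume (0 : ℝ)] with z hz
    rw [tsum_mul_left, cschReg_eq_tsum hz]
  rwa [e1, e2] at h

/-! ### Assembling the integral -/

lemma integrable_sq_div_sinh : Integrable fun z : ℝ => (((z / Real.sinh z) ^ 2 : ℝ) : ℂ) := by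
  refine Integrable.ofReal (Integrable.mono' (integrable_inv_one_add_sq.const_mul 4)
    ((measurable_id.div Real.measurable_sinh).pow_const 2).aestronglyMeasurable
    (Eventually.of_forall fun z => ?_))
  rw [Real.norm_eq_abs, abs_of_nonneg (sq_nonneg _)]
  exact sq_div_sinh_le z

lemma integral_even_part {b : ℂ} (hb : 0 < b.re) :
    ∫ z : ℝ, (b + I * z)⁻¹ * (b - I * z)⁻¹ * (((z / Real.sinh z) ^ 2 : ℝ) : ℂ) =
      Real.pi / b - 2 -
        b ^ 2 * ∑' n : ℕ, -(2 * Real.pi) / (b * (b + Real.pi * ((n : ℂ) + 1)) ^ 2) := by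
  have hb0 : b ≠ 0 := by rintro rfl; simp at hb
  have hg : Integrable fun z : ℝ => (cschReg z : ℂ) := integrable_cschReg.ofReal
  have hgi : ∫ z : ℝ, (cschReg z : ℂ) = -2 := by
    rw [integral_complex_ofReal, integral_cschReg]; norm_num
  have hH := integrable_inv_pm hb hb
  have hHg : Integrable fun z : ℝ => (b + I * z)⁻¹ * (b - I * z)⁻¹ * (cschReg z : ℂ) := by
    have h := (integrable_mul_inv' hg hb).mul_bdd (c := b.re⁻¹)
      (continuous_inv_lin hb).aestronglyMeasurable (Eventually.of_forall (norm_inv_lin_le hb))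
    refine h.congr (Eventually.of_forall fun z => ?_)
    simp only
    ring
  rw [(hasSum_integral_cschReg hb).tsum_eq]
  have e : ∫ z : ℝ, (b + I * z)⁻¹ * (b - I * z)⁻¹ * (((z / Real.sinh z) ^ 2 : ℝ) : ℂ) =
      ∫ z : ℝ, ((b + I * z)⁻¹ * (b - I * z)⁻¹ + (cschReg z : ℂ) -
        b ^ 2 * ((b + I * z)⁻¹ * (b - I * z)⁻¹ * (cschReg z : ℂ))) := by
    refine integral_congr_ae ?_
    filter_upwards [Measure.ae_ne volume (0 : ℝ)] with z hz
    have h1 := lin_ne_zero hb z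
    have h2 := lin_ne_zero' hb z
    have hz' : (z : ℂ) ≠ 0 := by exact_mod_cast hz
    have e1 : (((z / Real.sinh z) ^ 2 : ℝ) : ℂ) = 1 + z ^ 2 * (cschReg z : ℂ) := by
      have : (z / Real.sinh z) ^ 2 = 1 + z ^ 2 * cschReg z := by
        rw [cschReg, div_pow, mul_sub, mul_inv_cancel₀ (pow_ne_zero 2 hz)]; ring
      rw [this]; push_cast; ring
    rw [e1]
    field_simp
    linear_combination ((z : ℂ) ^ 2 * cschReg z) * Complex.I_sq
  have hHadd : Integrable fun z : ℝ => (b + I * z)⁻¹ * (b - I * z)⁻¹ + (cschReg z : ℂ) :=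
    hH.add hg
  rw [e, integral_sub hHadd (hHg.const_mul _), integral_add hH hg, integral_const_mul, hgi,
    integral_inv_pm hb hb]
  field_simp
  ring

/-- For `w ∈ ℂ` with `Re w < 0`,
`∫_{−∞}^{∞} (z/sinh z)²·dz/(z − πi·w) = πi·(1 − 2w − 2w²·Σ_{n≥0} 1/(n − w)²)`,
the integrand being extended continuously at `z = 0` by the value `1/(−πi·w)`. -/
theorem stmt_17 (w : ℂ) (hw : w.re < 0)
    (f : ℝ → ℂ)
    (hf : f = fun z : ℝ => if z = 0 then (-(Real.pi * I * w))⁻¹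
      else ((z : ℂ) / Complex.sinh z) ^ 2 * ((z : ℂ) - Real.pi * I * w)⁻¹) :
    Integrable f ∧
    ∫ z : ℝ, f z =
      Real.pi * I * (1 - 2 * w - 2 * w ^ 2 * ∑' n : ℕ, ((n : ℂ) - w)⁻¹ ^ 2) := by
  have hpi : (Real.pi : ℂ) ≠ 0 := by exact_mod_cast Real.pi_ne_zero
  have hw0 : w ≠ 0 := by rintro rfl; simp at hw
  obtain ⟨b, hbw⟩ : ∃ b : ℂ, b = -(Real.pi * w) := ⟨_, rfl⟩
  have hb : 0 < b.re := by
    have : b.re = Real.pi * (-w.re) := by rw [hbw]; simp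
    rw [this]; exact mul_pos Real.pi_pos (by linarith)
  have hI := Complex.I_sq
  -- The value at the single point `z = 0` is irrelevant; elsewhere `z - π i w = i (b - i z)`.
  set h : ℝ → ℂ := fun z => (-I) * ((((z / Real.sinh z) ^ 2 : ℝ) : ℂ) * (b - I * z)⁻¹) with hh
  have hint : Integrable h := (integrable_mul_inv' integrable_sq_div_sinh hb).const_mul _
  have hfh : f =ᵐ[volume] h := by
    filter_upwards [Measure.ae_ne volume (0 : ℝ)] with z hz
    have h1 := lin_ne_zero' hb z
    have e : (z : ℂ) - Real.pi * I * w = I * (b - I * z) := by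
      rw [hbw]; linear_combination (z : ℂ) * hI
    simp only [hf, hh, if_neg hz, e]
    rw [mul_inv, Complex.inv_I]
    push_cast
    ring
  refine ⟨hint.congr hfh.symm, ?_⟩
  have heven : ∫ z, h z = (-I * b) *
      ∫ z : ℝ, (b + I * z)⁻¹ * (b - I * z)⁻¹ * (((z / Real.sinh z) ^ 2 : ℝ) : ℂ) := by
    have h2 : ∫ z, (h z + h (-z)) = 2 * ∫ z, h z := by
      rw [integral_add hint hint.comp_neg, integral_neg_eq_self h volume, two_mul]
    have h3 : (fun z => h z + h (-z)) = fun z : ℝ => (2 * (-I * b)) *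
        ((b + I * z)⁻¹ * (b - I * z)⁻¹ * (((z / Real.sinh z) ^ 2 : ℝ) : ℂ)) := by
      funext z
      have k1 := lin_ne_zero hb z
      have k2 := lin_ne_zero' hb z
      simp only [hh, Real.sinh_neg, neg_div_neg_eq]
      push_cast
      simp only [mul_neg, sub_neg_eq_add]
      field_simp
      ring
    rw [h3, integral_const_mul] at h2
    linear_combination (-1 / 2 : ℂ) * h2
  have hne : ∀ n : ℕ, (n : ℂ) + 1 - w ≠ 0 := fun n hn => by
    have := congrArg Complex.re hn
    simp at this
    have : (0 : ℝ) ≤ n := n.cast_nonneg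
    linarith
  have hterm : ∀ n : ℕ, -(2 * Real.pi) / (b * (b + Real.pi * ((n : ℂ) + 1)) ^ 2) =
      2 / (Real.pi ^ 2 * w) * (((n + 1 : ℕ) : ℂ) - w)⁻¹ ^ 2 := fun n => by
    have h1 := hne n
    have e : b + Real.pi * ((n : ℂ) + 1) = Real.pi * ((n : ℂ) + 1 - w) := by rw [hbw]; ring
    rw [e, hbw]
    push_cast
    field_simp
  have hsum : Summable fun n : ℕ => (((n + 1 : ℕ) : ℂ) - w)⁻¹ ^ 2 := by
    have h1 := (hasSum_integral_cschReg hb).summable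
    simp only [hterm] at h1
    exact (summable_mul_left_iff (div_ne_zero two_ne_zero (mul_ne_zero (pow_ne_zero 2 hpi) hw0))).1 h1
  have hsum' : Summable fun n : ℕ => ((n : ℂ) - w)⁻¹ ^ 2 := (summable_nat_add_iff 1).1 hsum
  rw [integral_congr_ae hfh, heven, integral_even_part hb]
  simp only [hterm]
  rw [tsum_mul_left, hsum'.tsum_eq_zero_add, hbw]
  push_cast
  field_simp
  ring
end

section
/- Let a ∈ ℂ with −2√3 < Re a < 0 and set w = a/(2√3). Then the double integral ∫_{−∞}^{∞} ∫_{−∞}^{t} (3/cosh²(√3·t))·(3/cosh²(√3·s))·e^{a(t−s)} ds dt converges and equals 6·( −1 + 2w + 2w²·Σ_{n=0}^{∞} 1/(n − w)² ), where Σ_{n=0}^{∞} 1/(n − w)² = ψ'(−w) is the trigamma function at −w. -/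
open MeasureTheory
open Set Filter Topology

/-!
Since `t - s > 0` and `Re a < 0`, the exponential has modulus at most `1`, so the integrand is
dominated by a product of two integrable functions. The shear `t = u + s` and the rescaling
`c = √3 u` reduce the double integral to `12 ∫₀^∞ e^{2wc} K(c) dc`, where `4 K(c)` is the
autocorrelation of `sech²`, namely `K(c) = (c coth c - 1) / sinh² c`
(`integral_sech_sq_mul_sech_sq`).

With `L(c) = c coth c` one has `L'' = 2 K`. Two integrations by parts, combined into the single
antiderivative `e^{2wc} (L' - 2 w L)` with boundary values `L(0⁺) = 1` and `L'(0⁺) = 0`, give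
`∫ e^{2wc} K = w + 2 w² ∫ e^{2wc} L` (`integral_cexp_mul_autocorrelation`). Finally
`c coth c = 2 ∑_{n ≥ 0} c e^{-2nc} - c` can be integrated termwise against `e^{2wc}`, and each term
contributes a multiple of `1 / (n - w)²` (`integral_cexp_mul_coth`).
-/

/-! ### Hyperbolic functions and the autocorrelation of `sech²` -/

/-- Comparison with `1 / (1 + x²)`, using `cosh² = 1 + sinh²` and `|x| ≤ |sinh x|`. -/
lemma integrable_sech_sq : Integrable fun x : ℝ => (Real.cosh x ^ 2)⁻¹ := by
  refine integrable_inv_one_add_sq.mono' ?_ (ae_of_all _ fun x => ?_)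
  · exact ((Real.continuous_cosh.pow 2).inv₀ fun x =>
      (pow_pos (Real.cosh_pos x) 2).ne').aestronglyMeasurable
  · rw [Real.norm_of_nonneg (by positivity)]
    have h : x ^ 2 ≤ Real.sinh x ^ 2 := by
      rw [sq_le_sq]
      rcases le_total 0 x with hx | hx
      · rw [abs_of_nonneg hx, abs_of_nonneg (Real.sinh_nonneg_iff.2 hx)]
        exact Real.self_le_sinh_iff.2 hx
      · rw [abs_of_nonpos hx, abs_of_nonpos (Real.sinh_nonpos_iff.2 hx)]
        exact neg_le_neg (Real.sinh_le_self_iff.2 hx)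
    have := Real.cosh_sq x
    gcongr
    linarith

lemma hasDerivAt_tanh (x : ℝ) : HasDerivAt Real.tanh ((Real.cosh x ^ 2)⁻¹) x := by
  have h := (Real.hasDerivAt_sinh x).div (Real.hasDerivAt_cosh x) (Real.cosh_pos x).ne'
  have e : Real.tanh = Real.sinh / Real.cosh := by
    ext y; exact Real.tanh_eq_sinh_div_cosh y
  rw [e]
  convert! h using 1
  have h1 := Real.cosh_sq x
  have h2 := (Real.cosh_pos x).ne'
  field_simp
  linarith

lemma tendsto_tanh_atTop : Tendsto Real.tanh atTop (𝓝 1) := by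
  have e : ∀ x : ℝ, 1 - 2 * (Real.exp (2 * x) + 1)⁻¹ = Real.tanh x := fun x => by
    rw [Real.tanh_eq, Real.exp_neg, two_mul x, Real.exp_add]
    have := Real.exp_pos x
    field_simp
    ring
  have h : Tendsto (fun x : ℝ => Real.exp (2 * x) + 1) atTop atTop :=
    tendsto_atTop_add_const_right _ _
      (Real.tendsto_exp_atTop.comp (tendsto_id.const_mul_atTop two_pos))
  have := (h.inv_tendsto_atTop.const_mul 2).const_sub 1
  simpa [e] using this.congr e

lemma tendsto_tanh_atBot : Tendsto Real.tanh atBot (𝓝 (-1)) := by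
  have := (tendsto_tanh_atTop.comp tendsto_neg_atBot_atTop).neg
  refine this.congr fun x => ?_
  simp

/-- The autocorrelation of `sech²`. An antiderivative of the integrand is
`(-tanh (x + c) - tanh x + 2 coth c · (log cosh (x + c) - log cosh x)) / sinh² c`, and
`cosh (x + c) / cosh x = cosh c + sinh c tanh x` tends to `e^{±c}` at `±∞`. -/
lemma integral_sech_sq_mul_sech_sq {c : ℝ} (hc : 0 < c) :
    ∫ x : ℝ, (Real.cosh (x + c) ^ 2)⁻¹ * (Real.cosh x ^ 2)⁻¹ =
      4 * (c * Real.cosh c / Real.sinh c - 1) / Real.sinh c ^ 2 := by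
  have hs : 0 < Real.sinh c := Real.sinh_pos_iff.2 hc
  set B : ℝ → ℝ := fun x => (-Real.tanh (x + c) - Real.tanh x + 2 * (Real.cosh c / Real.sinh c) *
      (Real.log (Real.cosh (x + c)) - Real.log (Real.cosh x))) / Real.sinh c ^ 2 with hB
  have hd : ∀ x, HasDerivAt B ((Real.cosh (x + c) ^ 2)⁻¹ * (Real.cosh x ^ 2)⁻¹) x := by
    intro x
    have p1 := Real.cosh_pos (x + c)
    have p2 := Real.cosh_pos x
    have h1 := (hasDerivAt_tanh (x + c)).comp_add_const x c
    have h2 := ((Real.hasDerivAt_cosh (x + c)).log p1.ne').comp_add_const x c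
    have h3 := (Real.hasDerivAt_cosh x).log p2.ne'
    have h := (((h1.neg.sub (hasDerivAt_tanh x)).add
      ((h2.sub h3).const_mul (2 * (Real.cosh c / Real.sinh c)))).div_const (Real.sinh c ^ 2))
    convert! h using 1
    -- `c` is eliminated through the addition formulas for `c = (x + c) - x`.
    have e1 : Real.sinh c = Real.sinh (x + c) * Real.cosh x - Real.cosh (x + c) * Real.sinh x := by
      rw [← Real.sinh_sub]; ring_nf
    have e2 : Real.cosh c = Real.cosh (x + c) * Real.cosh x - Real.sinh (x + c) * Real.sinh x := by
      rw [← Real.cosh_sub]; ring_nf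
    have q1 := Real.cosh_sq (x + c)
    have q2 := Real.cosh_sq x
    have e3 : Real.sinh (x + c) / Real.cosh (x + c) - Real.sinh x / Real.cosh x =
        Real.sinh c / (Real.cosh (x + c) * Real.cosh x) := by
      rw [e1]; field_simp
    rw [e3]
    field_simp
    rw [e1, e2]
    generalize Real.sinh (x + c) = s1 at *
    generalize Real.cosh (x + c) = c1 at *
    generalize Real.sinh x = s2 at *
    generalize Real.cosh x = c2 at *
    linear_combination (-c2 ^ 2) * q1 - c1 ^ 2 * q2
  have hlog : ∀ x, Real.log (Real.cosh (x + c)) - Real.log (Real.cosh x) =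
      Real.log (Real.cosh c + Real.sinh c * Real.tanh x) := by
    intro x
    rw [← Real.log_div (Real.cosh_pos _).ne' (Real.cosh_pos _).ne', Real.tanh_eq_sinh_div_cosh,
      Real.cosh_add]
    have := Real.cosh_pos x
    congr 1
    field_simp
  have hint : Integrable fun x => (Real.cosh (x + c) ^ 2)⁻¹ * (Real.cosh x ^ 2)⁻¹ := by
    refine integrable_sech_sq.mono' ?_ (ae_of_all _ fun x => ?_)
    · refine Continuous.aestronglyMeasurable ?_
      exact ((((Real.continuous_cosh.comp (continuous_id.add continuous_const)).pow 2).inv₀ fun x =>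
        (pow_pos (Real.cosh_pos _) 2).ne').mul ((Real.continuous_cosh.pow 2).inv₀ fun x =>
        (pow_pos (Real.cosh_pos x) 2).ne'))
    · rw [Real.norm_of_nonneg (by positivity)]
      refine mul_le_of_le_one_left (by positivity) (inv_le_one_of_one_le₀ ?_)
      exact one_le_pow₀ (Real.one_le_cosh _)
  have htop : Tendsto B atTop (𝓝 ((-1 - 1 + 2 * (Real.cosh c / Real.sinh c) * c)
      / Real.sinh c ^ 2)) := by
    simp only [hB, hlog]
    have hl : Tendsto (fun x => Real.log (Real.cosh c + Real.sinh c * Real.tanh x)) atTop (𝓝 c) := by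
      have h := ((tendsto_tanh_atTop.const_mul (Real.sinh c)).const_add (Real.cosh c))
      rw [mul_one, Real.cosh_add_sinh] at h
      simpa using h.log (Real.exp_pos c).ne'
    exact ((((tendsto_tanh_atTop.comp (tendsto_atTop_add_const_right _ c tendsto_id)).neg.sub
      tendsto_tanh_atTop)).add (hl.const_mul _)).div_const _
  have hbot : Tendsto B atBot (𝓝 ((-(-1) - (-1) + 2 * (Real.cosh c / Real.sinh c) * (-c))
      / Real.sinh c ^ 2)) := by
    simp only [hB, hlog]
    have hl : Tendsto (fun x => Real.log (Real.cosh c + Real.sinh c * Real.tanh x)) atBot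
        (𝓝 (-c)) := by
      have h := ((tendsto_tanh_atBot.const_mul (Real.sinh c)).const_add (Real.cosh c))
      rw [mul_neg_one, ← sub_eq_add_neg, Real.cosh_sub_sinh] at h
      simpa using h.log (Real.exp_pos (-c)).ne'
    exact ((((tendsto_tanh_atBot.comp (tendsto_atBot_add_const_right _ c tendsto_id)).neg.sub
      tendsto_tanh_atBot)).add (hl.const_mul _)).div_const _
  rw [integral_of_hasDerivAt_of_tendsto hd hint hbot htop]
  field_simp
  ring

lemma sinh_le_mul_cosh {c : ℝ} (hc : 0 ≤ c) : Real.sinh c ≤ c * Real.cosh c := by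
  have hd : ∀ x : ℝ, HasDerivAt (fun x => x * Real.cosh x - Real.sinh x)
      (x * Real.sinh x) x := fun x => by
    convert! ((hasDerivAt_id x).mul (Real.hasDerivAt_cosh x)).sub (Real.hasDerivAt_sinh x) using 1
    simp
  have hm : MonotoneOn (fun x : ℝ => x * Real.cosh x - Real.sinh x) (Ici 0) := by
    refine monotoneOn_of_deriv_nonneg (convex_Ici 0)
      (fun x _ => (hd x).continuousAt.continuousWithinAt)
      (fun x _ => (hd x).differentiableAt.differentiableWithinAt) fun x hx => ?_
    rw [interior_Ici] at hx
    rw [(hd x).deriv]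
    exact mul_nonneg hx.out.le (Real.sinh_nonneg_iff.2 hx.out.le)
  have := hm (self_mem_Ici) hc hc
  simp at this
  linarith

lemma one_le_mul_coth {c : ℝ} (hc : 0 < c) : 1 ≤ c * Real.cosh c / Real.sinh c := by
  rw [one_le_div (Real.sinh_pos_iff.2 hc)]
  exact sinh_le_mul_cosh hc.le

lemma mul_coth_le {c : ℝ} (hc : 0 < c) : c * Real.cosh c / Real.sinh c ≤ 1 + c := by
  rw [div_le_iff₀ (Real.sinh_pos_iff.2 hc)]
  have h1 := Real.self_le_sinh_iff.2 hc.le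
  have h2 := Real.cosh_sub_sinh c
  have h3 : Real.exp (-c) ≤ 1 := Real.exp_le_one_iff.2 (by linarith)
  have : c * (Real.cosh c - Real.sinh c) ≤ c := by rw [h2]; nlinarith
  linarith

/-- The quantity `coth c - c / sinh² c` is the derivative of `c coth c`. -/
lemma deriv_mul_coth_nonneg {c : ℝ} (hc : 0 < c) :
    0 ≤ Real.cosh c / Real.sinh c - c / Real.sinh c ^ 2 := by
  have hs : 0 < Real.sinh c := Real.sinh_pos_iff.2 hc
  have h1 := Real.self_le_sinh_iff.2 hc.le
  have h2 := Real.one_le_cosh c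
  have : Real.cosh c / Real.sinh c - c / Real.sinh c ^ 2 =
    (Real.cosh c * Real.sinh c - c) / Real.sinh c ^ 2 := by field_simp
  rw [this]
  exact div_nonneg (by nlinarith) (by positivity)

/-- Upper bound for the derivative of `c coth c`, forcing it to vanish at `0⁺` and to stay bounded
at infinity. -/
lemma deriv_mul_coth_le {c : ℝ} (hc : 0 < c) :
    Real.cosh c / Real.sinh c - c / Real.sinh c ^ 2 ≤ Real.tanh c := by
  have hs : 0 < Real.sinh c := Real.sinh_pos_iff.2 hc
  have hp := Real.cosh_pos c
  have h1 := sinh_le_mul_cosh hc.le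
  have q := Real.cosh_sq c
  rw [Real.tanh_eq_sinh_div_cosh, ← sub_nonneg]
  have : Real.sinh c / Real.cosh c - (Real.cosh c / Real.sinh c - c / Real.sinh c ^ 2) =
    (c * Real.cosh c - Real.sinh c) / (Real.cosh c * Real.sinh c ^ 2) := by
    field_simp
    linear_combination (-Real.sinh c) * q
  rw [this]
  exact div_nonneg (by linarith) (by positivity)

/-! ### Laplace integrals of `c` and `c coth c` -/

lemma integrableOn_mul_exp {r : ℝ} (hr : 0 < r) :
    IntegrableOn (fun c : ℝ => c * Real.exp (-r * c)) (Ioi 0) := by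
  have := integrableOn_rpow_mul_exp_neg_mul_rpow (p := 1) (s := 1) (by norm_num) one_pos hr
  simpa using this

lemma integrableOn_one_add_mul_exp {r : ℝ} (hr : 0 < r) :
    IntegrableOn (fun c : ℝ => (1 + c) * Real.exp (-r * c)) (Ioi 0) := by
  have h := integrableOn_rpow_mul_exp_neg_mul_rpow (p := 1) (s := 0) (by norm_num) one_pos hr
  have := h.add (integrableOn_mul_exp hr)
  refine this.congr (ae_of_all _ fun c => ?_)
  simp
  ring

lemma tendsto_one_add_mul_exp {r : ℝ} (hr : 0 < r) :
    Tendsto (fun c : ℝ => (1 + c) * Real.exp (-r * c)) atTop (𝓝 0) := by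
  have h0 := tendsto_rpow_mul_exp_neg_mul_atTop_nhds_zero 0 r hr
  have h1 := tendsto_rpow_mul_exp_neg_mul_atTop_nhds_zero 1 r hr
  have := h0.add h1
  simp only [Real.rpow_zero, Real.rpow_one, add_zero] at this
  refine this.congr fun c => ?_
  ring

lemma norm_cexp_mul_ofReal (z : ℂ) (c : ℝ) : ‖Complex.exp (z * c)‖ = Real.exp (-(-z.re) * c) := by
  simp [Complex.norm_exp]

lemma integrableOn_mul_cexp {z : ℂ} (hz : z.re < 0) :
    IntegrableOn (fun c : ℝ => (c : ℂ) * Complex.exp (z * c)) (Ioi 0) := by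
  refine (integrableOn_mul_exp (neg_pos.2 hz)).mono' (by fun_prop) ?_
  filter_upwards [ae_restrict_mem measurableSet_Ioi] with c hc
  rw [norm_mul, norm_cexp_mul_ofReal, Complex.norm_real, Real.norm_of_nonneg (le_of_lt hc)]

lemma integral_mul_cexp {z : ℂ} (hz : z.re < 0) :
    ∫ c in Ioi (0 : ℝ), (c : ℂ) * Complex.exp (z * c) = (z ^ 2)⁻¹ := by
  have hz0 : z ≠ 0 := by rintro rfl; simp at hz
  have hd : ∀ c ∈ Ici (0 : ℝ), HasDerivAt (fun c : ℝ => ((c : ℂ) / z - (z ^ 2)⁻¹) *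
      Complex.exp (z * c)) ((c : ℂ) * Complex.exp (z * c)) c := by
    intro c _
    have h1 : HasDerivAt (fun c : ℝ => (c : ℂ)) 1 c := Complex.ofRealCLM.hasDerivAt
    have h := ((h1.div_const z).sub_const ((z ^ 2)⁻¹)).mul (h1.const_mul z).cexp
    convert! h using 1
    field_simp
    ring
  have hlim : Tendsto (fun c : ℝ => ((c : ℂ) / z - (z ^ 2)⁻¹) * Complex.exp (z * c)) atTop
      (𝓝 0) := by
    have h := (tendsto_one_add_mul_exp (neg_pos.2 hz)).const_mul (‖z‖⁻¹ + ‖(z ^ 2)⁻¹‖)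
    rw [mul_zero] at h
    refine squeeze_zero_norm' ?_ h
    filter_upwards [eventually_ge_atTop 0] with c hc
    rw [norm_mul, norm_cexp_mul_ofReal, ← mul_assoc]
    gcongr
    refine (norm_sub_le _ _).trans ?_
    rw [norm_div, Complex.norm_real, Real.norm_of_nonneg hc, div_eq_inv_mul]
    have : 0 ≤ ‖z‖⁻¹ := by positivity
    have : 0 ≤ ‖(z ^ 2)⁻¹‖ := norm_nonneg _
    nlinarith
  rw [integral_Ioi_of_hasDerivAt_of_tendsto' hd (integrableOn_mul_cexp hz) hlim]
  simp

lemma integral_mul_exp {r : ℝ} (hr : 0 < r) :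
    ∫ c in Ioi (0 : ℝ), c * Real.exp (-r * c) = (r ^ 2)⁻¹ := by
  have h := integral_mul_cexp (z := ((-r : ℝ) : ℂ)) (by simpa using hr)
  have e : ∀ c : ℝ, (c : ℂ) * Complex.exp (((-r : ℝ) : ℂ) * c) =
      ((c * Real.exp (-r * c) : ℝ) : ℂ) := fun c => by push_cast; rfl
  simp only [e] at h
  rw [integral_complex_ofReal] at h
  have h' : (((∫ c in Ioi (0 : ℝ), c * Real.exp (-r * c)) : ℝ) : ℂ) = (((r ^ 2)⁻¹ : ℝ) : ℂ) := by
    rw [h]; push_cast; ring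
  exact_mod_cast h'

lemma mul_coth_eq {c : ℝ} (hc : 0 < c) :
    c * Real.cosh c / Real.sinh c = 2 * c * (1 - Real.exp (-2 * c))⁻¹ - c := by
  have hs : 0 < Real.sinh c := Real.sinh_pos_iff.2 hc
  have e : 1 - Real.exp (-2 * c) = 2 * Real.sinh c * Real.exp (-c) := by
    rw [show -2 * c = -c + -c by ring, Real.exp_add, Real.sinh_eq]
    have : Real.exp c * Real.exp (-c) = 1 := by rw [← Real.exp_add]; simp
    linear_combination -this
  have hp := Real.exp_pos (-c)
  have h4 : Real.exp (-c) * Real.exp c = 1 := by rw [← Real.exp_add]; simp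
  have h5 := Real.cosh_add_sinh c
  rw [e]
  field_simp
  linear_combination Real.exp (-c) * h5 + h4

lemma integrableOn_cexp_mul_coth {w : ℂ} (hw : w.re < 0) :
    IntegrableOn (fun c : ℝ => Complex.exp (2 * w * c) *
      ((c * Real.cosh c / Real.sinh c : ℝ) : ℂ)) (Ioi 0) := by
  have hz : (2 * w).re < 0 := by simp; linarith
  refine (integrableOn_one_add_mul_exp (neg_pos.2 hz)).mono' ?_ ?_
  · refine Measurable.aestronglyMeasurable ?_
    have := Real.measurable_cosh
    have := Real.measurable_sinh
    fun_prop
  filter_upwards [ae_restrict_mem measurableSet_Ioi] with c hc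
  rw [norm_mul, norm_cexp_mul_ofReal, Complex.norm_real, mul_comm,
    Real.norm_of_nonneg (zero_le_one.trans (one_le_mul_coth hc))]
  gcongr
  exact mul_coth_le hc

/-- Termwise integration of `c coth c = 2 ∑_{n ≥ 0} c e^{-2nc} - c` against `e^{2wc}`. -/
lemma integral_cexp_mul_coth {w : ℂ} (hw : w.re < 0) :
    ∫ c in Ioi (0 : ℝ), Complex.exp (2 * w * c) * ((c * Real.cosh c / Real.sinh c : ℝ) : ℂ) =
      2⁻¹ * (∑' n : ℕ, (((n : ℂ) - w) ^ 2)⁻¹) - (4 * w ^ 2)⁻¹ := by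
  have hz : (2 * w).re < 0 := by simp; linarith
  set F : ℕ → ℝ → ℂ := fun n c => (c : ℂ) * Complex.exp (2 * (w - n) * c) with hF
  have hre : ∀ n : ℕ, (2 * (w - n)).re < 0 := fun n => by
    have : (0 : ℝ) ≤ n := n.cast_nonneg
    simp
    linarith
  have hFint : ∀ n, Integrable (F n) (volume.restrict (Ioi 0)) :=
    fun n => integrableOn_mul_cexp (hre n)
  have hnorm : ∀ n, ∫ c in Ioi (0 : ℝ), ‖F n c‖ = ((2 * (n - w.re)) ^ 2)⁻¹ := by
    intro n
    rw [show 2 * (n - w.re) = -(2 * (w - n)).re by simp; ring,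
      ← integral_mul_exp (neg_pos.2 (hre n))]
    refine setIntegral_congr_fun measurableSet_Ioi fun c hc => ?_
    simp only [hF]
    rw [norm_mul, norm_cexp_mul_ofReal, Complex.norm_real, Real.norm_of_nonneg (le_of_lt hc)]
  have hsum : Summable fun n => ∫ c in Ioi (0 : ℝ), ‖F n c‖ := by
    simp only [hnorm]
    have h := ((Real.summable_one_div_nat_add_rpow (-w.re) 2).2 (by norm_num)).mul_left 4⁻¹
    refine h.congr fun n => ?_
    rw [Real.rpow_two, sq_abs, mul_pow, mul_inv, ← sub_eq_add_neg]
    norm_num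
  have hS := hasSum_integral_of_summable_integral_norm hFint hsum
  have hterm : ∀ n : ℕ, ∫ c in Ioi (0 : ℝ), F n c = 4⁻¹ * (((n : ℂ) - w) ^ 2)⁻¹ := by
    intro n
    rw [integral_mul_cexp (hre n), ← mul_inv]
    congr 1
    ring
  simp only [hterm] at hS
  have hpt : ∀ c ∈ Ioi (0 : ℝ),
      Complex.exp (2 * w * c) * ((c * Real.cosh c / Real.sinh c : ℝ) : ℂ) =
      2 * (∑' n, F n c) - (c : ℂ) * Complex.exp (2 * w * c) := by
    intro c hc
    have hq : ‖Complex.exp (((-2 * c : ℝ) : ℂ))‖ < 1 := by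
      rw [Complex.norm_exp]
      simpa using hc
    have hg := (hasSum_geometric_of_norm_lt_one hq).mul_left ((c : ℂ) * Complex.exp (2 * w * c))
    have e : ∀ n, F n c = (c : ℂ) * Complex.exp (2 * w * c) *
        Complex.exp (((-2 * c : ℝ) : ℂ)) ^ n := fun n => by
      rw [← Complex.exp_nat_mul, mul_assoc, ← Complex.exp_add]
      simp only [hF]
      congr 2
      push_cast
      ring
    simp only [e]
    rw [hg.tsum_eq, mul_coth_eq hc]
    push_cast
    ring
  have hTint : IntegrableOn (fun c : ℝ => 2 * ∑' n, F n c) (Ioi 0) := by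
    have := (integrableOn_cexp_mul_coth hw).add (integrableOn_mul_cexp hz)
    refine this.congr ?_
    filter_upwards [ae_restrict_mem measurableSet_Ioi] with c hc
    simp only [Pi.add_apply]
    rw [hpt c hc]
    ring
  rw [setIntegral_congr_fun measurableSet_Ioi hpt, integral_sub hTint (integrableOn_mul_cexp hz),
    integral_const_mul, ← hS.tsum_eq, tsum_mul_left, integral_mul_cexp hz]
  rw [mul_pow]
  norm_num
  ring

/-- Two integrations by parts, based on `(c coth c)'' = 2 (c coth c - 1) / sinh² c`. Integrability
of the left-hand integrand is assumed here; it comes for free from Fubini's theorem. -/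
lemma integral_cexp_mul_autocorrelation {w : ℂ} (hw : w.re < 0)
    (hint : IntegrableOn (fun c : ℝ => Complex.exp (2 * w * c) *
      (((c * Real.cosh c / Real.sinh c - 1) / Real.sinh c ^ 2 : ℝ) : ℂ)) (Ioi 0)) :
    ∫ c in Ioi (0 : ℝ), Complex.exp (2 * w * c) *
      (((c * Real.cosh c / Real.sinh c - 1) / Real.sinh c ^ 2 : ℝ) : ℂ) =
    w + 2 * w ^ 2 * ∫ c in Ioi (0 : ℝ), Complex.exp (2 * w * c) *
      ((c * Real.cosh c / Real.sinh c : ℝ) : ℂ) := by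
  have hz : (2 * w).re < 0 := by simp; linarith
  -- `L` is `c coth c`, with `L' = G` and `G' = 2 K`.
  set L : ℝ → ℝ := fun c => c * Real.cosh c / Real.sinh c with hL
  set G : ℝ → ℝ := fun c => Real.cosh c / Real.sinh c - c / Real.sinh c ^ 2 with hG
  set K : ℝ → ℝ := fun c => (c * Real.cosh c / Real.sinh c - 1) / Real.sinh c ^ 2 with hK
  have hLd : ∀ c ∈ Ioi (0 : ℝ), HasDerivAt L (G c) c := by
    intro c hc
    have hs : 0 < Real.sinh c := Real.sinh_pos_iff.2 hc
    convert! ((hasDerivAt_id c).mul (Real.hasDerivAt_cosh c)).div (Real.hasDerivAt_sinh c)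
      hs.ne' using 1
    have q := Real.cosh_sq c
    simp only [hG, id, Pi.mul_apply]
    field_simp
    linear_combination c * q
  have hGd : ∀ c ∈ Ioi (0 : ℝ), HasDerivAt G (2 * K c) c := by
    intro c hc
    have hs : 0 < Real.sinh c := Real.sinh_pos_iff.2 hc
    convert! ((Real.hasDerivAt_cosh c).div (Real.hasDerivAt_sinh c) hs.ne').sub
      ((hasDerivAt_id c).div ((Real.hasDerivAt_sinh c).pow 2) (pow_pos hs 2).ne') using 1
    have q := Real.cosh_sq c
    simp only [hK, id, Pi.pow_apply]
    field_simp
    linear_combination Real.sinh c ^ 2 * q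
  have hu : ∀ c ∈ Ioi (0 : ℝ), HasDerivAt (fun c : ℝ => Complex.exp (2 * w * c))
      (2 * w * Complex.exp (2 * w * c)) c := by
    intro c _
    have h1 : HasDerivAt (fun c : ℝ => (c : ℂ)) 1 c := Complex.ofRealCLM.hasDerivAt
    convert! (h1.const_mul (2 * w)).cexp using 1
    ring
  have hv : ∀ c ∈ Ioi (0 : ℝ), HasDerivAt (fun c : ℝ => (G c : ℂ) - 2 * w * (L c : ℂ))
      (2 * (K c : ℂ) - 2 * w * (G c : ℂ)) c := by
    intro c hc
    convert! (hGd c hc).ofReal_comp.sub ((hLd c hc).ofReal_comp.const_mul (2 * w)) using 1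
    push_cast
    ring
  have hLint := integrableOn_cexp_mul_coth hw
  -- In the derivative of `e^{2wc} (G - 2wL)` the terms containing `G` cancel.
  have hcomb : ∀ c : ℝ, 2 * w * Complex.exp (2 * w * c) * ((G c : ℂ) - 2 * w * (L c : ℂ)) +
      Complex.exp (2 * w * c) * (2 * (K c : ℂ) - 2 * w * (G c : ℂ)) =
      2 * (Complex.exp (2 * w * c) * (K c : ℂ)) -
        4 * w ^ 2 * (Complex.exp (2 * w * c) * (L c : ℂ)) := fun c => by ring
  have h2 := hint.const_mul 2
  have h4 := hLint.const_mul (4 * w ^ 2)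
  have hzero : Tendsto ((fun c : ℝ => Complex.exp (2 * w * c)) *
      fun c : ℝ => (G c : ℂ) - 2 * w * (L c : ℂ)) (𝓝[>] 0) (𝓝 (-(2 * w))) := by
    have t1 : Tendsto G (𝓝[>] 0) (𝓝 0) := by
      have ht : Tendsto Real.tanh (𝓝[>] 0) (𝓝 0) := by
        have := (hasDerivAt_tanh 0).continuousAt.tendsto
        rw [Real.tanh_zero] at this
        exact this.mono_left nhdsWithin_le_nhds
      refine tendsto_of_tendsto_of_tendsto_of_le_of_le' tendsto_const_nhds ht ?_ ?_
      · filter_upwards [self_mem_nhdsWithin] with c hc using deriv_mul_coth_nonneg hc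
      · filter_upwards [self_mem_nhdsWithin] with c hc using deriv_mul_coth_le hc
    have t2 : Tendsto L (𝓝[>] 0) (𝓝 1) := by
      have ht : Tendsto (fun c : ℝ => 1 + c) (𝓝[>] 0) (𝓝 1) := by
        have : Tendsto (fun c : ℝ => 1 + c) (𝓝 0) (𝓝 (1 + 0)) := tendsto_id.const_add 1
        rw [add_zero] at this
        exact this.mono_left nhdsWithin_le_nhds
      refine tendsto_of_tendsto_of_tendsto_of_le_of_le' tendsto_const_nhds ht ?_ ?_
      · filter_upwards [self_mem_nhdsWithin] with c hc using one_le_mul_coth hc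
      · filter_upwards [self_mem_nhdsWithin] with c hc using mul_coth_le hc
    have t3 : Tendsto (fun c : ℝ => Complex.exp (2 * w * c)) (𝓝[>] 0) (𝓝 1) := by
      have : Continuous fun c : ℝ => Complex.exp (2 * w * c) := by fun_prop
      have := this.tendsto 0
      simp only [Complex.ofReal_zero, mul_zero, Complex.exp_zero] at this
      exact this.mono_left nhdsWithin_le_nhds
    have t1' := (Complex.continuous_ofReal.tendsto 0).comp t1
    have t2' := (Complex.continuous_ofReal.tendsto 1).comp t2
    have := t3.mul (t1'.sub (t2'.const_mul (2 * w)))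
    rw [Complex.ofReal_zero, Complex.ofReal_one, one_mul, mul_one, zero_sub] at this
    exact this
  have htop : Tendsto ((fun c : ℝ => Complex.exp (2 * w * c)) *
      fun c : ℝ => (G c : ℂ) - 2 * w * (L c : ℂ)) atTop (𝓝 0) := by
    have h := (tendsto_one_add_mul_exp (neg_pos.2 hz)).const_mul (1 + ‖2 * w‖)
    rw [mul_zero] at h
    refine squeeze_zero_norm' ?_ h
    filter_upwards [eventually_gt_atTop 0] with c hc
    simp only [Pi.mul_apply]
    rw [norm_mul, norm_cexp_mul_ofReal, ← mul_assoc, mul_comm]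
    gcongr
    refine (norm_sub_le _ _).trans ?_
    rw [norm_mul (2 * w), Complex.norm_real, Complex.norm_real,
      Real.norm_of_nonneg (deriv_mul_coth_nonneg hc),
      Real.norm_of_nonneg (zero_le_one.trans (one_le_mul_coth hc))]
    have b1 : G c ≤ 1 := (deriv_mul_coth_le hc).trans (Real.tanh_lt_one c).le
    have b2 : L c ≤ 1 + c := mul_coth_le hc
    have b3 := mul_le_mul_of_nonneg_left b2 (norm_nonneg (2 * w))
    calc G c + ‖2 * w‖ * L c ≤ (1 + c) + ‖2 * w‖ * (1 + c) := by linarith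
      _ = _ := by ring
  have key := integral_Ioi_deriv_mul_eq_sub hu hv
    ((h2.sub h4).congr (ae_of_all _ fun c => (hcomb c).symm)) hzero htop
  simp only [hcomb] at key
  rw [integral_sub h2 h4, integral_const_mul, integral_const_mul] at key
  linear_combination key / 2

/-! ### The double integral -/

/-- For `a ∈ ℂ` with `−2√3 < Re a < 0` and `w = a/(2√3)`, the double
integral `∫_{−∞}^{∞} ∫_{−∞}^{t} (3/cosh²(√3 t))(3/cosh²(√3 s)) e^{a(t−s)} ds dt`
converges and equals `6·(−1 + 2w + 2w²·Σ_{n≥0} 1/(n − w)²)`. -/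
theorem stmt_18 (a : ℂ) (h₁ : -(2 * Real.sqrt 3) < a.re) (h₂ : a.re < 0) (w : ℂ)
    (hw : w = a / (2 * Real.sqrt 3)) :
    IntegrableOn
      (fun p : ℝ × ℝ =>
        (3 / (Real.cosh (Real.sqrt 3 * p.1) : ℂ) ^ 2) *
          (3 / (Real.cosh (Real.sqrt 3 * p.2) : ℂ) ^ 2) *
          Complex.exp (a * ((p.1 : ℂ) - (p.2 : ℂ))))
      {p : ℝ × ℝ | p.2 < p.1} ∧
    ∫ p in {p : ℝ × ℝ | p.2 < p.1},
        (3 / (Real.cosh (Real.sqrt 3 * p.1) : ℂ) ^ 2) *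
          (3 / (Real.cosh (Real.sqrt 3 * p.2) : ℂ) ^ 2) *
          Complex.exp (a * ((p.1 : ℂ) - (p.2 : ℂ))) =
      6 * (-1 + 2 * w + 2 * w ^ 2 * ∑' n : ℕ, (((n : ℂ) - w) ^ 2)⁻¹) := by
  set b : ℝ := Real.sqrt 3 with hb
  have hb0 : 0 < b := Real.sqrt_pos.2 (by norm_num)
  have hb2 : b * b = 3 := Real.mul_self_sqrt (by norm_num)
  have hbC : (b : ℂ) ≠ 0 := by exact_mod_cast hb0.ne'
  have ha : a = 2 * w * b := by rw [hw]; field_simp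
  have hwre : w.re < 0 := by
    have : a.re = 2 * w.re * b := by rw [ha]; simp
    rw [this] at h₂
    nlinarith
  have hw0 : w ≠ 0 := by rintro rfl; simp at hwre
  set F : ℝ × ℝ → ℂ := fun p => (3 / (Real.cosh (b * p.1) : ℂ) ^ 2) *
    (3 / (Real.cosh (b * p.2) : ℂ) ^ 2) * Complex.exp (a * ((p.1 : ℂ) - (p.2 : ℂ))) with hF
  have hFeq : ∀ p, F p = ((9 * ((Real.cosh (b * p.1) ^ 2)⁻¹ * (Real.cosh (b * p.2) ^ 2)⁻¹) : ℝ) : ℂ)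
      * Complex.exp (a * ((p.1 - p.2 : ℝ) : ℂ)) := by
    intro p
    simp only [hF]
    push_cast
    ring
  have hms : MeasurableSet {p : ℝ × ℝ | p.2 < p.1} :=
    measurableSet_lt measurable_snd measurable_fst
  have hint : IntegrableOn F {p : ℝ × ℝ | p.2 < p.1} := by
    have hs := integrable_sech_sq.comp_mul_left' hb0.ne'
    have hg := ((hs.mul_prod hs).const_mul 9).integrableOn (s := {p : ℝ × ℝ | p.2 < p.1})
    refine hg.mono' ?_ ?_
    · refine Measurable.aestronglyMeasurable ?_
      have := Real.measurable_cosh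
      simp only [funext hFeq]
      fun_prop
    · filter_upwards [ae_restrict_mem hms] with p hp
      have hp' : p.2 < p.1 := hp
      rw [hFeq, norm_mul, norm_cexp_mul_ofReal, Complex.norm_real,
        Real.norm_of_nonneg (by positivity)]
      refine mul_le_of_le_one_right (by positivity) (Real.exp_le_one_iff.2 ?_)
      nlinarith
  refine ⟨hint, ?_⟩
  -- The shear `(u, s) ↦ (u + s, s)` turns `s < t` into `0 < u`.
  have hmp : MeasurePreserving (fun z : ℝ × ℝ => (z.1 + z.2, z.2)) volume volume :=
    measurePreserving_add_prod volume volume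
  have hemb : MeasurableEmbedding (fun z : ℝ × ℝ => (z.1 + z.2, z.2)) := by
    refine Measurable.measurableEmbedding (by fun_prop) fun x y hxy => ?_
    simp only [Prod.mk.injEq] at hxy
    ext
    · linarith [hxy.1, hxy.2]
    · exact hxy.2
  have hpre : (fun z : ℝ × ℝ => (z.1 + z.2, z.2)) ⁻¹' {p : ℝ × ℝ | p.2 < p.1} =
      Ioi (0 : ℝ) ×ˢ univ := by
    ext z; simp
  have hint' := (hmp.integrableOn_comp_preimage hemb).2 hint
  rw [hpre] at hint'
  set k : ℝ → ℂ := fun c => Complex.exp (2 * w * c) *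
    (((c * Real.cosh c / Real.sinh c - 1) / Real.sinh c ^ 2 : ℝ) : ℂ) with hk
  have hinner : ∀ u ∈ Ioi (0 : ℝ), ∫ s : ℝ, F (u + s, s) = (36 / b : ℂ) * k (b * u) := by
    intro u hu
    have e : ∀ s : ℝ, F (u + s, s) = Complex.exp (2 * w * ((b * u : ℝ) : ℂ)) * 9 *
        (((fun x : ℝ => (Real.cosh (x + b * u) ^ 2)⁻¹ * (Real.cosh x ^ 2)⁻¹) (b * s) : ℝ) : ℂ) := by
      intro s
      rw [hFeq, ha]
      simp only
      rw [show b * (u + s) = b * s + b * u by ring]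
      push_cast
      ring_nf
    simp only [e]
    rw [integral_const_mul, integral_complex_ofReal, Measure.integral_comp_mul_left
        (fun x : ℝ => (Real.cosh (x + b * u) ^ 2)⁻¹ * (Real.cosh x ^ 2)⁻¹) b,
      integral_sech_sq_mul_sech_sq (mul_pos hb0 hu), abs_of_pos (inv_pos.2 hb0)]
    simp only [hk, smul_eq_mul]
    push_cast
    ring
  have hkint : IntegrableOn k (Ioi 0) := by
    rw [IntegrableOn, Measure.volume_eq_prod, ← Measure.prod_restrict, Measure.restrict_univ]
      at hint'
    have h := hint'.integral_prod_left
    have h' : IntegrableOn (fun u => (36 / b : ℂ) * k (b * u)) (Ioi 0) := by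
      refine h.congr ?_
      filter_upwards [ae_restrict_mem measurableSet_Ioi] with u hu using hinner u hu
    have h'' := h'.const_mul ((b : ℂ) / 36)
    rw [← mul_zero b, ← integrableOn_Ioi_comp_mul_left_iff _ _ hb0]
    refine h''.congr (ae_of_all _ fun u => ?_)
    simp only
    field_simp
  have hstep : ∫ p in {p : ℝ × ℝ | p.2 < p.1}, F p = 12 * ∫ c in Ioi (0 : ℝ), k c := by
    rw [← hmp.setIntegral_preimage_emb hemb, hpre, Measure.volume_eq_prod,
      setIntegral_prod (fun z : ℝ × ℝ => F (z.1 + z.2, z.2)) hint']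
    simp only [Measure.restrict_univ]
    rw [setIntegral_congr_fun measurableSet_Ioi hinner, integral_const_mul,
      integral_comp_mul_left_Ioi k 0 hb0, mul_zero, Complex.real_smul]
    have hb2C : (b : ℂ) * b = 3 := by exact_mod_cast hb2
    push_cast
    field_simp
    linear_combination (-12 * ∫ c in Ioi (0 : ℝ), k c) * hb2C
  rw [hstep, integral_cexp_mul_autocorrelation hwre hkint, integral_cexp_mul_coth hwre]
  field_simp
  ring
end
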